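/- Let α = 1 and C₁ = 1/(2π). There exist β₀ < 1/2, ν ≥ 2, and three pairwise distinct points z₁*, z₂*, z₃* ∈ ℝ² with intensities a₁, a₂, a₃ ∈ ℝ∖{0} forming a stationary solution of the 1-point-vortex system (so z_i*(t) = z_i* for all t), such that: for every β ∈ (β₀, 1), every ξ₁ > (4π/3)(1−β), and every sufficiently small ε > 0, there exists ω₀ : ℝ² → ℝ satisfying hypothesis (H_ε) such that every weak solution ω of the 2D incompressible Euler equation in vorticity form with initial datum ω₀ satisfies τ_{ε,β} ≤ ξ₁ |ln ε|. -/

import Mathlib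

open MeasureTheory

/-- The Biot–Savart kernel `K_α(x,y) = C_α (x−y)^⊥ / |x−y|^{α+1}`, with `ℝ²`
identified with `ℂ` (so that `v^⊥ = i·v`). -/
noncomputable def biotSavartK (α Cα : ℝ) (x y : ℂ) : ℂ :=
  (Cα / ‖x - y‖ ^ (α + 1)) • (Complex.I * (x - y))

/-- The velocity field generated by the active scalar `ω`. -/
noncomputable def velocity (α Cα : ℝ) (ω : ℂ → ℝ → ℝ) (x : ℂ) (t : ℝ) : ℂ :=
  ∫ y, ω y t • biotSavartK α Cα x y

/-- A weak solution of the gSQG equation with parameter `α` (the Euler equation in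
vorticity form when `α = 1`, `C₁ = 1/(2π)`): a family `ω(·,t) ∈ L¹ ∩ L∞`,
uniformly bounded in `L¹ ∩ L∞`, satisfying the weak formulation against all
compactly supported smooth test functions on `ℝ² × [0,∞)`. -/
def IsWeakSolution (α Cα : ℝ) (ω₀ : ℂ → ℝ) (ω : ℂ → ℝ → ℝ) : Prop :=
  (∀ t : ℝ, Integrable (fun x => ω x t)) ∧
  (∃ M : ℝ, ∀ t : ℝ, (∫ x, |ω x t|) ≤ M ∧ ∀ᵐ x ∂(volume : Measure ℂ), |ω x t| ≤ M) ∧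
  ∀ φ : ℂ → ℝ → ℝ,
    ContDiff ℝ (⊤ : ℕ∞) (fun p : ℂ × ℝ => φ p.1 p.2) →
    HasCompactSupport (fun p : ℂ × ℝ => φ p.1 p.2) →
    (∫ t in Set.Ioi (0 : ℝ), ∫ x, ω x t *
        (deriv (fun s => φ x s) t +
          fderiv ℝ (fun y => φ y t) x (velocity α Cα ω x t))) +
      (∫ x, ω₀ x * φ x 0) = 0

/-- Hypothesis (H_ε): `ω₀ = ∑ ω₀ᵢ`, `supp ω₀ᵢ ⊆ D(zᵢ*, ε)`, each `ω₀ᵢ` has a single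
sign with `∫ ω₀ᵢ = aᵢ`, and `|ω₀| ≤ C ε^{-ν}`. -/
def ConcentratedData (N : ℕ) (z : Fin N → ℂ) (a : Fin N → ℝ) (C ν ε : ℝ)
    (ω₀ : ℂ → ℝ) : Prop :=
  ∃ ω₀i : Fin N → ℂ → ℝ,
    (∀ x, ω₀ x = ∑ i, ω₀i i x) ∧
    (∀ i, Function.support (ω₀i i) ⊆ Metric.closedBall (z i) ε) ∧
    (∀ i, Integrable (ω₀i i)) ∧
    (∀ i x, 0 ≤ a i * ω₀i i x) ∧
    (∀ i, (∫ x, ω₀i i x) = a i) ∧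
    (∀ x, |ω₀ x| ≤ C * ε ^ (-ν))

/-- `τ_{ε,β} ≤ T`: every time `t ≥ 0` up to which the support of `ω` stays confined in
`⋃ᵢ D(zᵢ*, ε^β)` satisfies `t ≤ T`. -/
def ExitTimeLE (N : ℕ) (z : Fin N → ℂ) (β ε : ℝ) (ω : ℂ → ℝ → ℝ) (T : ℝ) : Prop :=
  ∀ t : ℝ, 0 ≤ t →
    (∀ s : ℝ, 0 ≤ s → s ≤ t →
      Function.support (fun x => ω x s) ⊆ ⋃ i, Metric.closedBall (z i) (ε ^ β)) →
    t ≤ T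

namespace EulerOpt
open Complex ComplexConjugate Set

/-- S-component of the reduced point vortex field. -/
noncomputable def fS (S R : ℂ) : ℂ := 6 * I * conj S / conj (S ^ 2 - R ^ 2)
/-- R-component of the reduced point vortex field. -/
noncomputable def fR (S R : ℂ) : ℂ := 2 * I * conj S ^ 2 / conj (R * (S ^ 2 - R ^ 2))

lemma region_est {S R : ℂ} (hS : ‖S‖ ≤ 1/20) (hR : ‖R - (1 + I)‖ ≤ 1/20) :
    4 * ‖S‖ ^ 2 ≤ 2 * (S * fS S R).re ∧ ‖fR S R‖ ≤ ‖S‖ ^ 2 := by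
  have hI : ‖(1 + I : ℂ)‖ ^ 2 = 2 := by
    rw [Complex.sq_norm, Complex.normSq_apply]; norm_num
  have hI1 : ‖(1 + I : ℂ)‖ ≤ 1.42 := by
    have := norm_nonneg (1 + I : ℂ); nlinarith
  have hI2 : 1.41 ≤ ‖(1 + I : ℂ)‖ := by
    have := norm_nonneg (1 + I : ℂ); nlinarith
  have hRn : 1.36 ≤ ‖R‖ := by
    have : ‖(1 + I : ℂ)‖ ≤ ‖R‖ + ‖R - (1+I)‖ := by
      calc ‖(1 + I : ℂ)‖ = ‖R - (R - (1+I))‖ := by congr 1; ring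
        _ ≤ _ := norm_sub_le _ _
    linarith
  set Q := S ^ 2 - R ^ 2 with hQ
  have hQe : ‖Q + 2 * I‖ ≤ 0.15 := by
    have h1 : Q + 2 * I = S ^ 2 - (R - (1+I)) * ((R - (1 + I)) + 2 * (1 + I)) := by
      rw [hQ]; ring_nf; simp; ring
    rw [h1]
    calc _ ≤ ‖S ^ 2‖ + ‖(R - (1+I)) * ((R - (1 + I)) + 2 * (1 + I))‖ := norm_sub_le _ _
      _ ≤ (1/20)^2 + (1/20) * (1/20 + 2 * 1.42) := by
        rw [norm_pow, norm_mul]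
        gcongr
        calc _ ≤ ‖R - (1 + I)‖ + ‖2 * (1 + I)‖ := norm_add_le _ _
          _ ≤ 1/20 + 2 * 1.42 := by
            rw [norm_mul]; gcongr; simp
      _ ≤ _ := by norm_num
  have hre := (Complex.abs_re_le_norm (Q + 2 * I)).trans hQe
  have him := (Complex.abs_im_le_norm (Q + 2 * I)).trans hQe
  simp at hre him
  rw [abs_le] at hre him
  have hnQ : Q.re * Q.re + Q.im * Q.im ≤ 4.7 := by nlinarith
  have hnQ0 : 3.4 ≤ Q.re * Q.re + Q.im * Q.im := by nlinarith [mul_self_nonneg Q.re]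
  have hQn : 1.8 ≤ ‖Q‖ := by
    have : ‖Q‖^2 = Q.re * Q.re + Q.im * Q.im := by
      rw [Complex.sq_norm, Complex.normSq_apply]
    nlinarith [norm_nonneg Q]
  constructor
  · have h1 : S * fS S R = ((‖S‖ ^ 2 / ‖Q‖ ^ 2 * 6 : ℝ) : ℂ) * (I * Q) := by
      have hQ0 : Q ≠ 0 := by
        intro h; rw [h] at hQn; simp at hQn; linarith
      have hcQ0 : conj Q ≠ 0 := by simpa using hQ0
      push_cast
      rw [← Complex.mul_conj', ← Complex.mul_conj', fS, ← hQ]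
      field_simp
    rw [h1, Complex.re_ofReal_mul]
    have h2 : ‖Q‖^2 = Q.re * Q.re + Q.im * Q.im := by
      rw [Complex.sq_norm, Complex.normSq_apply]
    simp only [Complex.mul_re, Complex.I_re, Complex.I_im]
    rw [h2]
    have h3 : 2 * (‖S‖ ^ 2 / (Q.re * Q.re + Q.im * Q.im) * 6 * (0 * Q.re - 1 * Q.im))
      = ‖S‖^2 * (-(12 * Q.im) / (Q.re * Q.re + Q.im * Q.im)) := by ring
    rw [h3, mul_comm]
    gcongr
    rw [le_div_iff₀ (by linarith)]
    linarith
  · rw [fR, ← hQ]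
    simp only [norm_div, norm_mul, norm_pow, RCLike.norm_conj, Complex.norm_I, RCLike.norm_ofNat]
    rw [div_le_iff₀ (by positivity)]
    have : 2 ≤ ‖R‖ * ‖Q‖ := by nlinarith
    nlinarith [sq_nonneg ‖S‖]

lemma region_flow {T : ℝ} (hT : 0 ≤ T) {S R : ℝ → ℂ} {e : ℝ} (hS0 : S 0 = e) (hR0 : R 0 = 1 + I)
    (hS : ∀ t ∈ Icc 0 T, HasDerivWithinAt S (fS (S t) (R t)) (Icc 0 T) t)
    (hR : ∀ t ∈ Icc 0 T, HasDerivWithinAt R (fR (S t) (R t)) (Icc 0 T) t)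
    (hSb : ∀ t ∈ Icc 0 T, ‖S t‖ ≤ 1/20) (hRb : ∀ t ∈ Icc 0 T, ‖R t - (1 + I)‖ ≤ 1/20) :
    e ^ 2 * Real.exp (4 * T) ≤ ‖S T‖ ^ 2 ∧ ‖R T - (1 + I)‖ ≤ ‖S T‖ ^ 2 / 4 := by
  set g : ℝ → ℝ := fun t => (S t ^ 2).re with hg
  have hgd : ∀ t ∈ Icc 0 T, HasDerivWithinAt g (2 * (S t * fS (S t) (R t)).re) (Icc 0 T) t := by
    intro t ht
    have h1 := (hS t ht).pow 2
    have h2 := Complex.reCLM.hasFDerivAt.comp_hasDerivWithinAt t h1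
    refine h2.congr_deriv ?_
    simp; ring
  have hgS : ∀ t, g t ≤ ‖S t‖ ^ 2 := by
    intro t
    calc g t ≤ ‖S t ^ 2‖ := Complex.re_le_norm _
      _ = _ := norm_pow _ _
  have hgc : ContinuousOn g (Icc 0 T) := fun t ht => (hgd t ht).continuousWithinAt
  have hint : ∀ t ∈ Ioo 0 T, HasDerivAt g (2 * (S t * fS (S t) (R t)).re) t := fun t ht =>
    (hgd t (Ioo_subset_Icc_self ht)).hasDerivAt (Icc_mem_nhds ht.1 ht.2)
  have hg0 : g 0 = e ^ 2 := by
    simp only [hg, hS0]; norm_cast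
  constructor
  · have hm : MonotoneOn (fun t => g t * Real.exp (-(4 * t))) (Icc 0 T) := by
      apply monotoneOn_of_deriv_nonneg (convex_Icc _ _)
      · exact hgc.mul (by fun_prop)
      · rw [interior_Icc]; intro t ht
        exact ((hint t ht).differentiableAt.mul (by fun_prop)).differentiableWithinAt
      · rw [interior_Icc]; intro t ht
        have he : HasDerivAt (fun t : ℝ => Real.exp (-(4 * t))) (Real.exp (-(4*t)) * (-(4 * 1))) t :=
          ((hasDerivAt_id t).const_mul 4).neg.exp
        have hd : HasDerivAt (fun t => g t * Real.exp (-(4 * t))) _ t := (hint t ht).mul he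
        rw [hd.deriv]
        have h1 := (region_est (hSb t (Ioo_subset_Icc_self ht)) (hRb t (Ioo_subset_Icc_self ht))).1
        have h2 := hgS t
        have h3 := Real.exp_pos (-(4*t))
        have : 0 ≤ (2 * (S t * fS (S t) (R t)).re - 4 * g t) * Real.exp (-(4*t)) :=
          mul_nonneg (by linarith) h3.le
        linarith
    have := hm (left_mem_Icc.2 hT) (right_mem_Icc.2 hT) hT
    simp only [mul_zero, neg_zero, Real.exp_zero, mul_one, hg0] at this
    calc e ^ 2 * Real.exp (4 * T) ≤ g T * Real.exp (-(4 * T)) * Real.exp (4 * T) := by gcongr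
      _ = g T := by rw [mul_assoc, ← Real.exp_add]; simp
      _ ≤ _ := hgS T
  · have key := image_norm_le_of_norm_deriv_right_le_deriv_boundary' (f := fun t => R t - (1 + I))
      (f' := fun t => fR (S t) (R t)) (a := 0) (b := T)
      (B := fun t => (g t - g 0) / 4) (B' := fun t => (2 * (S t * fS (S t) (R t)).re) / 4)
      (fun t ht => ((hR t ht).continuousWithinAt).sub continuousWithinAt_const)
      (fun t ht => ((hR t (Ico_subset_Icc_self ht)).sub_const _).mono_of_mem_nhdsWithin
          (Icc_mem_nhdsGE_of_mem ht))
      (by simp [hR0])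
      ((hgc.sub continuousOn_const).div_const _)
      (fun t ht => (((hgd t (Ico_subset_Icc_self ht)).sub_const _).div_const _).mono_of_mem_nhdsWithin
          (Icc_mem_nhdsGE_of_mem ht))
      (fun t ht => by
        have := region_est (hSb t (Ico_subset_Icc_self ht)) (hRb t (Ico_subset_Icc_self ht))
        linarith)
      (right_mem_Icc.2 hT)
    refine key.trans ?_
    have := hgS T
    have : 0 ≤ g 0 := by rw [hg0]; positivity
    linarith

lemma exists_cutoff_field : ∃ V : ℂ × ℂ → ℂ × ℂ, (∃ K, LipschitzWith K V) ∧ (∃ L, ∀ x, ‖V x‖ ≤ L) ∧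
    ∀ S R : ℂ, ‖S‖ ≤ 1/20 → ‖R - (1 + I)‖ ≤ 1/20 → V (S, R) = (fS S R, fR S R) := by
  let χ : ContDiffBump ((0, 1 + I) : ℂ × ℂ) := ⟨1/20, 1/10, by norm_num, by norm_num⟩
  let W : ℂ × ℂ → ℂ × ℂ := fun x => (fS x.1 x.2, fR x.1 x.2)
  have hball : ∀ x : ℂ × ℂ, x ∈ Metric.closedBall ((0, 1 + I) : ℂ × ℂ) (1/10) →
      x.2 ≠ 0 ∧ x.1 ^ 2 - x.2 ^ 2 ≠ 0 := by
    rintro ⟨S, R⟩ hx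
    rw [mem_closedBall_iff_norm] at hx
    have h1 : ‖S‖ ≤ 1/10 := by
      have := (norm_fst_le _).trans hx; simpa using this
    have h2 : ‖R - (1 + I)‖ ≤ 1/10 := by
      have := (norm_snd_le _).trans hx; simpa using this
    have hre := (Complex.abs_re_le_norm _).trans h2
    simp at hre
    rw [abs_le] at hre
    have h3 : 0.9 ≤ ‖R‖ := by
      have := (Complex.re_le_norm R); norm_num at hre ⊢; linarith
    constructor
    · intro h; simp only at h; rw [h] at h3; simp at h3; linarith
    · intro h
      simp only at h
      have : S ^ 2 = R ^ 2 := sub_eq_zero.1 h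
      have h4 : ‖S‖ ^ 2 = ‖R‖ ^ 2 := by rw [← norm_pow, this, norm_pow]
      nlinarith [norm_nonneg S]
  have hcs : HasCompactSupport (fun x => χ x • W x) := χ.hasCompactSupport.smul_right
  have hW : ∀ x : ℂ × ℂ, x ∈ Metric.closedBall ((0, 1 + I) : ℂ × ℂ) (1/10) →
      ContDiffAt ℝ 1 W x := by
    intro x hx
    have hb := hball x hx
    have c1 : ContDiffAt ℝ 1 (fun x : ℂ × ℂ => conj x.1) x :=
      Complex.conjCLE.contDiff.contDiffAt.comp x contDiff_fst.contDiffAt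
    have c2 : ContDiffAt ℝ 1 (fun x : ℂ × ℂ => conj x.2) x :=
      Complex.conjCLE.contDiff.contDiffAt.comp x contDiff_snd.contDiffAt
    have n1 : conj x.1 ^ 2 - conj x.2 ^ 2 ≠ 0 := by
      rw [← map_pow, ← map_pow, ← map_sub]; exact (map_ne_zero _).2 hb.2
    have n2 : conj x.2 ≠ 0 := by simpa using hb.1
    apply ContDiffAt.prodMk
    · simp only [fS, map_sub, map_pow]
      simp only [div_eq_mul_inv]
      exact (contDiffAt_const.mul c1).mul (((c1.pow 2).sub (c2.pow 2)).inv n1)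
    · simp only [fR, map_sub, map_pow, map_mul]
      simp only [div_eq_mul_inv]
      exact (contDiffAt_const.mul (c1.pow 2)).mul ((c2.mul ((c1.pow 2).sub (c2.pow 2))).inv
        (mul_ne_zero n2 n1))
  have hcd : ContDiff ℝ 1 (fun x => χ x • W x) := by
    rw [contDiff_iff_contDiffAt]
    intro x
    by_cases hx : x ∈ Metric.closedBall ((0, 1 + I) : ℂ × ℂ) (1/10)
    · exact χ.contDiff.contDiffAt.smul (hW x hx)
    · have : (fun x => χ x • W x) =ᶠ[nhds x] fun _ => 0 := by
        filter_upwards [Metric.isClosed_closedBall.isOpen_compl.mem_nhds hx] with y hy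
        have : χ y = 0 := by
          apply χ.zero_of_le_dist
          simp only [mem_compl_iff, Metric.mem_closedBall, not_le] at hy
          exact hy.le
        rw [this, zero_smul]
      exact contDiffAt_const.congr_of_eventuallyEq this
  refine ⟨fun x => χ x • W x, hcd.lipschitzWith_of_hasCompactSupport hcs (by simp),
    hcs.exists_bound_of_continuous hcd.continuous, ?_⟩
  intro S R hS hR
  have : χ (S, R) = 1 := by
    apply χ.one_of_mem_closedBall
    rw [mem_closedBall_iff_norm]
    simp only [Prod.mk_sub_mk, sub_zero, Prod.norm_mk]
    exact max_le hS hR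
  simp only [this, one_smul, W]

lemma ode_part {e m : ℝ} (he : 0 < e) (hem : e < m) (hm : m ≤ 1/20) :
    ∃ (t₁ : ℝ) (S R : ℝ → ℂ), 0 < t₁ ∧ t₁ ≤ Real.log (m / e) / 2 ∧ S 0 = e ∧ R 0 = 1 + I ∧
      ‖S t₁‖ = m ∧ (∀ t ∈ Icc 0 t₁, ‖S t‖ ≤ 1/20) ∧ (∀ t ∈ Icc 0 t₁, ‖R t - (1 + I)‖ ≤ 1/20) ∧
      (∀ t ∈ Icc 0 t₁, HasDerivWithinAt S (fS (S t) (R t)) (Icc 0 t₁) t) ∧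
      (∀ t ∈ Icc 0 t₁, HasDerivWithinAt R (fR (S t) (R t)) (Icc 0 t₁) t) := by
  obtain ⟨V, ⟨K, hK⟩, ⟨L, hL⟩, hV⟩ := exists_cutoff_field
  have hlog : 0 < Real.log (m / e) := Real.log_pos (by rw [one_lt_div he]; exact hem)
  set T := Real.log (m / e) / 2 + 1 with hT
  have hT0 : 0 < T := by positivity
  have hL0 : 0 ≤ L := (norm_nonneg _).trans (hL 0)
  have hpl : IsPicardLindelof (fun _ => V) (⟨0, left_mem_Icc.2 hT0.le⟩ : Icc 0 T)
      ((e : ℂ), 1 + I) ⟨L * T, by positivity⟩ 0 ⟨L, hL0⟩ K := by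
    apply IsPicardLindelof.of_time_independent
    · intro x _; exact hL x
    · exact hK.lipschitzOnWith
    · simp [hT0.le]; rfl
  obtain ⟨X, hX0, hX⟩ := hpl.exists_eq_forall_mem_Icc_hasDerivWithinAt₀
  simp only at hX0
  set S := fun t => (X t).1 with hSd
  set R := fun t => (X t).2 with hRd
  have hXc : ContinuousOn X (Icc 0 T) := fun t ht => (hX t ht).continuousWithinAt
  have hSc : ContinuousOn S (Icc 0 T) := continuous_fst.comp_continuousOn hXc
  have hRc : ContinuousOn R (Icc 0 T) := continuous_snd.comp_continuousOn hXc
  have hS0 : S 0 = e := by simp [hSd, hX0]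
  have hR0 : R 0 = 1 + I := by simp [hRd, hX0]
  have hSD : ∀ T' ≤ T, ∀ t ∈ Icc 0 T', ‖S t‖ ≤ 1/20 → ‖R t - (1 + I)‖ ≤ 1/20 →
      HasDerivWithinAt S (fS (S t) (R t)) (Icc 0 T') t ∧
      HasDerivWithinAt R (fR (S t) (R t)) (Icc 0 T') t := by
    intro T' hT' t ht h1 h2
    have h3 := (hX t ⟨ht.1, ht.2.trans hT'⟩).mono (Icc_subset_Icc_right hT')
    have h4 : V (X t) = (fS (S t) (R t), fR (S t) (R t)) := hV _ _ h1 h2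
    rw [h4] at h3
    exact ⟨(ContinuousLinearMap.fst ℝ ℂ ℂ).hasFDerivAt.comp_hasDerivWithinAt t h3,
      (ContinuousLinearMap.snd ℝ ℂ ℂ).hasFDerivAt.comp_hasDerivWithinAt t h3⟩
  set A := {t | t ∈ Icc 0 T ∧ (m ≤ ‖S t‖ ∨ 1/20 ≤ ‖R t - (1 + I)‖)} with hA
  have hAne : A.Nonempty := by
    by_contra hne
    rw [not_nonempty_iff_eq_empty] at hne
    have hn : ∀ t ∈ Icc 0 T, ‖S t‖ < m ∧ ‖R t - (1 + I)‖ < 1/20 := by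
      intro t ht
      by_contra hcon
      have : t ∈ A := ⟨ht, by
        by_contra h; push Not at h; exact hcon h⟩
      rw [hne] at this; exact this
    have hb1 : ∀ t ∈ Icc 0 T, ‖S t‖ ≤ 1/20 := fun t ht => ((hn t ht).1.le).trans hm
    have hb2 : ∀ t ∈ Icc 0 T, ‖R t - (1 + I)‖ ≤ 1/20 := fun t ht => (hn t ht).2.le
    have h1 := (region_flow hT0.le hS0 hR0 (fun t ht => (hSD T le_rfl t ht (hb1 t ht) (hb2 t ht)).1)
      (fun t ht => (hSD T le_rfl t ht (hb1 t ht) (hb2 t ht)).2) hb1 hb2).1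
    have h2 := (hn T (right_mem_Icc.2 hT0.le)).1
    have h3 : ‖S T‖ ^ 2 < m ^ 2 := by gcongr
    have h4 : Real.exp (2 * Real.log (m / e)) ≤ Real.exp (4 * T) := by
      apply Real.exp_le_exp.2; rw [hT]; linarith
    have h5 : Real.exp (2 * Real.log (m / e)) = (m / e)^2 := by
      have : 0 < m / e := by have := he.trans hem; positivity
      rw [mul_comm, Real.exp_mul, Real.exp_log this]; norm_cast
    rw [h5] at h4
    have : e^2 * (m/e)^2 ≤ e ^ 2 * Real.exp (4 * T) := by gcongr
    have h6 : e^2 * (m/e)^2 = m ^ 2 := by field_simp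
    linarith
  have hAcl : IsClosed A := by
    have h1 : IsClosed {t | t ∈ Icc 0 T ∧ m ≤ ‖S t‖} :=
      isClosed_Icc.isClosed_le continuousOn_const hSc.norm
    have h2 : IsClosed {t | t ∈ Icc 0 T ∧ 1/20 ≤ ‖R t - (1 + I)‖} :=
      isClosed_Icc.isClosed_le continuousOn_const (hRc.sub continuousOn_const).norm
    have : A = {t | t ∈ Icc 0 T ∧ m ≤ ‖S t‖} ∪ {t | t ∈ Icc 0 T ∧ 1/20 ≤ ‖R t - (1 + I)‖} := by
      ext t; simp only [hA, mem_ofPred_eq, mem_union]; tauto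
    rw [this]; exact h1.union h2
  have hAbd : BddBelow A := ⟨0, fun t ht => ht.1.1⟩
  set t₁ := sInf A with ht₁
  have ht₁A : t₁ ∈ A := hAcl.csInf_mem hAne hAbd
  have ht₁T := ht₁A.1
  have hlt : ∀ t ∈ Ico 0 t₁, ‖S t‖ < m ∧ ‖R t - (1 + I)‖ < 1/20 := by
    intro t ht
    by_contra hcon
    have : t ∈ A := ⟨⟨ht.1, ht.2.le.trans ht₁T.2⟩, by
        by_contra h; push Not at h; exact hcon h⟩
    exact absurd (csInf_le hAbd this) (not_le.2 ht.2)
  have ht₁0 : 0 < t₁ := by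
    rcases ht₁T.1.lt_or_eq with h | h
    · exact h
    · exfalso
      have := ht₁A.2
      rw [← h, hS0, hR0] at this
      simp [abs_of_pos he] at this
      rcases this with h | h
      · linarith
      · norm_num at h
  have hcl : closure (Ico 0 t₁) = Icc 0 t₁ := closure_Ico ht₁0.ne
  have hsub : Icc 0 t₁ ⊆ Icc 0 T := Icc_subset_Icc_right ht₁T.2
  have hle1 : ∀ t ∈ Icc 0 t₁, ‖S t‖ ≤ m := by
    intro t ht
    rw [← hcl] at ht
    exact le_on_closure (fun x hx => (hlt x hx).1.le) (by rw [hcl]; exact (hSc.mono hsub).norm)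
      continuousOn_const ht
  have hle2 : ∀ t ∈ Icc 0 t₁, ‖R t - (1 + I)‖ ≤ 1/20 := by
    intro t ht
    rw [← hcl] at ht
    exact le_on_closure (fun x hx => (hlt x hx).2.le)
      (by rw [hcl]; exact ((hRc.mono hsub).sub continuousOn_const).norm) continuousOn_const ht
  have hb1 : ∀ t ∈ Icc 0 t₁, ‖S t‖ ≤ 1/20 := fun t ht => (hle1 t ht).trans hm
  have hd1 := fun t ht => (hSD t₁ ht₁T.2 t ht (hb1 t ht) (hle2 t ht)).1
  have hd2 := fun t ht => (hSD t₁ ht₁T.2 t ht (hb1 t ht) (hle2 t ht)).2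
  have hrf := region_flow ht₁0.le hS0 hR0 hd1 hd2 hb1 hle2
  have hlast := hle1 t₁ (right_mem_Icc.2 ht₁0.le)
  have hm0 : 0 < m := he.trans hem
  have hSt : ‖S t₁‖ = m := by
    rcases ht₁A.2 with h | h
    · exact le_antisymm hlast h
    · exfalso
      nlinarith [hrf.2, norm_nonneg (S t₁)]
  refine ⟨t₁, S, R, ht₁0, ?_, hS0, hR0, hSt, hb1, hle2, hd1, hd2⟩
  have h1 := hrf.1
  rw [hSt] at h1
  have h2 : Real.exp (4 * t₁) ≤ (m / e) ^ 2 := by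
    rw [div_pow, le_div_iff₀ (by positivity)]; linarith
  have h3 := Real.log_le_log (Real.exp_pos _) h2
  rw [Real.log_exp, Real.log_pow] at h3
  push_cast at h3
  linarith

end EulerOpt

namespace EulerOpt
open Complex ComplexConjugate Set

/-- The Euler kernel. -/
noncomputable def ker (x y : ℂ) : ℂ := biotSavartK 1 (1 / (2 * Real.pi)) x y

lemma ker_eq (x y : ℂ) : ker x y = (1 / (2 * Real.pi) / ‖x - y‖ ^ 2 : ℝ) • (I * (x - y)) := by
  unfold ker biotSavartK
  norm_num

lemma ker_norm (x y : ℂ) : ‖ker x y‖ = 1 / (2 * Real.pi) / ‖x - y‖ := by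
  rw [ker_eq, norm_smul, norm_mul, Complex.norm_I, one_mul, Real.norm_of_nonneg (by positivity)]
  by_cases h : ‖x - y‖ = 0
  · simp [h]
  · field_simp

lemma ker_conj (x y : ℂ) : ker x y = ((1 / (2 * Real.pi) : ℝ) : ℂ) * (I / conj (x - y)) := by
  rw [ker_eq]
  by_cases h : x - y = 0
  · simp [h]
  · have : conj (x - y) ≠ 0 := (map_ne_zero _).2 h
    have h2 : ((‖x - y‖ : ℝ) : ℂ) ^ 2 = (x - y) * conj (x - y) := (Complex.mul_conj' _).symm
    rw [Complex.real_smul]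
    push_cast
    rw [h2]
    field_simp

lemma ker_antisymm (x y : ℂ) : ker x y = - ker y x := by
  rw [ker_conj, ker_conj, ← neg_sub y x, map_neg, div_neg, mul_neg]

lemma ker_measurable : Measurable (fun p : ℂ × ℂ => ker p.1 p.2) := by
  simp only [ker_eq]
  fun_prop

lemma pot_bound {g : ℝ → ℝ} (hg : ∀ r, 0 ≤ g r) 
    (hgi : IntegrableOn (fun r => r * g r) (Ioi 0)) {w : ℂ → ℝ} {M : ℝ}
    (hw : Integrable w) (hM : ∀ᵐ y, |w y| ≤ M) (x : ℂ) :
    Integrable (fun y => w y * g ‖x - y‖) ∧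
      (∫ y, |w y| * g ‖x - y‖) ≤ M * (2 * Real.pi * ∫ r in Ioi 0, r * g r) := by
  have h1 : Integrable (fun y : ℂ => g ‖y‖) := by
    rw [integrable_fun_norm_addHaar volume]
    simpa using hgi
  have h1' : (∫ y : ℂ, g ‖y‖) = 2 * Real.pi * ∫ r in Ioi 0, r * g r := by
    rw [integral_fun_norm_addHaar volume]
    simp [Measure.real]
    ring
  have h2 : Integrable (fun y : ℂ => g ‖x - y‖) := h1.comp_sub_left x
  have h2' : (∫ y : ℂ, g ‖x - y‖) = ∫ y : ℂ, g ‖y‖ :=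
    integral_sub_left_eq_self (fun y => g ‖y‖) volume x
  have h3 : Integrable (fun y => w y * g ‖x - y‖) := by
    apply h2.bdd_mul (c := M) hw.aestronglyMeasurable
    exact hM
  refine ⟨h3, ?_⟩
  rw [← h1', ← h2', ← integral_const_mul]
  apply integral_mono_ae
  · have := h3.norm
    refine this.congr (Filter.Eventually.of_forall fun y => ?_)
    simp [abs_of_nonneg (hg _)]
  · exact h2.const_mul M
  · filter_upwards [hM] with y hy
    exact mul_le_mul_of_nonneg_right hy (hg _)

lemma inv_pot {w : ℂ → ℝ} {M : ℝ}
    (hw : Integrable w) (hM : ∀ᵐ y, |w y| ≤ M) (hM1 : ∫ y, |w y| ≤ M) (x : ℂ) :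
    Integrable (fun y => w y * ‖x - y‖⁻¹) ∧
      (∫ y, |w y| * ‖x - y‖⁻¹) ≤ M * (2 * Real.pi + 1) := by
  set g : ℝ → ℝ := (Ioc 0 1).indicator (fun r => r⁻¹) with hg
  have hg0 : ∀ r, 0 ≤ g r := by
    intro r; apply indicator_nonneg; intro r hr; exact inv_nonneg.2 hr.1.le
  have hrg : (fun r => r * g r) = (Ioc (0:ℝ) 1).indicator (fun _ => (1:ℝ)) := by
    ext r
    by_cases hr : r ∈ Ioc (0:ℝ) 1
    · simp only [hg, indicator_of_mem hr]; exact mul_inv_cancel₀ hr.1.ne'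
    · simp only [hg, indicator_of_notMem hr]; simp
  have hint : IntegrableOn (fun r => r * g r) (Ioi 0) := by
    rw [hrg]
    apply Integrable.integrableOn
    rw [integrable_indicator_iff measurableSet_Ioc]
    simp [IntegrableOn]
  have hval : (∫ r in Ioi 0, r * g r) = 1 := by
    rw [hrg, setIntegral_indicator measurableSet_Ioc]
    have : Ioi (0:ℝ) ∩ Ioc 0 1 = Ioc 0 1 := inter_eq_right.2 Ioc_subset_Ioi_self
    rw [this]; simp
  obtain ⟨i1, b1⟩ := pot_bound hg0 hint hw hM x
  rw [hval] at b1
  have hle : ∀ r : ℝ, 0 ≤ r → r⁻¹ ≤ g r + 1 := by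
    intro r hr
    by_cases h : r ∈ Ioc (0:ℝ) 1
    · simp only [hg, indicator_of_mem h]; linarith
    · simp only [hg, indicator_of_notMem h]
      rcases hr.lt_or_eq with h' | h'
      · have : 1 < r := by by_contra hh; exact h ⟨h', not_lt.1 hh⟩
        have := inv_lt_one_of_one_lt₀ this
        linarith
      · rw [← h']; simp
  have hmeas : AEStronglyMeasurable (fun y => w y * ‖x - y‖⁻¹) volume :=
    hw.aestronglyMeasurable.mul (by fun_prop : Measurable fun y : ℂ => ‖x - y‖⁻¹).aestronglyMeasurable
  have i2 : Integrable (fun y => |w y| * g ‖x - y‖ + |w y|) := by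
    refine Integrable.add ?_ hw.abs
    refine i1.norm.congr (Filter.Eventually.of_forall fun y => ?_)
    simp [abs_of_nonneg (hg0 _)]
  have pt : ∀ y, |w y| * ‖x - y‖⁻¹ ≤ |w y| * g ‖x - y‖ + |w y| := by
    intro y
    have := mul_le_mul_of_nonneg_left (hle ‖x - y‖ (norm_nonneg _)) (abs_nonneg (w y))
    linarith
  have i3 : Integrable (fun y => w y * ‖x - y‖⁻¹) := by
    refine i2.mono' hmeas (Filter.Eventually.of_forall fun y => ?_)
    rw [norm_mul, Real.norm_eq_abs, norm_inv, norm_norm]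
    exact pt y
  refine ⟨i3, ?_⟩
  have i4 : Integrable (fun y => |w y| * g ‖x - y‖) := by
    refine i1.norm.congr (Filter.Eventually.of_forall fun y => ?_)
    simp [abs_of_nonneg (hg0 _)]
  calc _ ≤ ∫ y, (|w y| * g ‖x - y‖ + |w y|) := by
        apply integral_mono_of_nonneg _ i2 (Filter.Eventually.of_forall pt)
        exact Filter.Eventually.of_forall fun y => by positivity
    _ = (∫ y, |w y| * g ‖x - y‖) + ∫ y, |w y| := integral_add i4 hw.abs
    _ ≤ _ := by linarith

lemma ker_int {w : ℂ → ℝ} {M : ℝ}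
    (hw : Integrable w) (hM : ∀ᵐ y, |w y| ≤ M) (hM1 : ∫ y, |w y| ≤ M) (x : ℂ) :
    Integrable (fun y => w y • ker x y) ∧ ‖∫ y, w y • ker x y‖ ≤ 2 * M ∧
    ∫ y, ‖w y • ker x y‖ ≤ 2 * M := by
  obtain ⟨i1, b1⟩ := inv_pot hw hM hM1 x
  have hpi := Real.pi_gt_three
  have hM0 : 0 ≤ M := (integral_nonneg fun y => abs_nonneg (w y)).trans hM1
  have e1 : ∀ y, ‖w y • ker x y‖ = 1 / (2 * Real.pi) * (|w y| * ‖x - y‖⁻¹) := by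
    intro y
    rw [norm_smul, ker_norm, Real.norm_eq_abs]; field_simp
  have hmeas : AEStronglyMeasurable (fun y => w y • ker x y) volume :=
    hw.aestronglyMeasurable.smul
      ((ker_measurable.comp (measurable_const.prodMk measurable_id)).aestronglyMeasurable)
  have b2 : ∫ y, ‖w y • ker x y‖ ≤ 2 * M := by
    simp_rw [e1]
    rw [integral_const_mul]
    calc _ ≤ 1 / (2 * Real.pi) * (M * (2 * Real.pi + 1)) := by gcongr
      _ = M * (1 + 1 / (2 * Real.pi)) := by field_simp
      _ ≤ M * 2 := by
        gcongr
        have : 1 / (2 * Real.pi) ≤ 1 := by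
          rw [div_le_one (by positivity)]; linarith
        linarith
      _ = _ := by ring
  refine ⟨?_, (norm_integral_le_integral_norm _).trans b2, b2⟩
  have : Integrable (fun y => 1 / (2 * Real.pi) * ‖w y * ‖x - y‖⁻¹‖) := i1.norm.const_mul _
  refine this.mono' hmeas (Filter.Eventually.of_forall fun y => ?_)
  rw [e1]; simp

lemma delta_pot {w : ℂ → ℝ} {M δ : ℝ} (hδ : 0 < δ)
    (hw : Integrable w) (hM : ∀ᵐ y, |w y| ≤ M) (x : ℂ) :
    Integrable (fun y => w y * (δ ^ 2 / (‖x - y‖ * (‖x - y‖ ^ 2 + δ ^ 2)))) ∧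
      (∫ y, |w y| * (δ ^ 2 / (‖x - y‖ * (‖x - y‖ ^ 2 + δ ^ 2)))) ≤ M * (10 * δ) := by
  set g : ℝ → ℝ := fun r => δ ^ 2 / (|r| * (r ^ 2 + δ ^ 2)) with hg
  have hg0 : ∀ r, 0 ≤ g r := fun r => by positivity
  have hrg : EqOn (fun r => r * g r) (fun r => (1 + (δ⁻¹ * r) ^ 2)⁻¹) (Ioi 0) := by
    intro r hr
    have hr' : (0:ℝ) < r := hr
    simp only [hg, abs_of_pos hr']
    field_simp
    ring
  have i0 : Integrable (fun r : ℝ => (1 + (δ⁻¹ * r) ^ 2)⁻¹) :=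
    integrable_inv_one_add_sq.comp_mul_left' (inv_ne_zero hδ.ne')
  have hint : IntegrableOn (fun r => r * g r) (Ioi 0) :=
    i0.integrableOn.congr_fun hrg.symm measurableSet_Ioi
  have hval : (∫ r in Ioi 0, r * g r) = δ * (Real.pi / 2) := by
    rw [setIntegral_congr_fun measurableSet_Ioi hrg]
    have := integral_comp_mul_left_Ioi (fun r : ℝ => (1 + r ^ 2)⁻¹) 0 (inv_pos.2 hδ)
    rw [this]; simp
  obtain ⟨i1, b1⟩ := pot_bound hg0 hint hw hM x
  have hM0 : 0 ≤ M := by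
    obtain ⟨y, hy⟩ := hM.exists
    exact (abs_nonneg _).trans hy
  simp only [hg, abs_norm] at i1 b1
  refine ⟨i1, b1.trans ?_⟩
  rw [show (fun r => r * (δ ^ 2 / (|r| * (r ^ 2 + δ ^ 2)))) = fun r => r * g r from rfl, hval]
  have := Real.pi_lt_d2
  have := Real.pi_gt_three
  apply mul_le_mul_of_nonneg_left _ hM0
  have h1 : Real.pi * Real.pi ≤ 10 := by nlinarith
  nlinarith

lemma log_pot {w : ℂ → ℝ} {M δ : ℝ} (hδ : 0 < δ) (hδ1 : δ ≤ 1)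
    (hw : Integrable w) (hM : ∀ᵐ y, |w y| ≤ M) (x : ℂ) :
    Integrable (fun y => w y * (Iic (6:ℝ)).indicator (fun r => (r ^ 2 + δ ^ 2)⁻¹) ‖x - y‖) ∧
      (∫ y, |w y| * (Iic (6:ℝ)).indicator (fun r => (r ^ 2 + δ ^ 2)⁻¹) ‖x - y‖)
        ≤ M * (28 + 7 * Real.log (1 / δ)) := by
  set g : ℝ → ℝ := (Iic (6:ℝ)).indicator (fun r => (r ^ 2 + δ ^ 2)⁻¹) with hg
  have hg0 : ∀ r, 0 ≤ g r := fun r => indicator_nonneg (fun r _ => by positivity) r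
  have hd : ∀ r ∈ uIcc (0:ℝ) 6, HasDerivAt (fun r => Real.log (r ^ 2 + δ ^ 2) / 2)
      (r * (r ^ 2 + δ ^ 2)⁻¹) r := by
    intro r _
    have h1 : HasDerivAt (fun r : ℝ => r ^ 2 + δ ^ 2) (2 * r) r := by
      simpa using (hasDerivAt_pow 2 r).add_const (δ ^ 2)
    have h2 := (h1.log (by positivity)).div_const 2
    refine h2.congr_deriv ?_
    field_simp
  have hcont : Continuous (fun r : ℝ => r * (r ^ 2 + δ ^ 2)⁻¹) :=
    continuous_id.mul (Continuous.inv₀ (by fun_prop) (fun r => by positivity))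
  have hFTC := intervalIntegral.integral_eq_sub_of_hasDerivAt hd (hcont.intervalIntegrable 0 6)
  rw [intervalIntegral.integral_of_le (by norm_num)] at hFTC
  have hrg : (fun r => r * g r) = (Iic (6:ℝ)).indicator (fun r => r * (r ^ 2 + δ ^ 2)⁻¹) := by
    ext r
    by_cases hr : r ∈ Iic (6:ℝ)
    · simp only [hg, indicator_of_mem hr]
    · simp only [hg, indicator_of_notMem hr]; simp
  have hset : Ioi (0:ℝ) ∩ Iic 6 = Ioc 0 6 := by ext; simp
  have hint : IntegrableOn (fun r => r * g r) (Ioi 0) := by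
    rw [hrg, IntegrableOn, integrable_indicator_iff measurableSet_Iic, IntegrableOn,
      Measure.restrict_restrict measurableSet_Iic, inter_comm, hset]
    exact (hcont.integrableOn_Icc).mono_set Ioc_subset_Icc_self
  have hval : (∫ r in Ioi 0, r * g r) = (Real.log (36 + δ ^ 2) / 2 - Real.log (δ ^ 2) / 2) := by
    rw [hrg, setIntegral_indicator measurableSet_Iic, hset, hFTC]
    norm_num
  obtain ⟨i1, b1⟩ := pot_bound hg0 hint hw hM x
  have hM0 : 0 ≤ M := by
    obtain ⟨y, hy⟩ := hM.exists
    exact (abs_nonneg _).trans hy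
  refine ⟨i1, b1.trans ?_⟩
  rw [hval]
  gcongr
  have e1 : Real.log (δ ^ 2) = - 2 * Real.log (1 / δ) := by
    rw [Real.log_pow, Real.log_div one_ne_zero hδ.ne']; simp
  have e2 : Real.log (36 + δ ^ 2) ≤ 8 := by
    have h1 : Real.log (36 + δ ^ 2) ≤ Real.log (2 ^ 8) :=
      Real.log_le_log (by positivity) (by nlinarith)
    rw [Real.log_pow] at h1
    have := Real.log_two_lt_d9
    push_cast at h1
    linarith
  have e3 : 0 ≤ Real.log (1 / δ) := Real.log_nonneg (by rw [le_div_iff₀ hδ]; linarith)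
  rw [e1]
  have := Real.pi_lt_d2
  have := Real.pi_gt_three
  nlinarith

end EulerOpt

namespace EulerOpt
open Complex ComplexConjugate Set

noncomputable def vel (w : ℂ → ℝ) (x : ℂ) : ℂ := ∫ y, w y • ker x y

noncomputable def FF (w ψ : ℂ → ℝ) : ℝ := ∫ x, w x * fderiv ℝ ψ x (vel w x)

structure Bd (w : ℂ → ℝ) (M : ℝ) : Prop where
  int : Integrable w
  l1 : ∫ x, |w x| ≤ M
  li : ∀ᵐ x, |w x| ≤ M

lemma Bd.nonneg {w : ℂ → ℝ} {M : ℝ} (h : Bd w M) : 0 ≤ M :=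
  (integral_nonneg fun y => abs_nonneg (w y)).trans h.l1

lemma Bd.vel_meas {w : ℂ → ℝ} {M : ℝ} (h : Bd w M) : AEStronglyMeasurable (vel w) volume := by
  have h1 : AEStronglyMeasurable (fun p : ℂ × ℂ => w p.2 • ker p.1 p.2)
      ((volume : Measure ℂ).prod volume) :=
    (h.int.aestronglyMeasurable.comp_snd).smul ker_measurable.aestronglyMeasurable
  exact h1.integral_prod_right'

lemma Bd.vel_bd {w : ℂ → ℝ} {M : ℝ} (h : Bd w M) (x : ℂ) : ‖vel w x‖ ≤ 2 * M :=
  (ker_int h.int h.li h.l1 x).2.1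

lemma Bd.mul_int {w : ℂ → ℝ} {M : ℝ} (h : Bd w M) {ψ : ℂ → ℝ} {B : ℝ} (hB : 0 ≤ B)
    (hψ : AEStronglyMeasurable ψ volume) (hb : ∀ x, w x ≠ 0 → |ψ x| ≤ B) :
    Integrable (fun x => w x * ψ x) ∧ |∫ x, w x * ψ x| ≤ M * B := by
  have pt : ∀ x, |w x * ψ x| ≤ |w x| * B := by
    intro x
    rw [abs_mul]
    by_cases hx : w x = 0
    · simp [hx]
    · exact mul_le_mul_of_nonneg_left (hb x hx) (abs_nonneg _)
  have i0 : Integrable (fun x => |w x| * B) := h.int.abs.mul_const B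
  have i1 : Integrable (fun x => w x * ψ x) :=
    i0.mono' (h.int.aestronglyMeasurable.mul hψ) (Filter.Eventually.of_forall pt)
  refine ⟨i1, (abs_integral_le_integral_abs).trans ?_⟩
  calc _ ≤ ∫ x, |w x| * B := integral_mono i1.abs i0 pt
    _ = (∫ x, |w x|) * B := integral_mul_const _ _
    _ ≤ _ := mul_le_mul_of_nonneg_right h.l1 hB

lemma Bd.lin_int {w : ℂ → ℝ} {M : ℝ} (h : Bd w M) {L : ℂ → ℂ →L[ℝ] ℝ} {B : ℝ} (hB : 0 ≤ B)
    (hL : Continuous L) (hb : ∀ x, w x ≠ 0 → ‖L x‖ ≤ B) :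
    Integrable (fun x => w x * L x (vel w x)) ∧ |∫ x, w x * L x (vel w x)| ≤ M * (B * (2 * M)) := by
  have hM := h.nonneg
  apply h.mul_int (by positivity)
  · exact isBoundedBilinearMap_apply.continuous.comp_aestronglyMeasurable
      (hL.aestronglyMeasurable.prodMk h.vel_meas)
  · intro x hx
    exact ((L x).le_opNorm _).trans (mul_le_mul (hb x hx) (h.vel_bd x) (norm_nonneg _) hB)

/-- Smooth compactly supported functions are admissible. -/
lemma Bd.test_int {w : ℂ → ℝ} {M : ℝ} (h : Bd w M) {ψ : ℂ → ℝ} (hψ : ContDiff ℝ (⊤ : ℕ∞) ψ)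
    (hc : HasCompactSupport ψ) : Integrable (fun x => w x * ψ x) ∧
      Integrable (fun x => w x * fderiv ℝ ψ x (vel w x)) := by
  obtain ⟨B, hB⟩ := hc.exists_bound_of_continuous hψ.continuous
  have hB0 : 0 ≤ B := (norm_nonneg _).trans (hB 0)
  have hd : Continuous (fderiv ℝ ψ) := hψ.continuous_fderiv (by simp)
  obtain ⟨B', hB'⟩ := (hc.fderiv ℝ).exists_bound_of_continuous hd
  have hB0' : 0 ≤ B' := (norm_nonneg _).trans (hB' 0)
  exact ⟨(h.mul_int hB0 hψ.continuous.aestronglyMeasurable (fun x _ => hB x)).1,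
    (h.lin_int hB0' hd (fun x _ => hB' x)).1⟩

/-- time integrability and tensor test functions -/
lemma weak_tensor {ω₀ : ℂ → ℝ} {ω : ℂ → ℝ → ℝ} {M : ℝ} (hB : ∀ t, Bd (fun x => ω x t) M)
    (h0 : Bd ω₀ M)
    (hw : IsWeakSolution 1 (1 / (2 * Real.pi)) ω₀ ω)
    {ψ : ℂ → ℝ} {χ : ℝ → ℝ} (hψ : ContDiff ℝ (⊤ : ℕ∞) ψ) (hψc : HasCompactSupport ψ)
    (hχ : ContDiff ℝ (⊤ : ℕ∞) χ) (hχc : HasCompactSupport χ) :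
    (∫ t in Ioi (0:ℝ), (deriv χ t * (∫ x, ω x t * ψ x) + χ t * FF (fun x => ω x t) ψ)) +
      χ 0 * ∫ x, ω₀ x * ψ x = 0 := by
  have h := hw.2.2 (fun x t => ψ x * χ t) (by fun_prop) ?_
  · have e1 : (fun t => ∫ x, ω x t * (deriv (fun s => ψ x * χ s) t +
          fderiv ℝ (fun y => ψ y * χ t) x (velocity 1 (1 / (2 * Real.pi)) ω x t))) =
        fun t => (deriv χ t * (∫ x, ω x t * ψ x) + χ t * FF (fun x => ω x t) ψ) := by
      ext t
      have hd : ∀ x, fderiv ℝ (fun y => ψ y * χ t) x (velocity 1 (1 / (2 * Real.pi)) ω x t) =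
          χ t * fderiv ℝ ψ x (vel (fun x => ω x t) x) := by
        intro x
        have : DifferentiableAt ℝ ψ x := (hψ.differentiable (by simp)) x
        rw [fderiv_mul_const this]
        simp [velocity, vel, ker]
      have hd2 : ∀ x, deriv (fun s => ψ x * χ s) t = ψ x * deriv χ t := by
        intro x
        exact deriv_const_mul _ ((hχ.differentiable (by simp)) t)
      simp only [hd, hd2]
      obtain ⟨i1, i2⟩ := (hB t).test_int hψ hψc
      unfold FF
      rw [← integral_const_mul, ← integral_const_mul, ← integral_add (i1.const_mul _) (i2.const_mul _)]
      congr 1; ext x; ring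
    rw [e1] at h
    have e2 : (∫ x, ω₀ x * (ψ x * χ 0)) = χ 0 * ∫ x, ω₀ x * ψ x := by
      rw [← integral_const_mul]
      congr 1; ext x; ring
    rw [e2] at h
    exact h
  · have hK : IsCompact (tsupport ψ ×ˢ tsupport χ) := hψc.isCompact.prod hχc.isCompact
    apply HasCompactSupport.intro hK
    rintro ⟨x, t⟩ hx
    simp only [mem_prod, not_and_or] at hx
    rcases hx with hx | hx
    · simp [image_eq_zero_of_notMem_tsupport hx]
    · simp [image_eq_zero_of_notMem_tsupport hx]

lemma exists_bump (R : ℝ) (hR : 0 < R) {E : Type*} [NormedAddCommGroup E] [InnerProductSpace ℝ E]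
    [FiniteDimensional ℝ E] :
    ∃ χ : E → ℝ, ContDiff ℝ (⊤ : ℕ∞) χ ∧ HasCompactSupport χ ∧ (∀ x, ‖x‖ ≤ R → χ x = 1) ∧
      (∀ x, R + 1 ≤ ‖x‖ → χ x = 0) ∧ ∀ x, 0 ≤ χ x ∧ χ x ≤ 1 := by
  let f : ContDiffBump (0 : E) := ⟨R, R + 1, hR, by linarith⟩
  refine ⟨f, f.contDiff, f.hasCompactSupport, fun x hx => f.one_of_mem_closedBall (by simpa using hx),
    fun x hx => f.zero_of_le_dist (by simpa using hx), fun x => ⟨f.nonneg, f.le_one⟩⟩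

lemma weak_integrable {ω₀ : ℂ → ℝ} {ω : ℂ → ℝ → ℝ} {M : ℝ} (hB : ∀ t, Bd (fun x => ω x t) M)
    (h0 : Bd ω₀ M)
    (hw : IsWeakSolution 1 (1 / (2 * Real.pi)) ω₀ ω)
    {ψ0 : ℂ → ℝ} (hψ0 : ContDiff ℝ (⊤ : ℕ∞) ψ0) (hψ0c : HasCompactSupport ψ0)
    (hne : ∫ x, ω₀ x * ψ0 x ≠ 0)
    {ψ : ℂ → ℝ} {χ : ℝ → ℝ} (hψ : ContDiff ℝ (⊤ : ℕ∞) ψ) (hψc : HasCompactSupport ψ)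
    (hχ : ContDiff ℝ (⊤ : ℕ∞) χ) (hχc : HasCompactSupport χ) :
    IntegrableOn (fun t => deriv χ t * (∫ x, ω x t * ψ x) + χ t * FF (fun x => ω x t) ψ)
      (Ioi (0:ℝ)) := by
  have base : ∀ {ψ : ℂ → ℝ} {χ : ℝ → ℝ} (hψ : ContDiff ℝ (⊤ : ℕ∞) ψ) (hψc : HasCompactSupport ψ)
      (hχ : ContDiff ℝ (⊤ : ℕ∞) χ) (hχc : HasCompactSupport χ), χ 0 ≠ 0 → ∫ x, ω₀ x * ψ x ≠ 0 →
      IntegrableOn (fun t => deriv χ t * (∫ x, ω x t * ψ x) + χ t * FF (fun x => ω x t) ψ)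
      (Ioi (0:ℝ)) := by
    intro ψ χ hψ hψc hχ hχc h1 h2
    by_contra hcon
    have := weak_tensor hB h0 hw hψ hψc hχ hχc
    rw [integral_undef hcon, zero_add] at this
    exact (mul_ne_zero h1 h2) this
  obtain ⟨χ0, hχ0, hχ0c, hχ01, -⟩ := exists_bump (E := ℝ) 1 one_pos
  have hχ0' : χ0 0 = 1 := hχ01 0 (by simp)
  have step : ∀ {ψ : ℂ → ℝ} {χ : ℝ → ℝ} (hψ : ContDiff ℝ (⊤ : ℕ∞) ψ) (hψc : HasCompactSupport ψ)
      (hχ : ContDiff ℝ (⊤ : ℕ∞) χ) (hχc : HasCompactSupport χ), ∫ x, ω₀ x * ψ x ≠ 0 →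
      IntegrableOn (fun t => deriv χ t * (∫ x, ω x t * ψ x) + χ t * FF (fun x => ω x t) ψ)
      (Ioi (0:ℝ)) := by
    intro ψ χ hψ hψc hχ hχc h2
    by_cases h1 : χ 0 = 0
    · have a1 := base hψ hψc (hχ.add hχ0) (hχc.add hχ0c) (by simp [h1, hχ0']) h2
      have a2 := base hψ hψc hχ0 hχ0c (by simp [hχ0']) h2
      refine (a1.sub a2).congr_fun (fun t _ => ?_) measurableSet_Ioi
      have : deriv (fun x => χ x + χ0 x) t = deriv χ t + deriv χ0 t :=
        deriv_add ((hχ.differentiable (by simp)) t) ((hχ0.differentiable (by simp)) t)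
      simp only [Pi.sub_apply, this]
      ring
    · exact base hψ hψc hχ hχc h1 h2
  by_cases h1 : ∫ x, ω₀ x * ψ x = 0
  · have i0 := (h0.test_int hψ hψc).1
    have i1 := (h0.test_int hψ0 hψ0c).1
    have a1 := step (hψ.add hψ0) (hψc.add hψ0c) hχ hχc (by
      simp only [mul_add]
      rw [integral_add i0 i1, h1, zero_add]; exact hne)
    have a2 := step hψ0 hψ0c hχ hχc hne
    refine (a1.sub a2).congr_fun (fun t _ => ?_) measurableSet_Ioi
    obtain ⟨j1, j2⟩ := (hB t).test_int hψ hψc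
    obtain ⟨k1, k2⟩ := (hB t).test_int hψ0 hψ0c
    have e1 : (∫ x, ω x t * (ψ x + ψ0 x)) = (∫ x, ω x t * ψ x) + ∫ x, ω x t * ψ0 x := by
      simp only [mul_add]
      exact integral_add j1 k1
    have e2 : FF (fun x => ω x t) (fun x => ψ x + ψ0 x) = FF (fun x => ω x t) ψ + FF (fun x => ω x t) ψ0 := by
      unfold FF
      rw [← integral_add j2 k2]
      congr 1; ext x
      rw [fderiv_fun_add ((hψ.differentiable (by simp)) x) ((hψ0.differentiable (by simp)) x)]
      simp [mul_add]
    simp only [Pi.sub_apply, e1, e2]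
    ring
  · exact step hψ hψc hχ hχc h1

end EulerOpt

namespace EulerOpt
open Complex ComplexConjugate Set

lemma time_slice {f F : ℝ → ℝ} {c t0 : ℝ} (ht0 : 0 < t0)
    (h1 : ∀ χ : ℝ → ℝ, ContDiff ℝ (⊤ : ℕ∞) χ → HasCompactSupport χ →
      IntegrableOn (fun t => deriv χ t * f t + χ t * F t) (Ioi 0))
    (h2 : ∀ χ : ℝ → ℝ, ContDiff ℝ (⊤ : ℕ∞) χ → HasCompactSupport χ →
      (∫ t in Ioi 0, (deriv χ t * f t + χ t * F t)) + χ 0 * c = 0) :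
    IntervalIntegrable F volume 0 t0 ∧
      ∀ᵐ t, t ∈ Ioo 0 t0 → f t = c + ∫ s in (0:ℝ)..t, F s := by
  obtain ⟨ζ, hζ, hζc, hζ1, hζ0, -⟩ := exists_bump (E := ℝ) (t0 + 1) (by linarith)
  have hnb : ∀ t ∈ Ioo 0 t0, ζ =ᶠ[nhds t] fun _ => 1 := by
    intro t ht
    filter_upwards [isOpen_Ioo.mem_nhds ht] with s hs
    apply hζ1; rw [Real.norm_eq_abs, abs_of_pos hs.1]; linarith [hs.2]
  have hF : IntegrableOn F (Ioo 0 t0) := by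
    refine ((h1 ζ hζ hζc).mono_set Ioo_subset_Ioi_self).congr_fun (fun t ht => ?_) measurableSet_Ioo
    simp [(hnb t ht).deriv_eq, (hnb t ht).eq_of_nhds]
  have hf : IntegrableOn f (Ioo 0 t0) := by
    have hs : ContDiff ℝ (⊤ : ℕ∞) (fun t => t * ζ t) := contDiff_id.mul hζ
    have hc : HasCompactSupport (fun t => t * ζ t) := hζc.mul_left
    have a1 := (h1 _ hs hc).mono_set (s := Ioo 0 t0) Ioo_subset_Ioi_self
    have a2 : IntegrableOn (fun t => t * F t) (Ioo 0 t0) :=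
      ((hF.bdd_mul (c := t0) (f := fun t => t) (by fun_prop) (by
        filter_upwards [ae_restrict_mem measurableSet_Ioo] with t ht
        rw [Real.norm_eq_abs, abs_of_pos ht.1]; exact ht.2.le)))
    refine (a1.sub a2).congr_fun (fun t ht => ?_) measurableSet_Ioo
    have : (fun t => t * ζ t) =ᶠ[nhds t] fun t => t := by
      filter_upwards [hnb t ht] with s hs
      rw [hs, mul_one]
    simp [this.deriv_eq, (hnb t ht).eq_of_nhds]
  have hFi : IntervalIntegrable F volume 0 t0 := by
    rwa [intervalIntegrable_iff_integrableOn_Ioo_of_le ht0.le]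
  refine ⟨hFi, ?_⟩
  set Φ : ℝ → ℝ := fun t => ∫ s in (0:ℝ)..t, F s with hΦ
  have hΦac : AbsolutelyContinuousOnInterval Φ 0 t0 :=
    hFi.absolutelyContinuousOnInterval_intervalIntegral (by simp)
  have hΦc : ContinuousOn Φ (Icc 0 t0) := by
    have := hΦac.continuousOn
    rwa [uIcc_of_le ht0.le] at this
  have hΦi : IntegrableOn Φ (Ioo 0 t0) := hΦc.integrableOn_Icc.mono_set Ioo_subset_Icc_self
  have hΦd : ∀ᵐ t, t ∈ Ioo 0 t0 → deriv Φ t = F t := by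
    filter_upwards [hFi.ae_hasDerivAt_integral] with t ht htm
    exact (ht (by rw [uIcc_of_le ht0.le]; exact Ioo_subset_Icc_self htm) 0 (by simp)).deriv
  have key : ∀ᵐ t, t ∈ Ioo 0 t0 → f t - c - Φ t = 0 := by
    have hloc : IntegrableOn (fun t => f t - c - Φ t) (Ioo 0 t0) :=
      (hf.sub (integrableOn_const (by simp))).sub hΦi
    apply isOpen_Ioo.ae_eq_zero_of_integral_contDiff_smul_eq_zero hloc.locallyIntegrableOn
    intro η hη hηc hηs
    have hηz : ∀ t, t ∉ Ioo 0 t0 → η t = 0 := fun t ht =>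
      image_eq_zero_of_notMem_tsupport (fun h => ht (hηs h))
    obtain ⟨Bη, hBη⟩ := hηc.exists_bound_of_continuous hη.continuous
    set E : ℝ → ℝ := fun t => ∫ s in t0..t, η s with hE
    have hEd : ∀ t, HasDerivAt E (η t) t := fun t =>
      (hη.continuous.integral_hasStrictDerivAt t0 t).hasDerivAt
    have hEd' : deriv E = η := funext fun t => (hEd t).deriv
    have hEs : ContDiff ℝ (⊤ : ℕ∞) E := by
      rw [contDiff_infty_iff_deriv]
      exact ⟨fun t => (hEd t).differentiableAt, by rw [hEd']; exact hη⟩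
    have hEt0 : E t0 = 0 := by simp [hE]
    have hE0 : ∀ t, t0 ≤ t → E t = 0 := by
      intro t ht
      simp only [hE]
      apply intervalIntegral.integral_zero_ae
      refine Filter.Eventually.of_forall fun s hs => hηz s ?_
      rw [uIoc_of_le ht] at hs
      exact fun h => absurd h.2 (not_lt.2 hs.1.le)
    have hχs : ContDiff ℝ (⊤ : ℕ∞) (fun t => ζ t * E t) := hζ.mul hEs
    have hχc : HasCompactSupport (fun t => ζ t * E t) := hζc.mul_right
    have e := h2 _ hχs hχc
    have z1 : ζ 0 = 1 := hζ1 0 (by simp; linarith)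
    have e3 : (∫ t in Ioi 0, (deriv (fun t => ζ t * E t) t * f t + ζ t * E t * F t)) =
        ∫ t in Ioo 0 t0, (η t * f t + E t * F t) := by
      have hsub : Ioo 0 t0 ⊆ Ioi 0 := Ioo_subset_Ioi_self
      rw [setIntegral_eq_of_subset_of_ae_sdiff_eq_zero (s := Ioo 0 t0) measurableSet_Ioi.nullMeasurableSet
        hsub]
      · apply setIntegral_congr_fun measurableSet_Ioo
        intro t ht
        have : (fun t => ζ t * E t) =ᶠ[nhds t] E := by
          filter_upwards [hnb t ht] with s hs
          rw [hs, one_mul]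
        simp [this.deriv_eq, (hnb t ht).eq_of_nhds, hEd']
      · have : ∀ᵐ t : ℝ, t ≠ t0 := by simp [ae_iff]
        filter_upwards [this] with t ht hts
        have htt : t0 < t := by
          have h3 : 0 < t := hts.1
          have h4 : ¬ t < t0 := fun h => hts.2 ⟨h3, h⟩
          exact lt_of_le_of_ne (not_lt.1 h4) (Ne.symm ht)
        have : (fun t => ζ t * E t) =ᶠ[nhds t] fun _ => 0 := by
          filter_upwards [isOpen_Ioi.mem_nhds htt] with s hs
          rw [hE0 s (le_of_lt hs), mul_zero]
        simp [this.deriv_eq, hE0 t htt.le]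
    rw [e3, z1, one_mul] at e
    have iηf : IntegrableOn (fun t => η t * f t) (Ioo 0 t0) :=
      hf.bdd_mul (c := Bη) hη.continuous.aestronglyMeasurable (Filter.Eventually.of_forall hBη)
    have iηΦ : IntegrableOn (fun t => η t * Φ t) (Ioo 0 t0) :=
      hΦi.bdd_mul (c := Bη) hη.continuous.aestronglyMeasurable (Filter.Eventually.of_forall hBη)
    obtain ⟨BE, hBE⟩ := (isCompact_Icc (a := (0:ℝ)) (b := t0)).exists_bound_of_continuousOn
      hEs.continuous.continuousOn
    have iEF : IntegrableOn (fun t => E t * F t) (Ioo 0 t0) :=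
      hF.bdd_mul (c := BE) hEs.continuous.aestronglyMeasurable (by
        filter_upwards [ae_restrict_mem measurableSet_Ioo] with t ht
        exact hBE t (Ioo_subset_Icc_self ht))
    rw [integral_add iηf iEF] at e
    have hEac : AbsolutelyContinuousOnInterval E 0 t0 :=
      (hη.continuous.intervalIntegrable 0 t0).absolutelyContinuousOnInterval_intervalIntegral
        (by simp)
    have ibp := hEac.integral_mul_deriv_eq_deriv_mul hΦac
    rw [hEd', hEt0, show Φ 0 = 0 by simp [hΦ], intervalIntegral.integral_of_le ht0.le,
      intervalIntegral.integral_of_le ht0.le, integral_Ioc_eq_integral_Ioo,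
      integral_Ioc_eq_integral_Ioo] at ibp
    have e4 : ∫ t in Ioo 0 t0, E t * deriv Φ t = ∫ t in Ioo 0 t0, E t * F t := by
      apply setIntegral_congr_ae measurableSet_Ioo
      filter_upwards [hΦd] with t ht htm
      rw [ht htm]
    rw [e4] at ibp
    have e5 : E 0 = - ∫ t in Ioo 0 t0, η t := by
      simp only [hE]
      rw [intervalIntegral.integral_symm, intervalIntegral.integral_of_le ht0.le,
        integral_Ioc_eq_integral_Ioo]
    have e6 : (∫ t, η t • (f t - c - Φ t)) = ∫ t in Ioo 0 t0, η t • (f t - c - Φ t) := by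
      rw [setIntegral_eq_integral_of_forall_compl_eq_zero]
      intro t ht; simp [hηz t ht]
    rw [e6]
    have iη : IntegrableOn η (Ioo 0 t0) := hη.continuous.integrableOn_Icc.mono_set Ioo_subset_Icc_self
    have e7 : (∫ t in Ioo 0 t0, η t • (f t - c - Φ t)) =
        (∫ t in Ioo 0 t0, η t * f t) - (∫ t in Ioo 0 t0, η t) * c - ∫ t in Ioo 0 t0, η t * Φ t := by
      rw [← integral_mul_const, ← integral_sub iηf (iη.mul_const c), ← integral_sub _ iηΦ]
      · congr 1; ext t; simp only [smul_eq_mul]; ring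
      · exact iηf.sub (iη.mul_const c)
    rw [e7]
    rw [e5] at e
    linarith
  filter_upwards [key] with t ht htm
  linarith [ht htm]

end EulerOpt

namespace EulerOpt
open Complex ComplexConjugate Set

lemma dense_tests : ∃ u : ℕ → ℂ → ℝ, (∀ n, ContDiff ℝ (⊤ : ℕ∞) (u n)) ∧
    (∀ n, HasCompactSupport (u n)) ∧
    ∀ ψ : ℂ → ℝ, ContDiff ℝ (⊤ : ℕ∞) ψ → HasCompactSupport ψ → ∀ η > 0, ∃ n, ∀ x : ℂ, ‖x‖ ≤ 1 →
      |u n x - ψ x| ≤ η ∧ ‖fderiv ℝ (u n) x - fderiv ℝ ψ x‖ ≤ η := by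
  let K := Metric.closedBall (0:ℂ) 1
  let T := {ψ : ℂ → ℝ // ContDiff ℝ (⊤ : ℕ∞) ψ ∧ HasCompactSupport ψ}
  haveI : CompactSpace K := isCompact_iff_compactSpace.1 (isCompact_closedBall _ _)
  let Q : T → C(K, ℝ) × C(K, ℂ →L[ℝ] ℝ) := fun ψ =>
    (⟨fun x => ψ.1 x, ψ.2.1.continuous.comp continuous_subtype_val⟩,
     ⟨fun x => fderiv ℝ ψ.1 x, (ψ.2.1.continuous_fderiv (by simp)).comp continuous_subtype_val⟩)
  haveI : Nonempty T := ⟨⟨0, contDiff_const, HasCompactSupport.zero⟩⟩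
  haveI : FiniteDimensional ℝ (ℂ →L[ℝ] ℝ) := inferInstance
  haveI : ProperSpace (ℂ →L[ℝ] ℝ) := FiniteDimensional.proper ℝ _
  haveI : Nonempty (range Q) := ⟨⟨Q (Classical.arbitrary T), mem_range_self _⟩⟩
  obtain ⟨v, hv⟩ := TopologicalSpace.exists_dense_seq (range Q)
  choose u hu using fun n => (v n).2
  refine ⟨fun n => (u n).1, fun n => (u n).2.1, fun n => (u n).2.2, fun ψ h1 h2 η hη => ?_⟩
  let q : range Q := ⟨Q ⟨ψ, h1, h2⟩, mem_range_self _⟩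
  obtain ⟨n, hn⟩ := (Metric.denseRange_iff (f := v)).1 hv q η hη
  refine ⟨n, fun x hx => ?_⟩
  have hxK : x ∈ K := by simpa [K] using hx
  rw [Subtype.dist_eq, ← hu n, dist_comm, Prod.dist_eq, max_lt_iff] at hn
  have a1 := ((ContinuousMap.dist_lt_iff hη).1 hn.1) ⟨x, hxK⟩
  have a2 := ((ContinuousMap.dist_lt_iff hη).1 hn.2) ⟨x, hxK⟩
  exact ⟨a1.le, by rw [← dist_eq_norm]; exact a2.le⟩

structure Fam (w : ℝ → ℂ → ℝ) (t0 M : ℝ) (G : Set ℝ) : Prop where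
  pos : 0 < t0
  bd : ∀ t, Bd (w t) M
  supp : ∀ t ∈ Icc 0 t0, ∀ x, w t x ≠ 0 → ‖x‖ ≤ 1
  zero_mem : 0 ∈ G
  sub : G ⊆ Ico 0 t0
  ae : ∀ᵐ t, t ∈ Ioo 0 t0 → t ∈ G
  ii : ∀ ψ, ContDiff ℝ (⊤ : ℕ∞) ψ → IntervalIntegrable (fun s => FF (w s) ψ) volume 0 t0
  eq : ∀ ψ, ContDiff ℝ (⊤ : ℕ∞) ψ → ∀ t ∈ G,
    ∫ x, w t x * ψ x = (∫ x, w 0 x * ψ x) + ∫ s in (0:ℝ)..t, FF (w s) ψ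

/-- difference estimate for tests close on the disc -/
lemma Bd.close {w : ℂ → ℝ} {M : ℝ} (h : Bd w M) (hs : ∀ x, w x ≠ 0 → ‖x‖ ≤ 1)
    {ψ ψ' : ℂ → ℝ} (hψ : ContDiff ℝ (⊤ : ℕ∞) ψ) (hψ' : ContDiff ℝ (⊤ : ℕ∞) ψ') {η : ℝ} (hη : 0 ≤ η)
    (hc : ∀ x : ℂ, ‖x‖ ≤ 1 → |ψ x - ψ' x| ≤ η ∧ ‖fderiv ℝ ψ x - fderiv ℝ ψ' x‖ ≤ η) :
    |(∫ x, w x * ψ x) - ∫ x, w x * ψ' x| ≤ M * η ∧ |FF w ψ - FF w ψ'| ≤ M * (η * (2 * M)) := by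
  have key : ∀ {ψ : ℂ → ℝ}, ContDiff ℝ (⊤ : ℕ∞) ψ → Integrable (fun x => w x * ψ x) ∧
      Integrable (fun x => w x * fderiv ℝ ψ x (vel w x)) := by
    intro ψ hψ
    obtain ⟨B, hB⟩ := (isCompact_closedBall (0:ℂ) 1).exists_bound_of_continuousOn
      hψ.continuous.continuousOn
    have hB0 : 0 ≤ B := (norm_nonneg _).trans (hB 0 (by simp))
    have hd : Continuous (fderiv ℝ ψ) := hψ.continuous_fderiv (by simp)
    obtain ⟨B', hB'⟩ := (isCompact_closedBall (0:ℂ) 1).exists_bound_of_continuousOn hd.continuousOn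
    have hB0' : 0 ≤ B' := (norm_nonneg _).trans (hB' 0 (by simp))
    exact ⟨(h.mul_int hB0 hψ.continuous.aestronglyMeasurable
      (fun x hx => hB x (by simpa using hs x hx))).1,
      (h.lin_int hB0' hd (fun x hx => hB' x (by simpa using hs x hx))).1⟩
  have d1 : Continuous (fderiv ℝ ψ) := hψ.continuous_fderiv (by simp)
  have d2 : Continuous (fderiv ℝ ψ') := hψ'.continuous_fderiv (by simp)
  constructor
  · rw [← integral_sub (key hψ).1 (key hψ').1]
    have := (h.mul_int (ψ := fun x => ψ x - ψ' x) hη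
      (hψ.continuous.sub hψ'.continuous).aestronglyMeasurable (fun x hx => (hc x (hs x hx)).1)).2
    simpa only [mul_sub] using this
  · unfold FF
    rw [← integral_sub (key hψ).2 (key hψ').2]
    have := (h.lin_int (L := fun x => fderiv ℝ ψ x - fderiv ℝ ψ' x) hη (d1.sub d2)
      (fun x hx => (hc x (hs x hx)).2)).2
    simpa only [mul_sub, ContinuousLinearMap.sub_apply] using this

lemma fam_exists {ω₀ : ℂ → ℝ} {ω : ℂ → ℝ → ℝ} {M t0 : ℝ} (ht0 : 0 < t0)
    (hB : ∀ t, Bd (fun x => ω x t) M) (h0 : Bd ω₀ M)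
    (hs : ∀ t ∈ Icc 0 t0, ∀ x, ω x t ≠ 0 → ‖x‖ ≤ 1) (hs0 : ∀ x, ω₀ x ≠ 0 → ‖x‖ ≤ 1)
    (hne : ∫ x, ω₀ x ≠ 0)
    (hw : IsWeakSolution 1 (1 / (2 * Real.pi)) ω₀ ω) :
    ∃ G, Fam (fun t x => if t = 0 then ω₀ x else ω x t) t0 M G := by
  set w : ℝ → ℂ → ℝ := fun t x => if t = 0 then ω₀ x else ω x t with hwdef
  have w0 : w 0 = ω₀ := by ext x; simp [hwdef]
  have wt : ∀ t, t ≠ 0 → w t = fun x => ω x t := by intro t ht; ext x; simp [hwdef, ht]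
  have bd : ∀ t, Bd (w t) M := by
    intro t
    by_cases ht : t = 0
    · rw [ht, w0]; exact h0
    · rw [wt t ht]; exact hB t
  have supp : ∀ t ∈ Icc 0 t0, ∀ x, w t x ≠ 0 → ‖x‖ ≤ 1 := by
    intro t htt x
    by_cases ht : t = 0
    · rw [ht, w0]; exact hs0 x
    · rw [wt t ht]; exact hs t htt x
  obtain ⟨ψ0, hψ0, hψ0c, hψ01, -⟩ := exists_bump (E := ℂ) 2 two_pos
  have hne' : ∫ x, ω₀ x * ψ0 x ≠ 0 := by
    convert hne using 3 with x
    by_cases hx : ω₀ x = 0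
    · simp [hx]
    · rw [hψ01 x (by linarith [hs0 x hx]), mul_one]
  have slice : ∀ ψ : ℂ → ℝ, ContDiff ℝ (⊤ : ℕ∞) ψ → HasCompactSupport ψ →
      IntervalIntegrable (fun s => FF (w s) ψ) volume 0 t0 ∧ ∀ᵐ t, t ∈ Ioo 0 t0 →
      ∫ x, w t x * ψ x = (∫ x, w 0 x * ψ x) + ∫ s in (0:ℝ)..t, FF (w s) ψ := by
    intro ψ hψ hψc
    rw [w0]
    have hpt : ∀ χ : ℝ → ℝ, EqOn (fun t => deriv χ t * (∫ x, ω x t * ψ x) +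
        χ t * FF (fun x => ω x t) ψ)
        (fun t => deriv χ t * (∫ x, w t x * ψ x) + χ t * FF (w t) ψ) (Ioi 0) := by
      intro χ t ht
      simp only [wt t (ne_of_gt ht)]
    apply time_slice ht0
    · intro χ hχ hχc
      exact (weak_integrable hB h0 hw hψ0 hψ0c hne' hψ hψc hχ hχc).congr_fun (hpt χ)
        measurableSet_Ioi
    · intro χ hχ hχc
      rw [← setIntegral_congr_fun measurableSet_Ioi (hpt χ)]
      exact weak_tensor hB h0 hw hψ hψc hχ hχc
  obtain ⟨u, hu, huc, hud⟩ := dense_tests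
  let G : Set ℝ := {0} ∪ {t | t ∈ Ioo 0 t0 ∧ ∀ n,
    ∫ x, w t x * u n x = (∫ x, w 0 x * u n x) + ∫ s in (0:ℝ)..t, FF (w s) (u n)}
  have hM := h0.nonneg
  -- cutoff
  have cut : ∀ ψ : ℂ → ℝ, ContDiff ℝ (⊤ : ℕ∞) ψ → ∃ ψ', ContDiff ℝ (⊤ : ℕ∞) ψ' ∧
      HasCompactSupport ψ' ∧ (∀ t ∈ Icc 0 t0, (∫ x, w t x * ψ x) = ∫ x, w t x * ψ' x) ∧
      ∀ t ∈ Icc 0 t0, FF (w t) ψ = FF (w t) ψ' := by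
    intro ψ hψ
    have hsm : ContDiff ℝ (⊤ : ℕ∞) (fun x => ψ0 x * ψ x) := hψ0.mul hψ
    have hz : ∀ x : ℂ, ‖x‖ ≤ 1 → |ψ x - ψ0 x * ψ x| ≤ 0 ∧
        ‖fderiv ℝ ψ x - fderiv ℝ (fun x => ψ0 x * ψ x) x‖ ≤ 0 := by
      intro x hx
      have : (fun x => ψ0 x * ψ x) =ᶠ[nhds x] ψ := by
        have : Metric.ball (0:ℂ) 2 ∈ nhds x := Metric.isOpen_ball.mem_nhds (by simp; linarith)
        filter_upwards [this] with y hy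
        rw [hψ01 y (by simpa using (mem_ball_zero_iff.1 hy).le), one_mul]
      have e : ψ0 x * ψ x = ψ x := this.eq_of_nhds
      rw [this.fderiv_eq, e]; simp
    refine ⟨_, hsm, hψ0c.mul_right, fun t ht => ?_, fun t ht => ?_⟩
    · have := ((bd t).close (supp t ht) hψ hsm le_rfl hz).1
      rw [mul_zero] at this
      linarith [abs_nonpos_iff.1 this]
    · have := ((bd t).close (supp t ht) hψ hsm le_rfl hz).2
      rw [zero_mul, mul_zero] at this
      linarith [abs_nonpos_iff.1 this]
  have ii : ∀ ψ, ContDiff ℝ (⊤ : ℕ∞) ψ → IntervalIntegrable (fun s => FF (w s) ψ) volume 0 t0 := by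
    intro ψ hψ
    obtain ⟨ψ', h1, h2, -, h4⟩ := cut ψ hψ
    refine (slice ψ' h1 h2).1.congr ?_
    intro s hs
    rw [uIoc_of_le ht0.le] at hs
    exact (h4 s (Ioc_subset_Icc_self hs)).symm
  have hcompact : ∀ ψ, ContDiff ℝ (⊤ : ℕ∞) ψ → HasCompactSupport ψ → ∀ t ∈ G,
    ∫ x, w t x * ψ x = (∫ x, w 0 x * ψ x) + ∫ s in (0:ℝ)..t, FF (w s) ψ := by
    rintro ψ hψ hψc t (ht | ⟨ht, hn⟩)
    · rw [mem_singleton_iff.1 ht]; simp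
    · rw [← sub_eq_zero, ← abs_nonpos_iff]
      apply le_of_forall_pos_le_add
      intro η hη
      set κ : ℝ := η / (2 * M + t0 * (M * (2 * M)) + 1) with hκ
      have hκ0 : 0 < κ := by positivity
      have hκη : κ * (2 * M + t0 * (M * (2 * M)) + 1) = η := by rw [hκ]; field_simp
      obtain ⟨n, hcl⟩ := hud ψ hψ hψc κ hκ0
      have en := hn n
      have c1 := ((bd t).close (supp t (Ioo_subset_Icc_self ht)) (hu n) hψ hκ0.le hcl).1
      have c2 := ((bd 0).close (supp 0 ⟨le_rfl, ht0.le⟩) (hu n) hψ hκ0.le hcl).1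
      have hsub : uIcc 0 t ⊆ uIcc 0 t0 := by
        rw [uIcc_of_le ht.1.le, uIcc_of_le ht0.le]; exact Icc_subset_Icc_right ht.2.le
      have i1 := (ii (u n) (hu n)).mono_set hsub
      have i2 := (ii ψ hψ).mono_set hsub
      have c3 : |(∫ s in (0:ℝ)..t, FF (w s) (u n)) - ∫ s in (0:ℝ)..t, FF (w s) ψ| ≤
          M * (κ * (2 * M)) * t0 := by
        rw [← intervalIntegral.integral_sub i1 i2]
        have := intervalIntegral.norm_integral_le_of_norm_le_const (a := 0) (b := t)
          (C := M * (κ * (2 * M))) (f := fun s => FF (w s) (u n) - FF (w s) ψ) (by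
          intro s hs
          rw [uIoc_of_le ht.1.le] at hs
          exact ((bd s).close (supp s ⟨hs.1.le, hs.2.trans ht.2.le⟩) (hu n) hψ hκ0.le hcl).2)
        refine this.trans ?_
        rw [sub_zero, abs_of_pos ht.1]
        exact mul_le_mul_of_nonneg_left ht.2.le (by positivity)
      rw [abs_le] at *
      constructor <;> nlinarith
  refine ⟨G, ht0, bd, supp, Or.inl rfl, ?_, ?_, ii, ?_⟩
  · rintro t (ht | ht)
    · rw [mem_singleton_iff.1 ht]; exact ⟨le_rfl, ht0⟩
    · exact Ioo_subset_Ico_self ht.1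
  · have : ∀ᵐ t, ∀ n, t ∈ Ioo 0 t0 →
      ∫ x, w t x * u n x = (∫ x, w 0 x * u n x) + ∫ s in (0:ℝ)..t, FF (w s) (u n) :=
      ae_all_iff.2 fun n => (slice _ (hu n) (huc n)).2
    filter_upwards [this] with t ht htm
    exact Or.inr ⟨htm, fun n => ht n htm⟩
  · intro ψ hψ t ht
    obtain ⟨ψ', h1, h2, h3, h4⟩ := cut ψ hψ
    have htI : t ∈ Icc 0 t0 := by
      rcases ht with ht | ht
      · rw [mem_singleton_iff.1 ht]; exact ⟨le_rfl, ht0.le⟩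
      · exact Ioo_subset_Icc_self ht.1
    rw [h3 t htI, h3 0 ⟨le_rfl, ht0.le⟩, hcompact ψ' h1 h2 t ht]
    congr 1
    apply intervalIntegral.integral_congr
    intro s hs
    rw [uIcc_of_le htI.1] at hs
    exact (h4 s ⟨hs.1, hs.2.trans htI.2⟩).symm

end EulerOpt

namespace EulerOpt
open Complex ComplexConjugate Set

lemma Kd_deriv {δ : ℝ} (hδ : 0 < δ) (v : ℂ) :
    ∃ D : ℂ →L[ℝ] ℂ, HasFDerivAt (fun v : ℂ => (‖v‖ ^ 2 + δ ^ 2)⁻¹ • (((1 / (2 * Real.pi) : ℝ) : ℂ) * (I * v))) D v ∧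
      ‖D‖ ≤ 3 * (‖v‖ ^ 2 + δ ^ 2)⁻¹ := by
  set c : ℝ := 1 / (2 * Real.pi) with hc
  have hc1 : |c| ≤ 1 := by
    rw [abs_of_pos (by positivity), hc, div_le_one (by positivity)]
    linarith [Real.pi_gt_three]
  have hq : 0 < ‖v‖ ^ 2 + δ ^ 2 := by positivity
  have h1 : HasFDerivAt (fun v : ℂ => ‖v‖ ^ 2 + δ ^ 2) (2 • innerSL ℝ v) v :=
    (hasStrictFDerivAt_norm_sq v).hasFDerivAt.add_const _
  have h2 := (hasDerivAt_inv hq.ne').comp_hasFDerivAt v h1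
  have h3 : HasFDerivAt (fun v : ℂ => (c : ℂ) * (I * v))
      (((c : ℂ) * I) • (ContinuousLinearMap.id ℝ ℂ)) v := by
    have := (hasFDerivAt_id (𝕜 := ℝ) v).const_mul ((c : ℂ) * I)
    refine this.congr_of_eventuallyEq (Filter.Eventually.of_forall fun y => ?_)
    simp [mul_assoc]
  have h4 := h2.smul h3
  refine ⟨_, h4, ?_⟩
  have n2 : ‖((c : ℂ) * I) • (ContinuousLinearMap.id ℝ ℂ)‖ ≤ 1 := by
    rw [norm_smul]
    have a1 : ‖(c : ℂ) * I‖ ≤ 1 := by simpa using hc1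
    have a2 : ‖ContinuousLinearMap.id ℝ ℂ‖ ≤ 1 := ContinuousLinearMap.norm_id_le
    nlinarith [norm_nonneg (ContinuousLinearMap.id ℝ ℂ), norm_nonneg ((c : ℂ) * I)]
  have n3 : ‖(c : ℂ) * (I * v)‖ ≤ ‖v‖ := by
    rw [norm_mul, norm_mul, Complex.norm_I, one_mul]
    have : ‖(c:ℂ)‖ ≤ 1 := by simpa using hc1
    nlinarith [norm_nonneg v]
  refine (norm_add_le _ _).trans ?_
  rw [norm_smul (((fun y : ℝ => y⁻¹) ∘ fun v : ℂ => ‖v‖ ^ 2 + δ ^ 2) v), ContinuousLinearMap.norm_smulRight_apply,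
    norm_smul (-((‖v‖ ^ 2 + δ ^ 2) ^ 2)⁻¹)]
  have n4 : ‖(2 • innerSL ℝ v : ℂ →L[ℝ] ℝ)‖ ≤ 2 * ‖v‖ := by
    rw [two_nsmul]
    refine (norm_add_le _ _).trans ?_
    rw [innerSL_apply_norm]; linarith
  have e1 : ‖((fun y : ℝ => y⁻¹) ∘ fun v : ℂ => ‖v‖ ^ 2 + δ ^ 2) v‖ = (‖v‖ ^ 2 + δ ^ 2)⁻¹ := by
    simp only [Function.comp]; exact Real.norm_of_nonneg (by positivity)
  have e2 : ‖-((‖v‖ ^ 2 + δ ^ 2) ^ 2)⁻¹‖ = (‖v‖ ^ 2 + δ ^ 2)⁻¹ * (‖v‖ ^ 2 + δ ^ 2)⁻¹ := by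
    rw [norm_neg, Real.norm_of_nonneg (by positivity)]; field_simp
  have hle : ‖v‖ * ‖v‖ * (‖v‖ ^ 2 + δ ^ 2)⁻¹ ≤ 1 := by
    rw [← div_eq_mul_inv, div_le_one hq]; nlinarith
  set Q := (‖v‖ ^ 2 + δ ^ 2)⁻¹
  have hQ : 0 < Q := by positivity
  have e1' : ‖((fun y : ℝ => y⁻¹) ∘ fun v : ℂ => ‖v‖ ^ 2 + δ ^ 2) v‖ *
      ‖((c : ℂ) * I) • (ContinuousLinearMap.id ℝ ℂ)‖ ≤ Q * 1 := by
    rw [e1]; gcongr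
  have e2' : ‖-((‖v‖ ^ 2 + δ ^ 2) ^ 2)⁻¹‖ * ‖(2 • innerSL ℝ v : ℂ →L[ℝ] ℝ)‖ * ‖(c : ℂ) * (I * v)‖
      ≤ Q * Q * (2 * ‖v‖) * ‖v‖ := by
    rw [e2]; gcongr
  have : Q * Q * (2 * ‖v‖) * ‖v‖ ≤ 2 * Q := by nlinarith
  linarith

/-- Regularized, compactly supported kernel. -/
lemma exists_kd : ∃ C1 : ℝ, 0 ≤ C1 ∧ ∀ δ : ℝ, 0 < δ → δ ≤ 1 → ∃ k : ℂ → ℂ,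
    ContDiff ℝ (⊤ : ℕ∞) k ∧ HasCompactSupport k ∧
    (∀ x y : ℂ, ‖x‖ ≤ 1 → ‖y‖ ≤ 1 →
      ‖k (x - y) - ker x y‖ ≤ δ ^ 2 / (‖x - y‖ * (‖x - y‖ ^ 2 + δ ^ 2))) ∧
    ∀ v, ‖fderiv ℝ k v‖ ≤ C1 * (Iic (6:ℝ)).indicator (fun r => (r ^ 2 + δ ^ 2)⁻¹) ‖v‖ := by
  obtain ⟨χ, hχ, hχc, hχ1, hχ0, hχb⟩ := exists_bump (E := ℂ) 4 (by norm_num)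
  obtain ⟨B, hB⟩ := (hχc.fderiv ℝ).exists_bound_of_continuous (hχ.continuous_fderiv (by simp))
  have hB0 : 0 ≤ B := (norm_nonneg _).trans (hB 0)
  refine ⟨3 + 6 * B, by positivity, fun δ hδ hδ1 => ?_⟩
  set c : ℝ := 1 / (2 * Real.pi) with hc
  have hc0 : 0 < c := by positivity
  have hc1 : c ≤ 1 := by
    rw [hc, div_le_one (by positivity)]
    linarith [Real.pi_gt_three]
  set K : ℂ → ℂ := fun v : ℂ => (‖v‖ ^ 2 + δ ^ 2)⁻¹ • ((c : ℂ) * (I * v)) with hK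
  have hKs : ContDiff ℝ (⊤ : ℕ∞) K := by
    refine ContDiff.fun_smul ?_ ?_
    · apply ContDiff.inv
      · exact (contDiff_norm_sq ℝ).add contDiff_const
      · intro x; positivity
    · fun_prop
  refine ⟨fun v => χ v • K v, hχ.smul hKs, hχc.smul_right, ?_, ?_⟩
  · intro x y hx hy
    have hxy : ‖x - y‖ ≤ 4 := (norm_sub_le _ _).trans (by linarith)
    simp only [hχ1 _ hxy, one_smul]
    by_cases h : x - y = 0
    · simp [hK, h, ker_eq]
    have hd : 0 < ‖x - y‖ := norm_pos_iff.2 h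
    rw [ker_eq]
    simp only [hK]
    rw [Complex.real_smul, Complex.real_smul]
    have : (((‖x - y‖ ^ 2 + δ ^ 2)⁻¹ : ℝ) : ℂ) * ((c : ℂ) * (I * (x - y))) -
        ((c / ‖x - y‖ ^ 2 : ℝ) : ℂ) * (I * (x - y)) =
        ((c * ((‖x - y‖ ^ 2 + δ ^ 2)⁻¹ - (‖x - y‖ ^ 2)⁻¹) : ℝ) : ℂ) * (I * (x - y)) := by
      push_cast; ring
    rw [this, norm_mul, norm_mul, Complex.norm_I, one_mul, Complex.norm_real, Real.norm_eq_abs,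
      abs_mul, abs_of_pos hc0]
    have e : (‖x - y‖ ^ 2 + δ ^ 2)⁻¹ - (‖x - y‖ ^ 2)⁻¹ =
        - (δ ^ 2 / (‖x - y‖ * (‖x - y‖ ^ 2 + δ ^ 2)) / ‖x - y‖) := by
      field_simp; ring
    rw [e, abs_neg, abs_of_nonneg (by positivity)]
    calc _ = c * (δ ^ 2 / (‖x - y‖ * (‖x - y‖ ^ 2 + δ ^ 2))) := by field_simp
      _ ≤ 1 * (δ ^ 2 / (‖x - y‖ * (‖x - y‖ ^ 2 + δ ^ 2))) := by gcongr
      _ = _ := one_mul _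
  · intro v
    by_cases hv : ‖v‖ ≤ 6
    · rw [indicator_of_mem (mem_Iic.2 hv)]
      obtain ⟨D, hD, hDn⟩ := Kd_deriv hδ v
      have h1 : HasFDerivAt χ (fderiv ℝ χ v) v := ((hχ.differentiable (by simp)) v).hasFDerivAt
      have h2 := h1.smul hD
      have e : fderiv ℝ (fun v => χ v • K v) v = _ := h2.fderiv
      rw [e]
      refine (norm_add_le _ _).trans ?_
      rw [norm_smul, ContinuousLinearMap.norm_smulRight_apply]
      set Q := (‖v‖ ^ 2 + δ ^ 2)⁻¹ with hQdef
      have hQ : 0 < Q := by positivity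
      have n1 : ‖χ v‖ ≤ 1 := by
        rw [Real.norm_of_nonneg (hχb v).1]; exact (hχb v).2
      have n2 : ‖Q • ((c : ℂ) * (I * v))‖ ≤ Q * 6 := by
        rw [norm_smul, norm_mul, norm_mul, Complex.norm_I, one_mul, Real.norm_of_nonneg hQ.le,
          Complex.norm_real, Real.norm_of_nonneg hc0.le]
        gcongr
        nlinarith [norm_nonneg v]
      have a1 : ‖χ v‖ * ‖D‖ ≤ 1 * (3 * Q) := by gcongr
      have a2 : ‖fderiv ℝ χ v‖ * ‖Q • ((c : ℂ) * (I * v))‖ ≤ B * (Q * 6) := by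
        gcongr; exact hB v
      calc _ ≤ 1 * (3 * Q) + B * (Q * 6) := add_le_add a1 a2
        _ = _ := by ring
    · rw [indicator_of_notMem (by simpa using hv)]
      have : (fun v => χ v • K v) =ᶠ[nhds v] fun _ => 0 := by
        have hmem : {u : ℂ | 5 < ‖u‖} ∈ nhds v :=
          (isOpen_lt continuous_const continuous_norm).mem_nhds (by
            show 5 < ‖v‖
            linarith [not_le.1 hv])
        filter_upwards [hmem] with u hu
        have hu' : 5 < ‖u‖ := hu
        rw [hχ0 u (by linarith), zero_smul]
      rw [this.fderiv_eq]; simp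

end EulerOpt

namespace EulerOpt
open Complex ComplexConjugate Set

noncomputable def VV (k : ℂ → ℂ) (w : ℂ → ℝ) (x : ℂ) : ℂ := ∫ y, w y • k (x - y)

lemma VV_conv (k : ℂ → ℂ) (w : ℂ → ℝ) :
    VV k w = MeasureTheory.convolution w k (ContinuousLinearMap.lsmul ℝ ℝ) volume := by
  ext x; simp [VV, convolution]

lemma VV_smooth {k : ℂ → ℂ} {w : ℂ → ℝ} (hk : ContDiff ℝ (⊤ : ℕ∞) k) (hkc : HasCompactSupport k)
    (hw : Integrable w) : ContDiff ℝ (⊤ : ℕ∞) (VV k w) := by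
  rw [VV_conv]
  exact hkc.contDiff_convolution_right _ hw.locallyIntegrable hk

lemma VV_fderiv {k : ℂ → ℂ} {w : ℂ → ℝ} (hk : ContDiff ℝ (⊤ : ℕ∞) k) (hkc : HasCompactSupport k)
    (hw : Integrable w) (x : ℂ) : fderiv ℝ (VV k w) x = ∫ y, w y • fderiv ℝ k (x - y) := by
  rw [VV_conv, (hkc.hasFDerivAt_convolution_right (ContinuousLinearMap.lsmul ℝ ℝ)
    hw.locallyIntegrable (hk.of_le (by exact_mod_cast le_top)) x).fderiv]
  simp only [convolution]
  congr 1

/-- Vector-valued bound -/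
lemma Bd.vec_int {E : Type*} [NormedAddCommGroup E] [NormedSpace ℝ E] {w : ℂ → ℝ} {M : ℝ}
    (h : Bd w M) {g : ℂ → E} {B : ℝ} (hB : 0 ≤ B)
    (hg : AEStronglyMeasurable g volume) (hb : ∀ x, ‖g x‖ ≤ B) :
    Integrable (fun x => w x • g x) ∧ ‖∫ x, w x • g x‖ ≤ M * B := by
  have pt : ∀ x, ‖w x • g x‖ ≤ |w x| * B := by
    intro x
    rw [norm_smul, Real.norm_eq_abs]
    exact mul_le_mul_of_nonneg_left (hb x) (abs_nonneg _)
  have i0 : Integrable (fun x => |w x| * B) := h.int.abs.mul_const B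
  have i1 : Integrable (fun x => w x • g x) :=
    i0.mono' (h.int.aestronglyMeasurable.smul hg) (Filter.Eventually.of_forall pt)
  refine ⟨i1, (norm_integral_le_integral_norm _).trans ?_⟩
  calc _ ≤ ∫ x, |w x| * B := integral_mono i1.norm i0 pt
    _ = (∫ x, |w x|) * B := integral_mul_const _ _
    _ ≤ _ := mul_le_mul_of_nonneg_right h.l1 hB

/-- everything about the regularized velocity -/
lemma exists_reg : ∃ C1 : ℝ, 0 ≤ C1 ∧ ∀ δ : ℝ, 0 < δ → δ ≤ 1 → ∃ (k : ℂ → ℂ) (C : ℝ), 0 ≤ C ∧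
    ContDiff ℝ (⊤ : ℕ∞) k ∧ HasCompactSupport k ∧ (∀ x, ‖fderiv ℝ k x‖ ≤ C) ∧ (∀ x, ‖k x‖ ≤ C) ∧
    ∀ (w : ℂ → ℝ) (M : ℝ), Bd w M →
      ContDiff ℝ (⊤ : ℕ∞) (VV k w) ∧ (∀ x, ‖VV k w x‖ ≤ M * C) ∧
      (∀ x, ‖fderiv ℝ (VV k w) x‖ ≤ C1 * (M * (28 + 7 * Real.log (1 / δ)))) ∧
      (∀ x y, ‖fderiv ℝ (VV k w) x - fderiv ℝ (VV k w) y‖ ≤ M * C * ‖x - y‖) ∧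
      ((∀ x, w x ≠ 0 → ‖x‖ ≤ 1) → ∀ x, ‖x‖ ≤ 1 → ‖VV k w x - vel w x‖ ≤ M * (10 * δ)) := by
  obtain ⟨C1, hC1, H⟩ := exists_kd
  refine ⟨C1, hC1, fun δ hδ hδ1 => ?_⟩
  obtain ⟨k, hk, hkc, hk1, hk2⟩ := H δ hδ hδ1
  have hdc : Continuous (fderiv ℝ k) := hk.continuous_fderiv (by simp)
  obtain ⟨Ca, hCa⟩ := hkc.exists_bound_of_continuous hk.continuous
  obtain ⟨Cb, hCb⟩ := (hkc.fderiv ℝ).exists_bound_of_continuous hdc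
  obtain ⟨Cl, hCl⟩ := ContDiff.lipschitzWith_of_hasCompactSupport (hkc.fderiv ℝ)
    (hk.fderiv_right (m := 1) (by norm_cast)) one_ne_zero
  have hCa0 : 0 ≤ Ca := (norm_nonneg _).trans (hCa 0)
  have hCb0 : 0 ≤ Cb := (norm_nonneg _).trans (hCb 0)
  set C : ℝ := Ca + Cb + Cl with hC
  have hC0 : 0 ≤ C := by positivity
  have hCla : (0:ℝ) ≤ Cl := Cl.2
  refine ⟨k, C, hC0, hk, hkc, fun x => (hCb x).trans (by linarith),
    fun x => (hCa x).trans (by linarith), fun w M hw => ?_⟩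
  have hM := hw.nonneg
  have meas : ∀ x, AEStronglyMeasurable (fun y => fderiv ℝ k (x - y)) volume := fun x =>
    (hdc.comp (continuous_const.sub continuous_id)).aestronglyMeasurable
  refine ⟨VV_smooth hk hkc hw.int, fun x => ?_, fun x => ?_, fun x y => ?_, fun hs x hx => ?_⟩
  · exact (hw.vec_int hC0 (hk.continuous.comp (continuous_const.sub continuous_id)).aestronglyMeasurable
      (fun y => (hCa _).trans (by linarith))).2
  · rw [VV_fderiv hk hkc hw.int]
    obtain ⟨i1, b1⟩ := log_pot hδ hδ1 hw.int hw.li x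
    refine (norm_integral_le_integral_norm _).trans ?_
    refine le_trans ?_ (mul_le_mul_of_nonneg_left b1 hC1)
    rw [← integral_const_mul]
    apply integral_mono_of_nonneg (Filter.Eventually.of_forall fun y => norm_nonneg _)
    · have := i1.norm.const_mul C1
      refine this.congr (Filter.Eventually.of_forall fun y => ?_)
      simp only [norm_mul, Real.norm_eq_abs]
      rw [abs_of_nonneg (a := indicator _ _ _)]
      exact indicator_nonneg (fun r _ => by positivity) _
    · refine Filter.Eventually.of_forall fun y => ?_
      simp only [norm_smul, Real.norm_eq_abs]
      have := mul_le_mul_of_nonneg_left (hk2 (x - y)) (abs_nonneg (w y))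
      linarith
  · rw [VV_fderiv hk hkc hw.int, VV_fderiv hk hkc hw.int]
    have i1 := (hw.vec_int hC0 (meas x) (fun y => (hCb _).trans (by linarith))).1
    have i2 := (hw.vec_int hC0 (meas y) (fun y => (hCb _).trans (by linarith))).1
    rw [← integral_sub i1 i2]
    have := (hw.vec_int (g := fun u => fderiv ℝ k (x - u) - fderiv ℝ k (y - u)) (B := C * ‖x - y‖)
      (by positivity) ((meas x).sub (meas y)) (fun u => by
        have := hCl.dist_le_mul (x - u) (y - u)
        rw [dist_eq_norm, dist_eq_norm, sub_sub_sub_cancel_right] at this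
        refine this.trans ?_
        gcongr; linarith)).2
    simp only [smul_sub] at this
    rw [mul_assoc]; exact this
  · have i1 : Integrable (fun y => w y • k (x - y)) := (hw.vec_int hC0
      (hk.continuous.comp (continuous_const.sub continuous_id)).aestronglyMeasurable
      (fun y => (hCa (x - y)).trans (by linarith))).1
    have i2 := (ker_int hw.int hw.li hw.l1 x).1
    unfold VV vel
    have e : (∫ y, w y • k (x - y)) - (∫ y, w y • ker x y) = ∫ y, w y • (k (x - y) - ker x y) := by
      rw [← integral_sub i1 i2]; congr 1; ext y; rw [smul_sub]
    rw [e]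
    obtain ⟨i3, b3⟩ := delta_pot hδ hw.int hw.li x
    refine (norm_integral_le_integral_norm _).trans (le_trans ?_ b3)
    apply integral_mono_of_nonneg (Filter.Eventually.of_forall fun y => norm_nonneg _)
    · refine i3.norm.congr (Filter.Eventually.of_forall fun y => ?_)
      simp only [norm_mul, Real.norm_eq_abs]
      rw [abs_of_nonneg (a := _ / _) (by positivity)]
    · refine Filter.Eventually.of_forall fun y => ?_
      simp only [norm_smul, Real.norm_eq_abs]
      by_cases hy : w y = 0
      · simp [hy]
      · exact mul_le_mul_of_nonneg_left (hk1 x y hx (hs y hy)) (abs_nonneg _)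

end EulerOpt

namespace EulerOpt
open Complex ComplexConjugate Set

structure RegK (k : ℂ → ℂ) (C L δ M : ℝ) : Prop where
  C0 : 0 ≤ C
  L0 : 0 ≤ L
  δ0 : 0 ≤ δ
  smooth : ContDiff ℝ (⊤ : ℕ∞) k
  cpt : HasCompactSupport k
  dk : ∀ x, ‖fderiv ℝ k x‖ ≤ C
  bk : ∀ x, ‖k x‖ ≤ C
  vs : ∀ w, Bd w M → ContDiff ℝ (⊤ : ℕ∞) (VV k w)
  vb : ∀ w, Bd w M → ∀ x, ‖VV k w x‖ ≤ M * C
  vd : ∀ w, Bd w M → ∀ x, ‖fderiv ℝ (VV k w) x‖ ≤ L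
  vl : ∀ w, Bd w M → ∀ x y, ‖fderiv ℝ (VV k w) x - fderiv ℝ (VV k w) y‖ ≤ M * C * ‖x - y‖
  va : ∀ w, Bd w M → (∀ x, w x ≠ 0 → ‖x‖ ≤ 1) → ∀ x, ‖x‖ ≤ 1 →
    ‖VV k w x - vel w x‖ ≤ M * (10 * δ)

structure Reg (φ : ℂ → ℝ) (Λ Γ : ℝ) : Prop where
  Λ0 : 0 ≤ Λ
  Γ0 : 0 ≤ Γ
  smooth : ContDiff ℝ (⊤ : ℕ∞) φ
  bd : ∀ x, |φ x| ≤ 1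
  d1 : ∀ x, ‖fderiv ℝ φ x‖ ≤ Λ
  d2 : ∀ x y, ‖fderiv ℝ φ x - fderiv ℝ φ y‖ ≤ Γ * ‖x - y‖

lemma Fam.diff {w : ℝ → ℂ → ℝ} {t0 M : ℝ} {G : Set ℝ} (hF : Fam w t0 M G) {s t : ℝ}
    (hs : s ∈ G) (ht : t ∈ G) {ψ : ℂ → ℝ} (hψ : ContDiff ℝ (⊤ : ℕ∞) ψ) :
    (∫ x, w t x * ψ x) - (∫ x, w s x * ψ x) = ∫ r in s..t, FF (w r) ψ := by
  have hsub : ∀ t ∈ G, IntervalIntegrable (fun s => FF (w s) ψ) volume 0 t := by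
    intro t ht
    apply (hF.ii ψ hψ).mono_set
    rw [uIcc_of_le (hF.sub ht).1, uIcc_of_le hF.pos.le]
    exact Icc_subset_Icc_right (hF.sub ht).2.le
  rw [hF.eq ψ hψ t ht, hF.eq ψ hψ s hs, ← intervalIntegral.integral_interval_sub_left
    (hsub t ht) (hsub s hs)]
  ring

lemma Fam.lipA {w : ℝ → ℂ → ℝ} {t0 M : ℝ} {G : Set ℝ} (hF : Fam w t0 M G) {s t : ℝ}
    (hs : s ∈ G) (ht : t ∈ G) (hst : s ≤ t) {ψ : ℂ → ℝ} (hψ : ContDiff ℝ (⊤ : ℕ∞) ψ)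
    {Λ : ℝ} (hΛ : 0 ≤ Λ) (hd : ∀ x, ‖fderiv ℝ ψ x‖ ≤ Λ) :
    |(∫ x, w t x * ψ x) - (∫ x, w s x * ψ x)| ≤ M * (Λ * (2 * M)) * (t - s) := by
  rw [hF.diff hs ht hψ]
  have := intervalIntegral.norm_integral_le_of_norm_le_const (a := s) (b := t)
    (C := M * (Λ * (2 * M))) (f := fun r => FF (w r) ψ) (fun r hr =>
      ((hF.bd r).lin_int hΛ (hψ.continuous_fderiv (by simp)) (fun x _ => hd x)).2)
  rwa [abs_of_nonneg (sub_nonneg.2 hst)] at this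

lemma Fam.vdiff {w : ℝ → ℂ → ℝ} {t0 M : ℝ} {G : Set ℝ} (hF : Fam w t0 M G) {s t : ℝ}
    (hs : s ∈ G) (ht : t ∈ G) (hst : s ≤ t) {k : ℂ → ℂ} {C L δ : ℝ} (hk : RegK k C L δ M) (x : ℂ) :
    ‖VV k (w t) x - VV k (w s) x‖ ≤ 4 * M ^ 2 * C * (t - s) := by
  have key : ∀ T : ℂ →L[ℝ] ℝ, (∀ z, |T z| ≤ ‖z‖) →
      |T (VV k (w t) x - VV k (w s) x)| ≤ M * (C * (2 * M)) * (t - s) := by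
    intro T hT
    have hc : Continuous fun y => k (x - y) := hk.smooth.continuous.comp (continuous_const.sub continuous_id)
    have e : ∀ r, T (VV k (w r) x) = ∫ y, w r y * T (k (x - y)) := by
      intro r
      have i1 := ((hF.bd r).vec_int (g := fun y => k (x - y)) hk.C0 hc.aestronglyMeasurable
        (fun y => hk.bk _)).1
      unfold VV
      rw [← T.integral_comp_comm i1]
      congr 1; ext y; exact map_smul T (w r y) (k (x - y))
    rw [map_sub, e, e]
    have hsm : ContDiff ℝ (⊤ : ℕ∞) (fun y => T (k (x - y))) :=
      T.contDiff.comp (hk.smooth.comp (contDiff_const.sub contDiff_id))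
    apply hF.lipA hs ht hst hsm hk.C0
    intro y
    have h1 : HasFDerivAt (fun y => x - y) (-(ContinuousLinearMap.id ℝ ℂ)) y :=
      (hasFDerivAt_id (𝕜 := ℝ) y).const_sub x
    have h2 : HasFDerivAt k (fderiv ℝ k (x - y)) (x - y) :=
      ((hk.smooth.differentiable (by simp)) _).hasFDerivAt
    have h3 : HasFDerivAt (fun y => T (k (x - y)))
      (T.comp ((fderiv ℝ k (x - y)).comp (-(ContinuousLinearMap.id ℝ ℂ)))) y :=
      T.hasFDerivAt.comp y (h2.comp y h1)
    rw [h3.fderiv]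
    apply ContinuousLinearMap.opNorm_le_bound _ hk.C0
    intro z
    simp only [ContinuousLinearMap.comp_apply, ContinuousLinearMap.neg_apply, Real.norm_eq_abs]
    refine (hT _).trans (((fderiv ℝ k (x - y)).le_opNorm _).trans ?_)
    rw [norm_neg]
    exact mul_le_mul_of_nonneg_right (hk.dk _) (norm_nonneg _)
  have h1 := key reCLM (fun z => abs_re_le_norm z)
  have h2 := key imCLM (fun z => abs_im_le_norm z)
  refine (Complex.norm_le_abs_re_add_abs_im _).trans ?_
  simp only [reCLM_apply, imCLM_apply] at h1 h2
  nlinarith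

lemma Reg.comp {φ : ℂ → ℝ} {Λ Γ : ℝ} (hφ : Reg φ Λ Γ) {k : ℂ → ℂ} {C L δ M : ℝ}
    (hk : RegK k C L δ M) {w : ℂ → ℝ} (hw : Bd w M) {h : ℝ} (hh : 0 ≤ h) :
    Reg (fun x => φ (x + (h : ℝ) • VV k w x)) (Λ * (1 + h * L))
      (Γ * (1 + h * L) ^ 2 + Λ * (h * (M * C))) := by
  have hM := hw.nonneg
  have := hk.C0; have := hk.L0; have := hφ.Λ0; have := hφ.Γ0
  have vs := hk.vs w hw
  set V := VV k w
  have hX : ∀ x, HasFDerivAt (fun x => x + (h : ℝ) • V x)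
      (ContinuousLinearMap.id ℝ ℂ + h • fderiv ℝ V x) x := fun x =>
    (hasFDerivAt_id (𝕜 := ℝ) x).add ((((vs.differentiable (by simp)) x).hasFDerivAt).const_smul h)
  have hD : ∀ x, fderiv ℝ (fun x => φ (x + (h : ℝ) • V x)) x =
      (fderiv ℝ φ (x + h • V x)).comp (ContinuousLinearMap.id ℝ ℂ + h • fderiv ℝ V x) := fun x =>
    ((((hφ.smooth.differentiable (by simp)) _).hasFDerivAt).comp x (hX x)).fderiv
  have hn : ∀ x, ‖ContinuousLinearMap.id ℝ ℂ + h • fderiv ℝ V x‖ ≤ 1 + h * L := by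
    intro x
    refine (norm_add_le _ _).trans (add_le_add ContinuousLinearMap.norm_id_le ?_)
    rw [norm_smul, Real.norm_of_nonneg hh]
    exact mul_le_mul_of_nonneg_left (hk.vd w hw x) hh
  have hXl : ∀ x y, ‖(x + h • V x) - (y + h • V y)‖ ≤ (1 + h * L) * ‖x - y‖ := by
    intro x y
    apply Convex.norm_image_sub_le_of_norm_hasFDerivWithin_le (f := fun x => x + (h : ℝ) • V x)
      (s := univ) (fun z _ => (hX z).hasFDerivWithinAt) (fun z _ => hn z) convex_univ
      (mem_univ _) (mem_univ _)
  refine ⟨by positivity, by positivity, ?_, fun x => hφ.bd _, fun x => ?_, fun x y => ?_⟩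
  · exact hφ.smooth.comp (contDiff_id.add ((contDiff_const (c := h)).fun_smul vs))
  · rw [hD]
    refine (ContinuousLinearMap.opNorm_comp_le _ _).trans ?_
    exact mul_le_mul (hφ.d1 _) (hn x) (norm_nonneg _) hφ.Λ0
  · rw [hD, hD]
    set Ax := ContinuousLinearMap.id ℝ ℂ + h • fderiv ℝ V x with hAx
    set Ay := ContinuousLinearMap.id ℝ ℂ + h • fderiv ℝ V y with hAy
    have e : (fderiv ℝ φ (x + h • V x)).comp Ax - (fderiv ℝ φ (y + h • V y)).comp Ay =
        (fderiv ℝ φ (x + h • V x) - fderiv ℝ φ (y + h • V y)).comp Ax +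
        (fderiv ℝ φ (y + h • V y)).comp (Ax - Ay) := by
      ext z; simp
    have e2 : Ax - Ay = h • (fderiv ℝ V x - fderiv ℝ V y) := by
      rw [hAx, hAy, smul_sub]; abel
    have n2 : ‖Ax - Ay‖ ≤ h * (M * C * ‖x - y‖) := by
      rw [e2, norm_smul, Real.norm_of_nonneg hh]
      exact mul_le_mul_of_nonneg_left (hk.vl w hw x y) hh
    have n1 : ‖fderiv ℝ φ (x + h • V x) - fderiv ℝ φ (y + h • V y)‖ ≤ Γ * ((1 + h * L) * ‖x - y‖) :=
      (hφ.d2 _ _).trans (mul_le_mul_of_nonneg_left (hXl x y) hφ.Γ0)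
    rw [e]
    refine (norm_add_le _ _).trans ?_
    have m1 := (ContinuousLinearMap.opNorm_comp_le
      (fderiv ℝ φ (x + h • V x) - fderiv ℝ φ (y + h • V y)) Ax).trans
      (mul_le_mul n1 (hn x) (norm_nonneg _) (by positivity))
    have m2 := (ContinuousLinearMap.opNorm_comp_le (fderiv ℝ φ (y + h • V y)) (Ax - Ay)).trans
      (mul_le_mul (hφ.d1 _) n2 (norm_nonneg _) hφ.Λ0)
    calc _ ≤ _ := add_le_add m1 m2
      _ = _ := by ring

lemma Fam.step {w : ℝ → ℂ → ℝ} {t0 M : ℝ} {G : Set ℝ} (hF : Fam w t0 M G) {s t : ℝ}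
    (hs : s ∈ G) (ht : t ∈ G) (hst : s ≤ t) {k : ℂ → ℂ} {C L δ : ℝ} (hk : RegK k C L δ M)
    {φ : ℂ → ℝ} {Λ Γ : ℝ} (hφ : Reg φ Λ Γ) :
    |(∫ x, w t x * φ x) - ∫ x, w s x * φ (x + (t - s) • VV k (w s) x)| ≤
      (t - s) * (10 * M ^ 2 * δ * Λ) +
      (t - s) ^ 2 * ((4 * M ^ 3 * C + 2 * M ^ 2 * (M * C + L) + M ^ 3 * C ^ 2) * (Λ + Γ)) := by
  have hM := (hF.bd 0).nonneg
  have hC := hk.C0; have hL := hk.L0; have hΛ := hφ.Λ0; have hΓ := hφ.Γ0; have hδ := hk.δ0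
  set h := t - s with hh
  have hh0 : 0 ≤ h := sub_nonneg.2 hst
  have vs := hk.vs (w s) (hF.bd s)
  have dφ : Continuous (fderiv ℝ φ) := hφ.smooth.continuous_fderiv (by simp)
  set V := VV k (w s) with hV
  set ψ : ℂ → ℝ := fun x => fderiv ℝ φ x (V x) with hψ
  have hψs : ContDiff ℝ (⊤ : ℕ∞) ψ := by
    have : ContDiff ℝ (⊤ : ℕ∞) (fderiv ℝ φ) := hφ.smooth.fderiv_right (by simp)
    exact this.clm_apply vs
  have hψd : ∀ x, ‖fderiv ℝ ψ x‖ ≤ Γ * (M * C) + Λ * L := by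
    intro x
    have h1 : HasFDerivAt (fderiv ℝ φ) (fderiv ℝ (fderiv ℝ φ) x) x := by
      have : ContDiff ℝ (⊤ : ℕ∞) (fderiv ℝ φ) := hφ.smooth.fderiv_right (by simp)
      exact ((this.differentiable (by simp)) x).hasFDerivAt
    have h2 : HasFDerivAt V (fderiv ℝ V x) x := ((vs.differentiable (by simp)) x).hasFDerivAt
    have n1 : ‖fderiv ℝ (fderiv ℝ φ) x‖ ≤ Γ := by
      apply h1.le_of_lip' hΓ
      exact Filter.Eventually.of_forall fun y => hφ.d2 y x
    rw [(h1.clm_apply h2).fderiv]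
    refine (norm_add_le _ _).trans ?_
    rw [add_comm]
    apply add_le_add
    · apply ContinuousLinearMap.opNorm_le_bound _ (by positivity)
      intro z
      simp only [ContinuousLinearMap.flip_apply]
      refine ((fderiv ℝ (fderiv ℝ φ) x z).le_opNorm _).trans ?_
      have a1 : ‖fderiv ℝ (fderiv ℝ φ) x z‖ ≤ Γ * ‖z‖ :=
        ((fderiv ℝ (fderiv ℝ φ) x).le_opNorm z).trans (by gcongr)
      calc _ ≤ (Γ * ‖z‖) * (M * C) := by
            gcongr
            exact hk.vb _ (hF.bd s) x
        _ = _ := by ring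
    · exact (ContinuousLinearMap.opNorm_comp_le _ _).trans
        (mul_le_mul (hφ.d1 x) (hk.vd _ (hF.bd s) x) (norm_nonneg _) hΛ)
  have hψb : ∀ x, |ψ x| ≤ Λ * (M * C) := fun x =>
    ((fderiv ℝ φ x).le_opNorm _).trans (mul_le_mul (hφ.d1 x) (hk.vb _ (hF.bd s) x) (norm_nonneg _) hΛ)
  -- pointwise in time
  set E := M * (Λ * (M * (10 * δ)) + Λ * (4 * M ^ 2 * C * h)) +
    M * ((Γ * (M * C) + Λ * L) * (2 * M)) * h with hE
  have hr : ∀ r ∈ G, s ≤ r → r ≤ t → |FF (w r) φ - ∫ x, w s x * ψ x| ≤ E := by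
    intro r hrG hsr hrt
    have i1 : Integrable (fun x => w r x * fderiv ℝ φ x (vel (w r) x)) :=
      ((hF.bd r).lin_int hΛ dφ (fun x _ => hφ.d1 x)).1
    have i2 : Integrable (fun x => w r x * ψ x) :=
      ((hF.bd r).mul_int (by positivity) hψs.continuous.aestronglyMeasurable (fun x _ => hψb x)).1
    have a1 : |FF (w r) φ - ∫ x, w r x * ψ x| ≤
        M * (Λ * (M * (10 * δ)) + Λ * (4 * M ^ 2 * C * h)) := by
      unfold FF
      rw [← integral_sub i1 i2]
      have := ((hF.bd r).mul_int (ψ := fun x => fderiv ℝ φ x (vel (w r) x) - ψ x)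
        (B := Λ * (M * (10 * δ)) + Λ * (4 * M ^ 2 * C * h)) (by positivity) (by
          refine AEStronglyMeasurable.sub ?_ hψs.continuous.aestronglyMeasurable
          exact isBoundedBilinearMap_apply.continuous.comp_aestronglyMeasurable
            (dφ.aestronglyMeasurable.prodMk (hF.bd r).vel_meas)) (fun x hx => ?_)).2
      · simpa only [mul_sub] using this
      · have hrI : r ∈ Icc 0 t0 := Ico_subset_Icc_self (hF.sub hrG)
        have hx1 := hF.supp r hrI x hx
        have b1 := hk.va _ (hF.bd r) (hF.supp r hrI) x hx1
        have b2 := hF.vdiff hs hrG hsr hk x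
        have b3 : ‖vel (w r) x - V x‖ ≤ M * (10 * δ) + 4 * M ^ 2 * C * h := by
          have : vel (w r) x - V x = -(VV k (w r) x - vel (w r) x) + (VV k (w r) x - V x) := by ring
          rw [this]
          refine (norm_add_le _ _).trans (add_le_add (by rwa [norm_neg]) (b2.trans ?_))
          apply mul_le_mul_of_nonneg_left _ (by positivity)
          rw [hh]; linarith
        simp only [hψ]
        rw [← map_sub]
        refine ((fderiv ℝ φ x).le_opNorm _).trans ?_
        rw [← mul_add]
        exact mul_le_mul (hφ.d1 x) b3 (norm_nonneg _) hΛ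
    have a2 := hF.lipA hs hrG hsr hψs (by positivity) hψd
    have a2' : |(∫ x, w r x * ψ x) - ∫ x, w s x * ψ x| ≤
        M * ((Γ * (M * C) + Λ * L) * (2 * M)) * h := by
      refine a2.trans (mul_le_mul_of_nonneg_left ?_ (by positivity))
      rw [hh]; linarith
    have := abs_add_le (FF (w r) φ - ∫ x, w r x * ψ x) ((∫ x, w r x * ψ x) - ∫ x, w s x * ψ x)
    rw [sub_add_sub_cancel] at this
    linarith
  have hs0 := (hF.sub hs).1
  have htt := (hF.sub ht).2
  have hint : IntervalIntegrable (fun r => FF (w r) φ) volume s t := by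
    apply (hF.ii φ hφ.smooth).mono_set
    rw [uIcc_of_le hst, uIcc_of_le hF.pos.le]
    exact Icc_subset_Icc hs0 htt.le
  have b1 : |(∫ x, w t x * φ x) - (∫ x, w s x * φ x) - h * ∫ x, w s x * ψ x| ≤ E * h := by
    rw [hF.diff hs ht hφ.smooth]
    have e : h * (∫ x, w s x * ψ x) = ∫ r in s..t, (∫ x, w s x * ψ x) := by simp [hh]
    rw [e, ← intervalIntegral.integral_sub hint (by simp)]
    have := intervalIntegral.norm_integral_le_of_norm_le_const_ae (a := s) (b := t)
      (C := E) (f := fun r => FF (w r) φ - ∫ x, w s x * ψ x) (by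
        filter_upwards [hF.ae] with r hrG hrm
        rw [uIoc_of_le hst] at hrm
        exact hr r (hrG ⟨lt_of_le_of_lt hs0 hrm.1, lt_of_le_of_lt hrm.2 htt⟩) hrm.1.le hrm.2)
    rwa [abs_of_nonneg hh0] at this
  have j1 := ((hF.bd s).mul_int zero_le_one hφ.smooth.continuous.aestronglyMeasurable
    (fun x _ => hφ.bd x)).1
  have hcs : ContDiff ℝ (⊤ : ℕ∞) (fun x => φ (x + h • V x)) :=
    (hφ.comp hk (hF.bd s) hh0).smooth
  have j2 := ((hF.bd s).mul_int (ψ := fun x => φ (x + h • V x)) zero_le_one hcs.continuous.aestronglyMeasurable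
    (fun x _ => hφ.bd _)).1
  have j3 : Integrable (fun x => w s x * ψ x) :=
    ((hF.bd s).mul_int (by positivity) hψs.continuous.aestronglyMeasurable (fun x _ => hψb x)).1
  have b2 : |(∫ x, w s x * φ (x + h • V x)) - (∫ x, w s x * φ x) - h * ∫ x, w s x * ψ x| ≤
      M * (Γ * (h * (M * C)) * (h * (M * C))) := by
    have j21 : Integrable (fun x => w s x * φ (x + h • V x) - w s x * φ x) := j2.sub j1
    rw [← integral_const_mul, ← integral_sub j2 j1, ← integral_sub j21 (j3.const_mul h)]
    have := ((hF.bd s).mul_int (ψ := fun x => φ (x + h • V x) - φ x - h * ψ x)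
      (B := Γ * (h * (M * C)) * (h * (M * C))) (by positivity)
      ((hcs.continuous.sub hφ.smooth.continuous).sub
        (continuous_const.mul hψs.continuous)).aestronglyMeasurable (fun x _ => ?_)).2
    · refine le_trans (le_of_eq ?_) this
      congr 2; ext x; ring
    · have hvb : ‖h • V x‖ ≤ h * (M * C) := by
        rw [norm_smul, Real.norm_of_nonneg hh0]
        exact mul_le_mul_of_nonneg_left (hk.vb _ (hF.bd s) x) hh0
      have := Convex.norm_image_sub_le_of_norm_fderiv_le' (𝕜 := ℝ) (f := φ)
        (s := Metric.closedBall x (h * (M * C))) (φ := fderiv ℝ φ x) (C := Γ * (h * (M * C)))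
        (x := x) (y := x + h • V x)
        (fun z _ => (hφ.smooth.differentiable (by simp)) z) (fun z hz => ?_)
        (convex_closedBall _ _) (by simp; positivity) (by simpa using hvb)
      · have e : φ (x + h • V x) - φ x - h * ψ x =
            φ (x + h • V x) - φ x - fderiv ℝ φ x (x + h • V x - x) := by
          rw [add_sub_cancel_left, map_smul]; rfl
        rw [e]
        refine this.trans ?_
        rw [add_sub_cancel_left]
        exact mul_le_mul_of_nonneg_left hvb (by positivity)
      · refine (hφ.d2 z x).trans (mul_le_mul_of_nonneg_left ?_ hΓ)
        rw [← dist_eq_norm]; exact hz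
  have b3 : |(∫ x, w t x * φ x) - ∫ x, w s x * φ (x + h • V x)| ≤ E * h +
      M * (Γ * (h * (M * C)) * (h * (M * C))) := by
    rw [abs_le] at b1 b2 ⊢
    constructor <;> linarith [b1.1, b1.2, b2.1, b2.2]
  refine b3.trans ?_
  have r1 : 0 ≤ h ^ 2 * (4 * M ^ 3 * C * Γ + 2 * M ^ 2 * (M * C) * Λ + 2 * M ^ 2 * L * Γ +
    M ^ 3 * C ^ 2 * Λ) := by positivity
  rw [hE]
  nlinarith

end EulerOpt

namespace EulerOpt
open Complex ComplexConjugate Set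

lemma Bd.pair_le {w : ℂ → ℝ} {M : ℝ} (hw : Bd w M) {φ : ℂ → ℝ} (hφ : Continuous φ)
    (hb : ∀ x, |φ x| ≤ 1) : |∫ x, w x * φ x| ≤ ∫ x, |w x| := by
  have i1 := (hw.mul_int zero_le_one hφ.aestronglyMeasurable (fun x _ => hb x)).1
  refine abs_integral_le_integral_abs.trans (integral_mono i1.abs hw.int.abs fun x => ?_)
  simp only [abs_mul]
  exact mul_le_of_le_one_right (abs_nonneg _) (hb x)

lemma exists_good {P : ℝ → Prop} (hP : ∀ᵐ r ∂(volume : Measure ℝ), P r) {a b : ℝ} (hab : a < b) :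
    ∃ r, a < r ∧ r < b ∧ P r := by
  by_contra hcon
  push Not at hcon
  have : volume (Ioo a b) ≤ 0 := by
    rw [← (ae_iff.1 hP)]
    exact measure_mono fun r hr => hcon r hr.1 hr.2
  rw [Real.volume_Ioo] at this
  have := ENNReal.ofReal_eq_zero.1 (le_antisymm this (by simp))
  linarith

lemma Fam.iter {w : ℝ → ℂ → ℝ} {t0 M : ℝ} {G : Set ℝ} (hF : Fam w t0 M G)
    {k : ℂ → ℂ} {C L δ : ℝ} (hk : RegK k C L δ M) {h : ℝ} (hh : 0 < h) (hh1 : h ≤ 1)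
    {A : ℝ} (hA : A = 4 * M ^ 3 * C + 2 * M ^ 2 * (M * C + L) + M ^ 3 * C ^ 2) (n : ℕ) :
    ∀ s ∈ G, ∀ t ∈ G, s ≤ t → t - s < (n + 1) * h → ∀ φ Λ Γ, Reg φ Λ Γ →
    |∫ x, w t x * φ x| ≤ (∫ x, |w s x|) + (t - s) * Real.exp (L * (t - s)) * (10 * M ^ 2 * δ * Λ)
      + (t - s) * h * Real.exp ((3 * L + L ^ 2 + M * C) * (t - s)) * (A * (Λ + Γ)) := by
  have hM := (hF.bd 0).nonneg
  have hC := hk.C0; have hL := hk.L0; have hδ := hk.δ0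
  have hA0 : 0 ≤ A := by rw [hA]; positivity
  induction n with
  | zero =>
    intro s hs t ht hst htn φ Λ Γ hφ
    have hΛ := hφ.Λ0; have hΓ := hφ.Γ0
    have hd : 0 ≤ t - s := sub_nonneg.2 hst
    have h1 := hF.step hs ht hst hk hφ
    rw [← hA] at h1
    have hc := hφ.comp hk (hF.bd s) hd
    have h2 := (hF.bd s).pair_le hc.smooth.continuous hc.bd
    have h3 : |∫ x, w t x * φ x| ≤ (∫ x, |w s x|) + ((t - s) * (10 * M ^ 2 * δ * Λ) +
        (t - s) ^ 2 * (A * (Λ + Γ))) := by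
      have := abs_sub_abs_le_abs_sub (∫ x, w t x * φ x) (∫ x, w s x * φ (x + (t - s) • VV k (w s) x))
      linarith
    have e1 : 1 ≤ Real.exp (L * (t - s)) := Real.one_le_exp (by positivity)
    have e2 : 1 ≤ Real.exp ((3 * L + L ^ 2 + M * C) * (t - s)) := Real.one_le_exp (by positivity)
    have hth : t - s ≤ h := by
      have : ((0 : ℕ) : ℝ) = 0 := by simp
      rw [this] at htn; linarith
    have f1 : (t - s) * (10 * M ^ 2 * δ * Λ) ≤
        (t - s) * Real.exp (L * (t - s)) * (10 * M ^ 2 * δ * Λ) :=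
      mul_le_mul_of_nonneg_right (le_mul_of_one_le_right hd e1) (by positivity)
    have f2 : (t - s) ^ 2 * (A * (Λ + Γ)) ≤
      (t - s) * h * Real.exp ((3 * L + L ^ 2 + M * C) * (t - s)) * (A * (Λ + Γ)) := by
      apply mul_le_mul_of_nonneg_right _ (by positivity)
      calc (t - s) ^ 2 = (t - s) * (t - s) := by ring
        _ ≤ (t - s) * h := by gcongr
        _ ≤ _ := le_mul_of_one_le_right (by positivity) e2
    linarith
  | succ n ih =>
    intro s hs t ht hst htn φ Λ Γ hφ
    have hΛ := hφ.Λ0; have hΓ := hφ.Γ0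
    by_cases hlt : t - s < (n + 1) * h
    · exact ih s hs t ht hst hlt φ Λ Γ hφ
    push Not at hlt
    push_cast at htn
    obtain ⟨r, hr1, hr2, hr3⟩ := exists_good hF.ae (a := t - h) (b := s + (n + 1) * h) (by linarith)
    have hnh : 0 ≤ n * h := by positivity
    have hsr : s ≤ r := by linarith
    have hrt : r ≤ t := by linarith
    have hs0 := (hF.sub hs).1
    have htt := (hF.sub ht).2
    have hr : r ∈ G := hr3 ⟨by linarith, by linarith⟩
    set d := t - r with hd'
    set c := r - s with hc'
    have hts : t - s = d + c := by rw [hd', hc']; ring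
    have hd : 0 ≤ d := sub_nonneg.2 hrt
    have hc0 : 0 ≤ c := sub_nonneg.2 hsr
    have hdh : d ≤ h := by linarith
    have h1 := hF.step hr ht hrt hk hφ
    rw [← hA, ← hd'] at h1
    have hc := hφ.comp hk (hF.bd r) hd
    have h2 := ih s hs r hr hsr (by linarith) _ _ _ hc
    rw [← hc'] at h2
    rw [hts]
    have e1 : 1 + d * L ≤ Real.exp (L * d) := by
      have := Real.add_one_le_exp (L * d); linarith
    have e2 : 1 + d * (3 * L + L ^ 2 + M * C) ≤ Real.exp ((3 * L + L ^ 2 + M * C) * d) := by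
      have := Real.add_one_le_exp ((3 * L + L ^ 2 + M * C) * d); linarith
    have hd1 : d ≤ 1 := hdh.trans hh1
    have e3 : Λ * (1 + d * L) + (Γ * (1 + d * L) ^ 2 + Λ * (d * (M * C))) ≤
        (1 + d * (3 * L + L ^ 2 + M * C)) * (Λ + Γ) := by
      have q1 : 0 ≤ Γ * (L ^ 2 * (d * (1 - d))) := by
        have : 0 ≤ 1 - d := by linarith
        positivity
      have q2 : 0 ≤ Γ * (d * (L + M * C)) + Λ * (d * (2 * L + L ^ 2)) := by positivity
      nlinarith
    have h3 : |∫ x, w t x * φ x| ≤ |∫ x, w r x * φ (x + d • VV k (w r) x)| +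
        (d * (10 * M ^ 2 * δ * Λ) + d ^ 2 * (A * (Λ + Γ))) := by
      have := abs_sub_abs_le_abs_sub (∫ x, w t x * φ x) (∫ x, w r x * φ (x + d • VV k (w r) x))
      linarith
    set B := 10 * M ^ 2 * δ with hB
    set K := 3 * L + L ^ 2 + M * C with hK
    have hB0 : 0 ≤ B := by positivity
    have hK0 : 0 ≤ K := by positivity
    have E1 : Real.exp (L * (d + c)) = Real.exp (L * d) * Real.exp (L * c) := by
      rw [← Real.exp_add]; ring_nf
    have E2 : Real.exp (K * (d + c)) = Real.exp (K * d) * Real.exp (K * c) := by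
      rw [← Real.exp_add]; ring_nf
    have E1' : 1 ≤ Real.exp (L * (d + c)) := Real.one_le_exp (by positivity)
    have E2' : 1 ≤ Real.exp (K * (d + c)) := Real.one_le_exp (by positivity)
    have f1 : d * (B * Λ) + c * Real.exp (L * c) * (B * (Λ * (1 + d * L))) ≤
        (d + c) * Real.exp (L * (d + c)) * (B * Λ) := by
      have g1 : d * (B * Λ) ≤ d * (B * Λ) * Real.exp (L * (d + c)) :=
        le_mul_of_one_le_right (by positivity) E1'
      have g2 : c * Real.exp (L * c) * (B * Λ) * (1 + d * L) ≤
        c * Real.exp (L * c) * (B * Λ) * Real.exp (L * d) := by gcongr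
      rw [E1] at g1 ⊢
      linarith
    have f2 : d ^ 2 * (A * (Λ + Γ)) + c * h * Real.exp (K * c) *
        (A * (Λ * (1 + d * L) + (Γ * (1 + d * L) ^ 2 + Λ * (d * (M * C))))) ≤
        (d + c) * h * Real.exp (K * (d + c)) * (A * (Λ + Γ)) := by
      have g0 : d ^ 2 ≤ d * h := by rw [sq]; gcongr
      have g1 : d ^ 2 * (A * (Λ + Γ)) ≤ d * h * (A * (Λ + Γ)) * Real.exp (K * (d + c)) :=
        (mul_le_mul_of_nonneg_right g0 (by positivity)).trans
          (le_mul_of_one_le_right (by positivity) E2')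
      have g2 : c * h * Real.exp (K * c) *
        (A * (Λ * (1 + d * L) + (Γ * (1 + d * L) ^ 2 + Λ * (d * (M * C))))) ≤
        c * h * Real.exp (K * c) * (A * (Real.exp (K * d) * (Λ + Γ))) := by
        have : Λ * (1 + d * L) + (Γ * (1 + d * L) ^ 2 + Λ * (d * (M * C))) ≤
          Real.exp (K * d) * (Λ + Γ) := e3.trans (by gcongr)
        gcongr
      rw [E2] at g1 ⊢
      linarith
    linarith

end EulerOpt

namespace EulerOpt
open Complex ComplexConjugate Set

lemma le_of_small {X Y K : ℝ} (H : ∀ h : ℝ, 0 < h → h ≤ 1 → X ≤ Y + K * h) : X ≤ Y := by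
  apply le_of_forall_pos_le_add
  intro η hη
  have hK : 0 < |K| + 1 := by positivity
  have h1 : 0 < min 1 (η / (|K| + 1)) := lt_min one_pos (by positivity)
  refine (H _ h1 (min_le_left _ _)).trans ?_
  have h2 : K * min 1 (η / (|K| + 1)) ≤ (|K| + 1) * (η / (|K| + 1)) := by
    refine mul_le_mul ?_ (min_le_right _ _) h1.le hK.le
    linarith [le_abs_self K]
  rw [mul_div_cancel₀ _ hK.ne'] at h2
  linarith

lemma Fam.short {w : ℝ → ℂ → ℝ} {t0 M : ℝ} {G : Set ℝ} (hF : Fam w t0 M G) :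
    ∃ τ : ℝ, 0 < τ ∧ ∀ s ∈ G, ∀ t ∈ G, s ≤ t → t - s ≤ τ → ∀ φ Λ Γ, Reg φ Λ Γ →
      |∫ x, w t x * φ x| ≤ ∫ x, |w s x| := by
  obtain ⟨C1, hC1, H⟩ := exists_reg
  have hM := (hF.bd 0).nonneg
  refine ⟨1 / (14 * (C1 * M) + 1), by positivity, fun s hs t ht hst hts φ Λ Γ hφ => ?_⟩
  have hΛ := hφ.Λ0; have hΓ := hφ.Γ0
  have hd : 0 ≤ t - s := sub_nonneg.2 hst
  have hX : 14 * (C1 * M) * (t - s) ≤ 1 := by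
    rw [le_div_iff₀ (by positivity)] at hts
    linarith
  apply le_of_small (K := (t - s) * Real.exp 2 * (10 * M ^ 2 * Λ))
  intro η hη hη1
  obtain ⟨k, C, hC, k1, k2, k3, k4, k5⟩ := H (η ^ 2) (by positivity) (pow_le_one₀ hη.le hη1)
  set L := C1 * (M * (28 + 7 * Real.log (1 / η ^ 2))) with hL
  have hlog : 0 ≤ -Real.log η := by
    have := Real.log_nonpos hη.le hη1; linarith
  have hlg : Real.log (1 / η ^ 2) = 2 * (-Real.log η) := by
    rw [one_div, Real.log_inv, Real.log_pow]; push_cast; ring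
  have hL0 : 0 ≤ L := by rw [hL, hlg]; positivity
  have hk : RegK k C L (η ^ 2) M := ⟨hC, hL0, by positivity, k1, k2, k3, k4,
    fun w hw => (k5 w M hw).1, fun w hw => (k5 w M hw).2.1, fun w hw => (k5 w M hw).2.2.1,
    fun w hw => (k5 w M hw).2.2.2.1, fun w hw => (k5 w M hw).2.2.2.2⟩
  have key : |∫ x, w t x * φ x| ≤ (∫ x, |w s x|) +
      (t - s) * Real.exp (L * (t - s)) * (10 * M ^ 2 * (η ^ 2) * Λ) := by
    apply le_of_small (K := (t - s) * Real.exp ((3 * L + L ^ 2 + M * C) * (t - s)) *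
      ((4 * M ^ 3 * C + 2 * M ^ 2 * (M * C + L) + M ^ 3 * C ^ 2) * (Λ + Γ)))
    intro h hh hh1
    obtain ⟨n, hn⟩ := exists_nat_gt ((t - s) / h)
    have hn' : t - s < (n + 1) * h := by
      rw [div_lt_iff₀ hh] at hn; linarith
    have := hF.iter hk hh hh1 rfl n s hs t ht hst hn' φ Λ Γ hφ
    linarith
  refine key.trans (add_le_add le_rfl ?_)
  have e1 : L * (t - s) ≤ 2 + -Real.log η := by
    have : L * (t - s) = (14 * (C1 * M) * (t - s)) * (2 + -Real.log η) := by rw [hL, hlg]; ring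
    rw [this]
    exact mul_le_of_le_one_left (by positivity) hX
  have e2 : Real.exp (L * (t - s)) ≤ Real.exp 2 / η := by
    refine (Real.exp_le_exp.2 e1).trans (le_of_eq ?_)
    rw [Real.exp_add, Real.exp_neg, Real.exp_log hη]; rfl
  calc _ ≤ (t - s) * (Real.exp 2 / η) * (10 * M ^ 2 * (η ^ 2) * Λ) := by gcongr
    _ = _ := by field_simp

lemma reg_of_compact {φ : ℂ → ℝ} (hs : ContDiff ℝ (⊤ : ℕ∞) φ) (hc : HasCompactSupport φ)
    (hb : ∀ x, |φ x| ≤ 1) : ∃ Λ Γ, Reg φ Λ Γ := by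
  have hdc : Continuous (fderiv ℝ φ) := hs.continuous_fderiv (by simp)
  obtain ⟨Cb, hCb⟩ := (hc.fderiv ℝ).exists_bound_of_continuous hdc
  obtain ⟨Cl, hCl⟩ := ContDiff.lipschitzWith_of_hasCompactSupport (hc.fderiv ℝ)
    (hs.fderiv_right (m := 1) (by norm_cast)) one_ne_zero
  refine ⟨Cb, Cl, (norm_nonneg _).trans (hCb 0), Cl.2, hs, hb, hCb, fun x y => ?_⟩
  have := hCl.dist_le_mul x y
  rwa [dist_eq_norm, dist_eq_norm] at this

open scoped Convolution Topology in
lemma dual_l1 {w : ℂ → ℝ} {M : ℝ} (hw : Bd w M) (hs : ∀ x, w x ≠ 0 → ‖x‖ ≤ 1) {B : ℝ}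
    (H : ∀ φ Λ Γ, Reg φ Λ Γ → |∫ x, w x * φ x| ≤ B) : ∫ x, |w x| ≤ B := by
  set w' := hw.int.1.mk w with hw'
  have hwm : Measurable w' := hw.int.1.stronglyMeasurable_mk.measurable
  have hwe : w =ᵐ[volume] w' := hw.int.1.ae_eq_mk
  set D := Metric.closedBall (0:ℂ) 1 with hD
  have hDm : MeasurableSet D := measurableSet_closedBall
  set g : ℂ → ℝ := D.indicator (fun x => if 0 ≤ w' x then 1 else -1) with hg
  have hg1 : ∀ x, |g x| ≤ 1 := by
    intro x
    simp only [hg, indicator]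
    split_ifs <;> simp
  have hgm : Measurable g := by
    apply Measurable.indicator _ hDm
    exact Measurable.ite (measurableSet_le measurable_const hwm) measurable_const measurable_const
  have hgi : Integrable g := by
    have : Integrable (D.indicator (fun _ => (1:ℝ))) :=
      (integrable_indicator_iff hDm).2 (integrableOn_const
        (by exact (isCompact_closedBall _ _).measure_lt_top.ne))
    apply this.mono' hgm.aestronglyMeasurable
    refine Filter.Eventually.of_forall fun x => ?_
    simp only [hg, indicator]
    split_ifs <;> simp
  have hgc : HasCompactSupport g :=
    HasCompactSupport.intro (isCompact_closedBall (0:ℂ) 1) (fun x hx => by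
      simp only [hg, indicator]; rw [if_neg hx])
  have hwg : (fun x => w x * g x) =ᵐ[volume] fun x => |w x| := by
    filter_upwards [hwe] with x hx
    by_cases h0 : w x = 0
    · simp [h0]
    have hxD : x ∈ D := by rw [hD]; simpa using hs x h0
    simp only [hg, indicator, if_pos hxD]
    rw [← hx]
    split_ifs with h1
    · rw [abs_of_nonneg h1, mul_one]
    · rw [abs_of_neg (not_le.1 h1)]; ring
  let φ : ℕ → ContDiffBump (0 : ℂ) := fun n =>
    { rIn := 1 / (n + 1), rOut := 2 / (n + 1), rIn_pos := by positivity,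
      rIn_lt_rOut := by gcongr; norm_num }
  have hro : Filter.Tendsto (fun n => (φ n).rOut) Filter.atTop (𝓝 0) := by
    have := (tendsto_one_div_add_atTop_nhds_zero_nat (𝕜 := ℝ)).const_mul 2
    simpa [φ, div_eq_mul_inv] using this
  have hae := ContDiffBump.ae_convolution_tendsto_right_of_locallyIntegrable (μ := volume)
    (K := 2) hro (Filter.Eventually.of_forall fun n => by simp only [φ]; apply le_of_eq; ring)
    hgi.locallyIntegrable
  set ψ : ℕ → ℂ → ℝ := fun n => (φ n).normed volume ⋆[ContinuousLinearMap.lsmul ℝ ℝ, volume] g with hψ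
  have hψs : ∀ n, ContDiff ℝ (⊤ : ℕ∞) (ψ n) := fun n =>
    (φ n).hasCompactSupport_normed.contDiff_convolution_left _ (φ n).contDiff_normed
      hgi.locallyIntegrable
  have hψc : ∀ n, HasCompactSupport (ψ n) := fun n =>
    (φ n).hasCompactSupport_normed.convolution _ hgc
  have hψb : ∀ n x, |ψ n x| ≤ 1 := by
    intro n x
    have : ‖ψ n x‖ ≤ ∫ t, (φ n).normed volume t := by
      simp only [hψ, convolution_def]
      refine norm_integral_le_of_norm_le (φ n).integrable_normed (Filter.Eventually.of_forall fun t => ?_)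
      simp only [ContinuousLinearMap.lsmul_apply, smul_eq_mul, norm_mul]
      rw [Real.norm_of_nonneg ((φ n).nonneg_normed t)]
      exact mul_le_of_le_one_right ((φ n).nonneg_normed t) (hg1 _)
    rwa [(φ n).integral_normed] at this
  have hlim : Filter.Tendsto (fun n => ∫ x, w x * ψ n x) Filter.atTop (𝓝 (∫ x, w x * g x)) := by
    apply tendsto_integral_of_dominated_convergence (fun x => |w x|)
    · intro n
      exact hw.int.1.mul (hψs n).continuous.aestronglyMeasurable
    · exact hw.int.abs
    · intro n
      refine Filter.Eventually.of_forall fun x => ?_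
      rw [norm_mul]
      exact mul_le_of_le_one_right (norm_nonneg _) (hψb n x)
    · filter_upwards [hae] with x hx
      exact hx.const_mul _
  rw [integral_congr_ae hwg] at hlim
  refine le_of_tendsto hlim (Filter.Eventually.of_forall fun n => ?_)
  obtain ⟨Λ, Γ, hR⟩ := reg_of_compact (hψs n) (hψc n) (hψb n)
  exact (le_abs_self _).trans (H _ _ _ hR)

lemma Fam.l1 {w : ℝ → ℂ → ℝ} {t0 M : ℝ} {G : Set ℝ} (hF : Fam w t0 M G) :
    ∀ t ∈ G, ∫ x, |w t x| ≤ ∫ x, |w 0 x| := by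
  obtain ⟨τ, hτ, H⟩ := hF.short
  have H' : ∀ s ∈ G, ∀ t ∈ G, s ≤ t → t - s ≤ τ → ∫ x, |w t x| ≤ ∫ x, |w s x| :=
    fun s hs t ht hst hts => dual_l1 (hF.bd t) (hF.supp t (Ico_subset_Icc_self (hF.sub ht)))
      (H s hs t ht hst hts)
  have key : ∀ n : ℕ, ∀ t ∈ G, t < (n + 1) * τ → ∫ x, |w t x| ≤ ∫ x, |w 0 x| := by
    intro n
    induction n with
    | zero =>
      intro t ht h
      exact H' 0 hF.zero_mem t ht (hF.sub ht).1 (by simp at h; linarith)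
    | succ n ih =>
      intro t ht h
      by_cases hlt : t < (n + 1) * τ
      · exact ih t ht hlt
      push Not at hlt
      push_cast at h
      obtain ⟨r, hr1, hr2, hr3⟩ := exists_good hF.ae (a := t - τ) (b := (n + 1) * τ) (by linarith)
      have hn : 0 ≤ n * τ := by positivity
      have htt := (hF.sub ht).2
      have hr : r ∈ G := hr3 ⟨by linarith, by linarith⟩
      exact (H' r hr t ht (by linarith) (by linarith)).trans (ih r hr hr2)
  intro t ht
  obtain ⟨n, hn⟩ := exists_nat_gt (t / τ)
  rw [div_lt_iff₀ hτ] at hn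
  exact key n t ht (by linarith)

end EulerOpt

namespace EulerOpt
open Complex ComplexConjugate Set

/-- real inner product on the plane -/
noncomputable def dot (u : ℂ) : ℂ →L[ℝ] ℝ := u.re • reCLM + u.im • imCLM

lemma dot_apply (u v : ℂ) : dot u v = u.re * v.re + u.im * v.im := by
  simp [dot]

lemma dot_le (u v : ℂ) : |dot u v| ≤ ‖u‖ * ‖v‖ := by
  have : dot u v = (conj u * v).re := by rw [dot_apply]; simp
  rw [this]
  refine (Complex.abs_re_le_norm _).trans (le_of_eq ?_)
  rw [norm_mul, RCLike.norm_conj]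

lemma dot_sub_left (u u' v : ℂ) : dot (u - u') v = dot u v - dot u' v := by
  simp only [dot_apply, sub_re, sub_im]; ring

lemma dot_ker (x y : ℂ) : dot (x - y) (ker x y) = 0 := by
  rw [dot_apply, ker_eq]
  simp only [real_smul, mul_re, mul_im, ofReal_re, ofReal_im, I_re, I_im]
  ring

lemma dot_continuous : Continuous dot := by
  unfold dot
  exact (continuous_re.smul continuous_const).add (continuous_im.smul continuous_const)

lemma self_zero {m : ℂ → ℝ} {M : ℝ} (hm : Bd m M) (hs : ∀ x, m x ≠ 0 → ‖x‖ ≤ 1) (P : ℂ) :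
    ∫ x, m x * dot (x - P) (vel m x) = 0 := by
  have hM := hm.nonneg
  set F : ℂ × ℂ → ℝ := fun p => m p.1 * dot (p.1 - P) (m p.2 • ker p.1 p.2) with hF
  have hFm : AEStronglyMeasurable F (volume.prod volume) := by
    have h1 : AEStronglyMeasurable (fun p : ℂ × ℂ => m p.2 • ker p.1 p.2)
      ((volume : Measure ℂ).prod volume) :=
      (hm.int.aestronglyMeasurable.comp_snd).smul ker_measurable.aestronglyMeasurable
    have h2 : AEStronglyMeasurable (fun p : ℂ × ℂ => dot (p.1 - P)) ((volume : Measure ℂ).prod volume) :=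
      (dot_continuous.comp (continuous_fst.sub continuous_const)).aestronglyMeasurable
    exact (hm.int.aestronglyMeasurable.comp_fst).mul
      (isBoundedBilinearMap_apply.continuous.comp_aestronglyMeasurable (h2.prodMk h1))
  have inn : ∀ x, Integrable (fun y => F (x, y)) := fun x =>
    ((dot (x - P)).integrable_comp (ker_int hm.int hm.li hm.l1 x).1).const_mul (m x)
  have e1 : ∀ x, m x * dot (x - P) (vel m x) = ∫ y, F (x, y) := by
    intro x
    simp only [hF, vel]
    rw [integral_const_mul, (dot (x - P)).integral_comp_comm (ker_int hm.int hm.li hm.l1 x).1]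
  have hFi : Integrable F (volume.prod volume) := by
    rw [integrable_prod_iff hFm]
    refine ⟨Filter.Eventually.of_forall inn, ?_⟩
    have dom : Integrable (fun x => |m x| * ((1 + ‖P‖) * (2 * M))) := hm.int.abs.mul_const _
    apply dom.mono' hFm.norm.integral_prod_right'
    refine Filter.Eventually.of_forall fun x => ?_
    rw [Real.norm_of_nonneg (integral_nonneg fun y => norm_nonneg _)]
    have kb := (ker_int hm.int hm.li hm.l1 x)
    calc ∫ y, ‖F (x, y)‖ ≤ ∫ y, |m x| * (1 + ‖P‖) * ‖m y • ker x y‖ := by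
          apply integral_mono (inn x).norm (kb.1.norm.const_mul _)
          intro y
          simp only [hF, norm_mul, Real.norm_eq_abs]
          by_cases h0 : m x = 0
          · simp [h0]
          rw [mul_assoc]
          refine mul_le_mul_of_nonneg_left ((dot_le _ _).trans ?_) (abs_nonneg _)
          refine mul_le_mul_of_nonneg_right ?_ (norm_nonneg _)
          exact (norm_sub_le _ _).trans (by linarith [hs x h0])
      _ = |m x| * (1 + ‖P‖) * ∫ y, ‖m y • ker x y‖ := integral_const_mul _ _
      _ ≤ |m x| * (1 + ‖P‖) * (2 * M) := by
          exact mul_le_mul_of_nonneg_left kb.2.2 (by positivity)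
      _ = _ := by ring
  have e2 : ∫ x, m x * dot (x - P) (vel m x) = ∫ p, F p ∂(volume.prod volume) := by
    rw [integral_prod _ hFi]
    exact integral_congr_ae (Filter.Eventually.of_forall e1)
  have e3 : ∫ p, F p.swap ∂(volume.prod volume) = ∫ p, F p ∂(volume.prod volume) :=
    integral_prod_swap F
  have e4 : ∀ p, F p.swap = - F p := by
    intro p
    obtain ⟨x, y⟩ := p
    simp only [hF, Prod.swap, map_smul, smul_eq_mul]
    have h1 := dot_ker x y
    rw [ker_antisymm y x, map_neg]
    have h2 : dot (x - P) (ker x y) - dot (y - P) (ker x y) = 0 := by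
      rw [← dot_sub_left, sub_sub_sub_cancel_right]; exact h1
    linear_combination (m x * m y) * h2
  simp only [e4, integral_neg] at e3
  rw [e2]; linarith

lemma ker_lip {x y p q : ℂ} (h1 : 1 / 2 ≤ ‖x - y‖) (h2 : 1 / 2 ≤ ‖p - q‖) :
    ‖ker x y - ker p q‖ ≤ 4 / (2 * Real.pi) * (‖x - p‖ + ‖y - q‖) := by
  have hpi := Real.pi_pos
  have n1 : x - y ≠ 0 := by intro h; rw [h] at h1; norm_num at h1
  have n2 : p - q ≠ 0 := by intro h; rw [h] at h2; norm_num at h2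
  have c1 : conj (x - y) ≠ 0 := (map_ne_zero _).2 n1
  have c2 : conj (p - q) ≠ 0 := (map_ne_zero _).2 n2
  have e : ker x y - ker p q = ((1 / (2 * Real.pi) : ℝ) : ℂ) *
      (I * conj ((p - x) - (q - y)) / (conj (x - y) * conj (p - q))) := by
    rw [ker_conj, ker_conj, ← mul_sub]
    congr 1
    rw [div_sub_div _ _ c1 c2]
    congr 1
    simp only [map_sub]; ring
  rw [e, norm_mul, norm_div, norm_mul, norm_mul, norm_I, RCLike.norm_conj, RCLike.norm_conj,
    RCLike.norm_conj, norm_real, Real.norm_of_nonneg (by positivity)]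
  have t : ‖(p - x) - (q - y)‖ ≤ ‖x - p‖ + ‖y - q‖ := by
    refine (norm_sub_le _ _).trans ?_
    rw [norm_sub_rev p x, norm_sub_rev q y]
  have d : 1 / 4 ≤ ‖x - y‖ * ‖p - q‖ := by nlinarith
  calc _ ≤ 1 / (2 * Real.pi) * (1 * (‖x - p‖ + ‖y - q‖) / (1 / 4)) := by gcongr
    _ = _ := by ring

structure Prb (m : ℂ → ℝ) (z : ℂ) (M : ℝ) : Prop where
  bd : Bd m M
  pos : ∀ x, 0 ≤ m x
  one : ∫ x, m x = 1
  supp : ∀ x, m x ≠ 0 → ‖x - z‖ ≤ 1 / 10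
  supp1 : ∀ x, m x ≠ 0 → ‖x‖ ≤ 1

lemma Prb.m1 {m : ℂ → ℝ} {z : ℂ} {M : ℝ} (h : Prb m z M) (P : ℂ) :
    Integrable (fun x => m x * ‖x - P‖) ∧ Integrable (fun x => m x * ‖x - P‖ ^ 2) ∧
    (∫ x, m x * ‖x - P‖) ^ 2 ≤ ∫ x, m x * ‖x - P‖ ^ 2 := by
  have b : ∀ x, m x ≠ 0 → ‖x - P‖ ≤ 1 + ‖P‖ := fun x hx =>
    (norm_sub_le _ _).trans (by linarith [h.supp1 x hx])
  have i1 := (h.bd.mul_int (ψ := fun x => ‖x - P‖) (B := 1 + ‖P‖) (by positivity)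
    (by fun_prop) (fun x hx => by rw [abs_of_nonneg (norm_nonneg _)]; exact b x hx)).1
  have i2 := (h.bd.mul_int (ψ := fun x => ‖x - P‖ ^ 2) (B := (1 + ‖P‖) ^ 2) (by positivity)
    (by fun_prop) (fun x hx => by
      rw [abs_of_nonneg (by positivity)]; exact pow_le_pow_left₀ (norm_nonneg _) (b x hx) 2)).1
  refine ⟨i1, i2, ?_⟩
  set E := ∫ x, m x * ‖x - P‖ with hE
  have i3 : Integrable (fun x => 2 * E * (m x * ‖x - P‖) - E ^ 2 * m x) :=
    (i1.const_mul _).sub (h.bd.int.const_mul _)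
  have : 0 ≤ ∫ x, (m x * ‖x - P‖ ^ 2 - (2 * E * (m x * ‖x - P‖) - E ^ 2 * m x)) := by
    apply integral_nonneg
    intro x
    have : m x * ‖x - P‖ ^ 2 - (2 * E * (m x * ‖x - P‖) - E ^ 2 * m x) = m x * (‖x - P‖ - E) ^ 2 := by
      ring
    simp only [Pi.zero_apply]
    rw [this]
    exact mul_nonneg (h.pos x) (sq_nonneg _)
  rw [integral_sub i2 i3, integral_sub (i1.const_mul _) (h.bd.int.const_mul _), integral_const_mul,
    integral_const_mul, h.one, ← hE] at this
  nlinarith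

lemma Prb.cross {m n : ℂ → ℝ} {z z' : ℂ} {M M' : ℝ} (h : Prb m z M) (h' : Prb n z' M')
    (hz : 7 / 10 ≤ ‖z - z'‖) {P Q : ℂ} (hP : ‖P - z‖ ≤ 1 / 10) (hQ : ‖Q - z'‖ ≤ 1 / 10) :
    Integrable (fun x => m x * dot (x - P) (vel n x - ker P Q)) ∧
    |∫ x, m x * dot (x - P) (vel n x - ker P Q)| ≤ 4 / (2 * Real.pi) *
      (3 / 2 * (∫ x, m x * ‖x - P‖ ^ 2) + 1 / 2 * ∫ x, n x * ‖x - Q‖ ^ 2) := by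
  have hpi := Real.pi_pos
  obtain ⟨i1, i2, i3⟩ := h.m1 P
  obtain ⟨k1, k2, k3⟩ := h'.m1 Q
  have hM' := h'.bd.nonneg
  set c := 4 / (2 * Real.pi) with hc
  have hc0 : 0 ≤ c := by positivity
  set E := ∫ x, n x * ‖x - Q‖ with hE
  have dist : ∀ {x y : ℂ}, ‖x - z‖ ≤ 1 / 10 → ‖y - z'‖ ≤ 1 / 10 → 1 / 2 ≤ ‖x - y‖ := by
    intro x y hx hy
    have e : z - z' = -(x - z) + (x - y) + (y - z') := by ring
    rw [e] at hz
    have t1 := norm_add_le (-(x - z) + (x - y)) (y - z')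
    have t2 := norm_add_le (-(x - z)) (x - y)
    rw [norm_neg] at t2
    linarith
  have vb : ∀ x, m x ≠ 0 → ‖vel n x - ker P Q‖ ≤ c * (‖x - P‖ + E) := by
    intro x hx
    have kb := ker_int h'.bd.int h'.bd.li h'.bd.l1 x
    have e : vel n x - ker P Q = ∫ y, n y • (ker x y - ker P Q) := by
      simp_rw [smul_sub]
      rw [integral_sub kb.1 (h'.bd.int.smul_const _), integral_smul_const, h'.one, one_smul]
      rfl
    rw [e]
    have dom : Integrable (fun y => c * ‖x - P‖ * n y + c * (n y * ‖y - Q‖)) :=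
      (h'.bd.int.const_mul _).add (k1.const_mul _)
    refine (norm_integral_le_of_norm_le dom (Filter.Eventually.of_forall fun y => ?_)).trans ?_
    · rw [norm_smul, Real.norm_of_nonneg (h'.pos y)]
      by_cases hy : n y = 0
      · simp [hy]
      have := ker_lip (dist (h.supp x hx) (h'.supp y hy)) (dist hP hQ)
      calc _ ≤ n y * (c * (‖x - P‖ + ‖y - Q‖)) := mul_le_mul_of_nonneg_left this (h'.pos y)
        _ = _ := by ring
    · rw [integral_add (h'.bd.int.const_mul _) (k1.const_mul _), integral_const_mul,
        integral_const_mul, h'.one, ← hE]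
      apply le_of_eq; ring
  have meas : AEStronglyMeasurable (fun x => dot (x - P) (vel n x - ker P Q)) volume := by
    have h2 : AEStronglyMeasurable (fun x : ℂ => dot (x - P)) volume :=
      (dot_continuous.comp (continuous_id.sub continuous_const)).aestronglyMeasurable
    exact isBoundedBilinearMap_apply.continuous.comp_aestronglyMeasurable
      (h2.prodMk (h'.bd.vel_meas.sub aestronglyMeasurable_const))
  have ptw : ∀ x, ‖m x * dot (x - P) (vel n x - ker P Q)‖ ≤
      c * (m x * ‖x - P‖ ^ 2) + c * E * (m x * ‖x - P‖) := by
    intro x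
    by_cases hx : m x = 0
    · simp [hx]
    rw [norm_mul, Real.norm_of_nonneg (h.pos x), Real.norm_eq_abs]
    calc _ ≤ m x * (‖x - P‖ * (c * (‖x - P‖ + E))) := by
          refine mul_le_mul_of_nonneg_left ((dot_le _ _).trans ?_) (h.pos x)
          exact mul_le_mul_of_nonneg_left (vb x hx) (norm_nonneg _)
      _ = _ := by ring
  have dom : Integrable (fun x => c * (m x * ‖x - P‖ ^ 2) + c * E * (m x * ‖x - P‖)) :=
    (i2.const_mul _).add (i1.const_mul _)
  refine ⟨dom.mono' (h.bd.int.aestronglyMeasurable.mul meas) (Filter.Eventually.of_forall ptw), ?_⟩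
  refine (norm_integral_le_of_norm_le dom (Filter.Eventually.of_forall ptw)).trans ?_
  rw [integral_add (i2.const_mul _) (i1.const_mul _), integral_const_mul, integral_const_mul]
  set D := ∫ x, m x * ‖x - P‖
  have : E * D ≤ (E ^ 2 + D ^ 2) / 2 := by nlinarith [sq_nonneg (E - D)]
  have : c * (E * D) ≤ c * ((∫ x, n x * ‖x - Q‖ ^ 2) / 2 + (∫ x, m x * ‖x - P‖ ^ 2) / 2) :=
    mul_le_mul_of_nonneg_left (by linarith) hc0
  linarith

lemma J_static {m : Fin 3 → ℂ → ℝ} {z P : Fin 3 → ℂ} {a : Fin 3 → ℝ} {M : ℝ} {w : ℂ → ℝ}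
    (hm : ∀ i, Prb (m i) (z i) M) (hP : ∀ i, ‖P i - z i‖ ≤ 1 / 10)
    (hz : ∀ i j, i ≠ j → 7 / 10 ≤ ‖z i - z j‖) (ha : ∀ i, |a i| ≤ 2 * Real.pi)
    (hv : ∀ x, vel w x = ∑ j, a j • vel (m j) x) :
    ∑ i, (∫ x, m i x * dot (x - P i) (vel w x - ∑ j ∈ Finset.univ.erase i, a j • ker (P i) (P j))) ≤
      16 * ∑ i, ∫ x, m i x * ‖x - P i‖ ^ 2 := by
  have hpi := Real.pi_pos
  set J : Fin 3 → ℝ := fun i => ∫ x, m i x * ‖x - P i‖ ^ 2 with hJ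
  have J0 : ∀ i, 0 ≤ J i := fun i => integral_nonneg fun x =>
    mul_nonneg ((hm i).pos x) (by positivity)
  have one : ∀ i, (∫ x, m i x * dot (x - P i)
      (vel w x - ∑ j ∈ Finset.univ.erase i, a j • ker (P i) (P j))) ≤
      ∑ j ∈ Finset.univ.erase i, 4 * (3 / 2 * J i + 1 / 2 * J j) := by
    intro i
    have cr : ∀ j ∈ Finset.univ.erase i, _ := fun j hj =>
      (hm i).cross (hm j) (hz i j (Finset.ne_of_mem_erase hj).symm) (hP i) (hP j)
    have e : ∀ x, m i x * dot (x - P i)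
      (vel w x - ∑ j ∈ Finset.univ.erase i, a j • ker (P i) (P j)) =
      a i * (m i x * dot (x - P i) (vel (m i) x)) + ∑ j ∈ Finset.univ.erase i,
        a j * (m i x * dot (x - P i) (vel (m j) x - ker (P i) (P j))) := by
      intro x
      rw [hv, ← Finset.add_sum_erase _ _ (Finset.mem_univ i), add_sub_assoc, ← Finset.sum_sub_distrib,
        map_add, map_sum, mul_add, Finset.mul_sum, map_smul, smul_eq_mul]
      congr 1
      · ring
      · refine Finset.sum_congr rfl fun j _ => ?_
        rw [← smul_sub, map_smul, smul_eq_mul]; ring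
    have iself : Integrable (fun x => m i x * dot (x - P i) (vel (m i) x)) :=
      ((hm i).bd.lin_int (L := fun x => dot (x - P i)) (B := 1 + ‖P i‖) (by positivity)
        (dot_continuous.comp (continuous_id.sub continuous_const)) (fun x hx => by
          refine ContinuousLinearMap.opNorm_le_bound _ (by positivity) fun v => ?_
          refine (dot_le _ _).trans (mul_le_mul_of_nonneg_right ?_ (norm_nonneg _))
          exact (norm_sub_le _ _).trans (by linarith [(hm i).supp1 x hx]))).1
    simp_rw [e]
    rw [integral_add (iself.const_mul _) (integrable_finset_sum _ fun j hj => (cr j hj).1.const_mul _),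
      integral_const_mul, self_zero (hm i).bd (hm i).supp1, mul_zero, zero_add,
      integral_finset_sum _ fun j hj => (cr j hj).1.const_mul _]
    refine Finset.sum_le_sum fun j hj => ?_
    rw [integral_const_mul]
    refine (le_abs_self _).trans ?_
    rw [abs_mul]
    calc _ ≤ (2 * Real.pi) * (4 / (2 * Real.pi) * (3 / 2 * J i + 1 / 2 * J j)) :=
          mul_le_mul (ha j) (cr j hj).2 (abs_nonneg _) (by positivity)
      _ = _ := by field_simp
  have e0 : (Finset.univ.erase (0 : Fin 3)) = {1, 2} := by decide
  have e1 : (Finset.univ.erase (1 : Fin 3)) = {0, 2} := by decide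
  have e2 : (Finset.univ.erase (2 : Fin 3)) = {0, 1} := by decide
  refine (Finset.sum_le_sum fun i _ => one i).trans ?_
  rw [Fin.sum_univ_three, Fin.sum_univ_three, e0, e1, e2, Finset.sum_pair (by decide),
    Finset.sum_pair (by decide), Finset.sum_pair (by decide)]
  apply le_of_eq; ring

end EulerOpt

namespace EulerOpt
open Complex ComplexConjugate Set

lemma exists_cut (z : ℂ) : ∃ χ : ℂ → ℝ, ContDiff ℝ (⊤ : ℕ∞) χ ∧ (∀ x, 0 ≤ χ x ∧ χ x ≤ 1) ∧
    (∀ x, ‖x - z‖ ≤ 1 / 10 → χ x = 1 ∧ fderiv ℝ χ x = 0) ∧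
    (∀ x, 3 / 10 ≤ ‖x - z‖ → χ x = 0 ∧ fderiv ℝ χ x = 0) := by
  let f : ContDiffBump z := ⟨1 / 8, 1 / 5, by norm_num, by norm_num⟩
  refine ⟨f, f.contDiff, fun x => ⟨f.nonneg, f.le_one⟩, fun x hx => ⟨?_, ?_⟩, fun x hx => ⟨?_, ?_⟩⟩
  · apply f.one_of_mem_closedBall
    rw [Metric.mem_closedBall, dist_eq_norm]
    exact hx.trans (by norm_num [f])
  · have : (f : ℂ → ℝ) =ᶠ[nhds x] fun _ => 1 := by
      have : x ∈ Metric.ball z f.rIn := by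
        rw [Metric.mem_ball, dist_eq_norm]; exact lt_of_le_of_lt hx (by norm_num [f])
      exact f.eventuallyEq_one_of_mem_ball this
    rw [this.fderiv_eq]; simp
  · apply f.zero_of_le_dist
    rw [dist_eq_norm]; exact le_trans (by norm_num [f]) hx
  · have : (f : ℂ → ℝ) =ᶠ[nhds x] fun _ => 0 := by
      have h1 : ∀ᶠ y in nhds x, 1 / 5 < ‖y - z‖ :=
        (continuous_norm.comp (continuous_id.sub continuous_const)).continuousAt.eventually_const_lt
          (by show (1:ℝ)/5 < ‖x - z‖; linarith)
      filter_upwards [h1] with y hy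
      apply f.zero_of_le_dist
      rw [dist_eq_norm]; exact hy.le
    rw [this.fderiv_eq]; simp

structure Cut (z : Fin 3 → ℂ) (χ : Fin 3 → ℂ → ℝ) : Prop where
  sep : ∀ i j, i ≠ j → 7 / 10 ≤ ‖z i - z j‖
  smooth : ∀ i, ContDiff ℝ (⊤ : ℕ∞) (χ i)
  rng : ∀ i x, 0 ≤ χ i x ∧ χ i x ≤ 1
  near : ∀ i x, ‖x - z i‖ ≤ 1 / 10 → χ i x = 1 ∧ fderiv ℝ (χ i) x = 0
  far : ∀ i x, 3 / 10 ≤ ‖x - z i‖ → χ i x = 0 ∧ fderiv ℝ (χ i) x = 0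

lemma Cut.off {z : Fin 3 → ℂ} {χ : Fin 3 → ℂ → ℝ} (h : Cut z χ) {i j : Fin 3} (hij : i ≠ j) {x : ℂ}
    (hx : ‖x - z j‖ ≤ 1 / 10) : χ i x = 0 ∧ fderiv ℝ (χ i) x = 0 := by
  apply h.far
  have h1 := h.sep i j hij
  have : z i - z j = -(x - z i) + (x - z j) := by ring
  rw [this] at h1
  have := norm_add_le (-(x - z i)) (x - z j)
  rw [norm_neg] at this
  linarith

lemma Cut.der {z : Fin 3 → ℂ} {χ : Fin 3 → ℂ → ℝ} (h : Cut z χ) (i : Fin 3) {x : ℂ}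
    (hx : ∃ j, ‖x - z j‖ ≤ 1 / 10) : fderiv ℝ (χ i) x = 0 := by
  obtain ⟨j, hj⟩ := hx
  by_cases hij : i = j
  · subst hij; exact (h.near i x hj).2
  · exact (h.off hij hj).2

lemma Cut.sum {z : Fin 3 → ℂ} {χ : Fin 3 → ℂ → ℝ} (h : Cut z χ) {x : ℂ}
    (hx : ∃ j, ‖x - z j‖ ≤ 1 / 10) : ∑ i, χ i x = 1 := by
  obtain ⟨j, hj⟩ := hx
  rw [Finset.sum_eq_single j (fun i _ hij => (h.off hij hj).1) (by simp)]
  exact (h.near j x hj).1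

lemma Cut.loc {z : Fin 3 → ℂ} {χ : Fin 3 → ℂ → ℝ} (h : Cut z χ) {i : Fin 3} {x : ℂ}
    (hx : ∃ j, ‖x - z j‖ ≤ 1 / 10) (h0 : χ i x ≠ 0) : ‖x - z i‖ ≤ 1 / 10 := by
  obtain ⟨j, hj⟩ := hx
  by_cases hij : i = j
  · subst hij; exact hj
  · exact absurd (h.off hij hj).1 h0

/-- normalized pieces -/
noncomputable def mm (χ : Fin 3 → ℂ → ℝ) (a : Fin 3 → ℝ) (w : ℂ → ℝ) (i : Fin 3) (x : ℂ) : ℝ :=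
  |w x| * χ i x / |a i|

lemma pieces {w : ℝ → ℂ → ℝ} {t0 M : ℝ} {G : Set ℝ} (hF : Fam w t0 M G) {z : Fin 3 → ℂ}
    {χ : Fin 3 → ℂ → ℝ} (hc : Cut z χ) {a : Fin 3 → ℝ} (ha : ∀ i, 1 ≤ |a i|)
    (hs : ∀ t ∈ Icc 0 t0, ∀ x, w t x ≠ 0 → ∃ j, ‖x - z j‖ ≤ 1 / 10)
    (h0 : ∀ i, ∫ x, w 0 x * χ i x = a i) (h1 : ∫ x, |w 0 x| ≤ ∑ i, |a i|) {t : ℝ} (ht : t ∈ G) :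
    (∀ i, Prb (mm χ a (w t) i) (z i) M) ∧
    (∀ i, ∀ᵐ x, w t x * χ i x = a i * mm χ a (w t) i x) ∧
    (∀ x, vel (w t) x = ∑ j, a j • vel (mm χ a (w t) j) x) := by
  have htI : t ∈ Icc 0 t0 := Ico_subset_Icc_self (hF.sub ht)
  have hst := hs t htI
  have hw := hF.bd t
  have ap : ∀ i, 0 < |a i| := fun i => lt_of_lt_of_le one_pos (ha i)
  have mass : ∀ i, ∫ x, w t x * χ i x = a i := by
    intro i
    rw [hF.eq _ (hc.smooth i) t ht, h0]
    have : ∀ s ∈ uIcc 0 t, FF (w s) (χ i) = 0 := by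
      intro s hsm
      rw [uIcc_of_le htI.1] at hsm
      unfold FF
      rw [← integral_zero ℂ ℝ (μ := volume)]
      congr 1; ext x
      by_cases hx : w s x = 0
      · simp [hx]
      rw [hc.der i (hs s ⟨hsm.1, hsm.2.trans htI.2⟩ x hx)]; simp
    rw [intervalIntegral.integral_congr this]; simp
  have i1 : ∀ i, Integrable (fun x => w t x * χ i x) := fun i =>
    (hw.mul_int zero_le_one (hc.smooth i).continuous.aestronglyMeasurable (fun x _ => by
      rw [abs_of_nonneg (hc.rng i x).1]; exact (hc.rng i x).2)).1
  have i2 : ∀ i, Integrable (fun x => |w t x| * χ i x) := fun i => by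
    have := (i1 i).abs
    refine this.congr (Filter.Eventually.of_forall fun x => ?_)
    simp only [abs_mul, abs_of_nonneg (hc.rng i x).1]
  have lb : ∀ i, |a i| ≤ ∫ x, |w t x| * χ i x := by
    intro i
    rw [← mass i]
    refine abs_integral_le_integral_abs.trans (le_of_eq ?_)
    congr 1; ext x
    simp only [abs_mul, abs_of_nonneg (hc.rng i x).1]
  have tot : ∑ i, ∫ x, |w t x| * χ i x ≤ ∑ i, |a i| := by
    rw [← integral_finset_sum _ (fun i _ => i2 i)]
    refine le_trans (le_of_eq ?_) ((hF.l1 t ht).trans h1)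
    congr 1; ext x
    rw [← Finset.mul_sum]
    by_cases hx : w t x = 0
    · simp [hx]
    rw [hc.sum (hst x hx), mul_one]
  have eqa : ∀ i, ∫ x, |w t x| * χ i x = |a i| := by
    have : ∑ i, ∫ x, |w t x| * χ i x = ∑ i, |a i| := le_antisymm tot (Finset.sum_le_sum fun i _ => lb i)
    intro i
    exact ((Finset.sum_eq_sum_iff_of_le (fun i _ => lb i)).1 this.symm i (Finset.mem_univ i)).symm
  have sg : ∀ i, ∀ᵐ x, w t x * χ i x = a i * mm χ a (w t) i x := by
    intro i
    have nn : 0 ≤ᵐ[volume] fun x => |a i| * (|w t x| * χ i x) - a i * (w t x * χ i x) := by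
      refine Filter.Eventually.of_forall fun x => ?_
      simp only [Pi.zero_apply, sub_nonneg]
      rw [← mul_assoc, ← mul_assoc, ← abs_mul]
      exact mul_le_mul_of_nonneg_right (le_abs_self _) (hc.rng i x).1
    have ii : Integrable (fun x => |a i| * (|w t x| * χ i x) - a i * (w t x * χ i x)) :=
      ((i2 i).const_mul _).sub ((i1 i).const_mul _)
    have z0 : ∫ x, (|a i| * (|w t x| * χ i x) - a i * (w t x * χ i x)) = 0 := by
      rw [integral_sub ((i2 i).const_mul _) ((i1 i).const_mul _), integral_const_mul,
        integral_const_mul, eqa, mass, abs_mul_abs_self, sub_self]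
    filter_upwards [(integral_eq_zero_iff_of_nonneg_ae nn ii).1 z0] with x hx
    simp only [Pi.zero_apply] at hx
    have sq := abs_mul_abs_self (a i)
    have ha0 : a i ≠ 0 := abs_pos.1 (ap i)
    unfold mm
    rw [mul_div_assoc', eq_div_iff (ap i).ne']
    apply mul_left_cancel₀ ha0
    linear_combination (-|a i|) * hx + (|w t x| * χ i x) * sq
  have prb : ∀ i, Prb (mm χ a (w t) i) (z i) M := by
    intro i
    have mi : Integrable (mm χ a (w t) i) := (i2 i).div_const _
    have mp : ∀ x, 0 ≤ mm χ a (w t) i x := fun x =>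
      div_nonneg (mul_nonneg (abs_nonneg _) (hc.rng i x).1) (abs_nonneg _)
    have ml : ∀ x, mm χ a (w t) i x ≤ |w t x| := fun x => by
      unfold mm
      rw [div_le_iff₀ (ap i)]
      exact mul_le_mul_of_nonneg_left ((hc.rng i x).2.trans (ha i)) (abs_nonneg _)
    have ne : ∀ x, mm χ a (w t) i x ≠ 0 → w t x ≠ 0 ∧ χ i x ≠ 0 := by
      intro x hx
      constructor <;> · intro h; apply hx; simp [mm, h]
    refine ⟨⟨mi, ?_, ?_⟩, mp, ?_, fun x hx => hc.loc (hst x (ne x hx).1) (ne x hx).2,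
      fun x hx => hF.supp t htI x (ne x hx).1⟩
    · refine (integral_mono mi.abs hw.int.abs fun x => ?_).trans hw.l1
      simp only [abs_of_nonneg (mp x)]; exact ml x
    · filter_upwards [hw.li] with x hx
      rw [abs_of_nonneg (mp x)]; exact (ml x).trans hx
    · unfold mm
      rw [integral_div, eqa, div_self (ap i).ne']
  refine ⟨prb, sg, fun x => ?_⟩
  have : ∀ j, a j • vel (mm χ a (w t) j) x = ∫ y, (a j * mm χ a (w t) j y) • ker x y := by
    intro j
    unfold vel
    rw [← integral_smul]
    congr 1; ext y
    rw [smul_smul]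
  simp_rw [this]
  rw [← integral_finset_sum]
  · unfold vel
    apply integral_congr_ae
    filter_upwards [ae_all_iff.2 sg] with y hy
    rw [← Finset.sum_smul]
    congr 1
    rw [← Finset.sum_congr rfl (fun i _ => hy i), ← Finset.mul_sum]
    by_cases h : w t y = 0
    · simp [h]
    · rw [hc.sum (hst y h), mul_one]
  · intro j _
    have := (ker_int (prb j).bd.int (prb j).bd.li (prb j).bd.l1 x).1.smul (a j)
    refine this.congr (Filter.Eventually.of_forall fun y => ?_)
    simp only [Pi.smul_apply, smul_smul]

end EulerOpt

namespace EulerOpt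
open Complex ComplexConjugate Set

lemma isub {f g : ℂ → ℝ} (hf : Integrable f) (hg : Integrable g) :
    Integrable (fun x => f x - g x) := hf.sub hg

lemma Prb.bint {m : ℂ → ℝ} {z : ℂ} {M : ℝ} (h : Prb m z M) {f : ℂ → ℝ} {B : ℝ}
    (hf : AEStronglyMeasurable f volume) (hb : ∀ x, ‖x‖ ≤ 1 → |f x| ≤ B) :
    Integrable (fun x => m x * f x) :=
  (h.bd.mul_int (B := B) ((abs_nonneg _).trans (hb 0 (by simp))) hf
    (fun x hx => hb x (h.supp1 x hx))).1

lemma re_int {m : ℂ → ℝ} {z : ℂ} {M : ℝ} (h : Prb m z M) : Integrable (fun x => m x * x.re) :=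
  h.bint (B := 1) continuous_re.aestronglyMeasurable (fun x hx => (abs_re_le_norm x).trans hx)

lemma im_int {m : ℂ → ℝ} {z : ℂ} {M : ℝ} (h : Prb m z M) : Integrable (fun x => m x * x.im) :=
  h.bint (B := 1) continuous_im.aestronglyMeasurable (fun x hx => (abs_im_le_norm x).trans hx)

lemma n2_int {m : ℂ → ℝ} {z : ℂ} {M : ℝ} (h : Prb m z M) :
    Integrable (fun x => m x * (x.re ^ 2 + x.im ^ 2)) := by
  refine h.bint (B := 1) (by fun_prop) (fun x hx => ?_)
  have : x.re ^ 2 + x.im ^ 2 = ‖x‖ ^ 2 := by rw [← normSq_eq_norm_sq, normSq_apply]; ring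
  rw [this, abs_of_nonneg (by positivity)]
  exact pow_le_one₀ (norm_nonneg _) hx

lemma J_expand {m : ℂ → ℝ} {z : ℂ} {M : ℝ} (h : Prb m z M) (P : ℂ) :
    ∫ x, m x * ‖x - P‖ ^ 2 = (∫ x, m x * (x.re ^ 2 + x.im ^ 2)) - 2 * P.re * (∫ x, m x * x.re)
      - 2 * P.im * (∫ x, m x * x.im) + (P.re ^ 2 + P.im ^ 2) := by
  have e : ∀ x, m x * ‖x - P‖ ^ 2 = m x * (x.re ^ 2 + x.im ^ 2) - 2 * P.re * (m x * x.re)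
      - 2 * P.im * (m x * x.im) + (P.re ^ 2 + P.im ^ 2) * m x := by
    intro x
    rw [← normSq_eq_norm_sq, normSq_apply, sub_re, sub_im]; ring
  simp_rw [e]
  have i1 := n2_int h
  have i2 := (re_int h).const_mul (2 * P.re)
  have i3 := (im_int h).const_mul (2 * P.im)
  have i4 := h.bd.int.const_mul (P.re ^ 2 + P.im ^ 2)
  rw [integral_add (isub (isub i1 i2) i3) i4, integral_sub (isub i1 i2) i3, integral_sub i1 i2]
  simp only [integral_const_mul, h.one, mul_one]

lemma D_expand {m : ℂ → ℝ} {z : ℂ} {M : ℝ} (h : Prb m z M) (P q : ℂ) {u : ℂ → ℂ} {K : ℝ}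
    (hu : AEStronglyMeasurable u volume) (hK : ∀ x, ‖u x‖ ≤ K) :
    2 * ∫ x, m x * dot (x - P) (u x - q) = (∫ x, m x * (2 * dot x (u x)))
      - 2 * q.re * (∫ x, m x * x.re) - 2 * P.re * (∫ x, m x * (u x).re)
      - 2 * q.im * (∫ x, m x * x.im) - 2 * P.im * (∫ x, m x * (u x).im)
      + 2 * (P.re * q.re + P.im * q.im) := by
  have hre : AEStronglyMeasurable (fun x => (u x).re) volume :=
    continuous_re.comp_aestronglyMeasurable hu
  have him : AEStronglyMeasurable (fun x => (u x).im) volume :=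
    continuous_im.comp_aestronglyMeasurable hu
  have K0 : 0 ≤ K := (norm_nonneg _).trans (hK 0)
  rw [← integral_const_mul]
  have e : ∀ x, 2 * (m x * dot (x - P) (u x - q)) = m x * (2 * dot x (u x)) - 2 * q.re * (m x * x.re)
      - 2 * P.re * (m x * (u x).re)
      - 2 * q.im * (m x * x.im) - 2 * P.im * (m x * (u x).im) + (2 * (P.re * q.re + P.im * q.im)) * m x := by
    intro x
    simp only [dot_apply, sub_re, sub_im]; ring
  simp_rw [e]
  have i1 : Integrable (fun x => m x * (2 * dot x (u x))) := by
    refine h.bint (B := 2 * K) ?_ (fun x hx => ?_)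
    · simp only [dot_apply]
      exact ((continuous_re.aestronglyMeasurable.mul hre).add
        (continuous_im.aestronglyMeasurable.mul him)).const_mul 2
    · rw [abs_mul, abs_two]
      have := (dot_le x (u x)).trans (mul_le_mul hx (hK x) (norm_nonneg _) zero_le_one)
      linarith
  have i2 := (re_int h).const_mul (2 * q.re)
  have i3 := (im_int h).const_mul (2 * q.im)
  have i4 := (h.bint hre (fun x _ => (abs_re_le_norm _).trans (hK x))).const_mul (2 * P.re)
  have i5 := (h.bint him (fun x _ => (abs_im_le_norm _).trans (hK x))).const_mul (2 * P.im)
  have i6 := h.bd.int.const_mul (2 * (P.re * q.re + P.im * q.im))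
  rw [integral_add (isub (isub (isub (isub i1 i2) i4) i3) i5) i6,
    integral_sub (isub (isub (isub i1 i2) i4) i3) i5,
    integral_sub (isub (isub i1 i2) i4) i3, integral_sub (isub i1 i2) i4, integral_sub i1 i2]
  simp only [integral_const_mul, h.one, mul_one]

noncomputable def Mo (w : ℝ → ℂ → ℝ) (ψ : ℂ → ℝ) (t : ℝ) : ℝ :=
  (∫ x, w 0 x * ψ x) + ∫ s in (0:ℝ)..t, FF (w s) ψ

lemma ac_congr {f g : ℝ → ℝ} {a b : ℝ} (h : AbsolutelyContinuousOnInterval f a b) (e : ∀ x, f x = g x) :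
    AbsolutelyContinuousOnInterval g a b := by
  have : f = g := funext e
  rwa [← this]

lemma ac_const (c a b : ℝ) : AbsolutelyContinuousOnInterval (fun _ => c : ℝ → ℝ) a b :=
  (LipschitzWith.const (α := ℝ) c).lipschitzOnWith.absolutelyContinuousOnInterval

lemma Mo_ac {w : ℝ → ℂ → ℝ} {t0 M : ℝ} {G : Set ℝ} (hF : Fam w t0 M G) {ψ : ℂ → ℝ}
    (hψ : ContDiff ℝ (⊤ : ℕ∞) ψ) {t : ℝ} (h0 : 0 ≤ t) (ht : t ≤ t0) :
    AbsolutelyContinuousOnInterval (Mo w ψ) 0 t := by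
  have := (hF.ii ψ hψ).absolutelyContinuousOnInterval_intervalIntegral (c := 0) (by simp)
  exact (ac_const (∫ x, w 0 x * ψ x) 0 t).add
    (this.mono (by rw [uIcc_of_le h0, uIcc_of_le hF.pos.le]; exact Icc_subset_Icc_right ht))

lemma Mo_deriv {w : ℝ → ℂ → ℝ} {t0 M : ℝ} {G : Set ℝ} (hF : Fam w t0 M G) {ψ : ℂ → ℝ}
    (hψ : ContDiff ℝ (⊤ : ℕ∞) ψ) :
    ∀ᵐ t, t ∈ Icc 0 t0 → HasDerivAt (Mo w ψ) (FF (w t) ψ) t := by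
  filter_upwards [(hF.ii ψ hψ).ae_hasDerivAt_integral] with t ht h
  rw [uIcc_of_le hF.pos.le] at ht
  exact (ht h 0 ⟨le_rfl, hF.pos.le⟩).const_add _

lemma mom {w : ℝ → ℂ → ℝ} {t0 M : ℝ} {G : Set ℝ} (hF : Fam w t0 M G) {z : Fin 3 → ℂ}
    {χ : Fin 3 → ℂ → ℝ} (hc : Cut z χ) {a : Fin 3 → ℝ} (ha : ∀ i, 1 ≤ |a i|)
    (hs : ∀ t ∈ Icc 0 t0, ∀ x, w t x ≠ 0 → ∃ j, ‖x - z j‖ ≤ 1 / 10)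
    (h0 : ∀ i, ∫ x, w 0 x * χ i x = a i) (h1 : ∫ x, |w 0 x| ≤ ∑ i, |a i|) {t : ℝ} (ht : t ∈ G)
    (i : Fin 3) {ψ : ℂ → ℝ} (hψ : ContDiff ℝ (⊤ : ℕ∞) ψ) :
    Mo w (fun x => χ i x * ψ x) t = a i * ∫ x, mm χ a (w t) i x * ψ x ∧
    FF (w t) (fun x => χ i x * ψ x) = a i * ∫ x, mm χ a (w t) i x * fderiv ℝ ψ x (vel (w t) x) := by
  obtain ⟨_, sg, _⟩ := pieces hF hc ha hs h0 h1 ht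
  have htI : t ∈ Icc 0 t0 := Ico_subset_Icc_self (hF.sub ht)
  constructor
  · unfold Mo
    rw [← hF.eq _ ((hc.smooth i).mul hψ) t ht, ← integral_const_mul]
    apply integral_congr_ae
    filter_upwards [sg i] with x hx
    linear_combination (ψ x) * hx
  · unfold FF
    rw [← integral_const_mul]
    apply integral_congr_ae
    filter_upwards [sg i] with x hx
    by_cases hw : w t x = 0
    · have : mm χ a (w t) i x = 0 := by simp [mm, hw]
      simp [hw, this]
    have hd := hc.der i (hs t htI x hw)
    have e : fderiv ℝ (fun x => χ i x * ψ x) x = χ i x • fderiv ℝ ψ x + ψ x • fderiv ℝ (χ i) x :=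
      fderiv_fun_mul ((hc.smooth i).differentiable (by simp) x) (hψ.differentiable (by simp) x)
    rw [e, hd]
    simp only [smul_zero, add_zero, ContinuousLinearMap.smul_apply, smul_eq_mul]
    linear_combination (fderiv ℝ ψ x (vel (w t) x)) * hx

lemma fd_n2 (x v : ℂ) : fderiv ℝ (fun x : ℂ => x.re ^ 2 + x.im ^ 2) x v = 2 * dot x v := by
  have h1 : HasFDerivAt (fun x : ℂ => x.re) reCLM x := reCLM.hasFDerivAt
  have h2 : HasFDerivAt (fun x : ℂ => x.im) imCLM x := imCLM.hasFDerivAt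
  have := ((h1.pow 2).add (h2.pow 2)).fderiv
  have e : (fun x : ℂ => x.re ^ 2 + x.im ^ 2) = ((fun x : ℂ => x.re ^ 2) + (fun x : ℂ => x.im ^ 2)) := rfl
  rw [e, this, dot_apply]
  simp; ring

lemma fd_re (x v : ℂ) : fderiv ℝ (fun x : ℂ => x.re) x v = v.re := by
  have h1 : HasFDerivAt (fun x : ℂ => x.re) reCLM x := reCLM.hasFDerivAt
  rw [h1.fderiv]; rfl

lemma fd_im (x v : ℂ) : fderiv ℝ (fun x : ℂ => x.im) x v = v.im := by
  have h1 : HasFDerivAt (fun x : ℂ => x.im) imCLM x := imCLM.hasFDerivAt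
  rw [h1.fderiv]; rfl

end EulerOpt

namespace EulerOpt
open Complex ComplexConjugate Set

lemma dyn {w : ℝ → ℂ → ℝ} {t0 M : ℝ} {G : Set ℝ} (hF : Fam w t0 M G) {z : Fin 3 → ℂ}
    {χ : Fin 3 → ℂ → ℝ} (hc : Cut z χ) {a : Fin 3 → ℝ} (ha : ∀ i, 1 ≤ |a i|)
    (ha2 : ∀ i, |a i| ≤ 2 * Real.pi)
    (hs : ∀ t ∈ Icc 0 t0, ∀ x, w t x ≠ 0 → ∃ j, ‖x - z j‖ ≤ 1 / 10)
    (h0 : ∀ i, ∫ x, w 0 x * χ i x = a i) (h1 : ∫ x, |w 0 x| ≤ ∑ i, |a i|)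
    {p : Fin 3 → ℝ → ℂ} {t1 : ℝ} (ht1 : t1 ≤ t0)
    (hp : ∀ i, ∀ t ∈ Icc 0 t1, ‖p i t - z i‖ ≤ 1 / 10)
    (hd : ∀ i, ∀ t ∈ Icc 0 t1, HasDerivWithinAt (p i)
      (∑ j ∈ Finset.univ.erase i, a j • ker (p i t) (p j t)) (Icc 0 t1) t)
    {t : ℝ} (ht : t ∈ G) (htt : t ≤ t1) :
    ∑ i, (∫ x, mm χ a (w t) i x * ‖x - p i t‖ ^ 2) ≤
      Real.exp (32 * t) * ∑ i, ∫ x, mm χ a (w 0) i x * ‖x - p i 0‖ ^ 2 := by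
  have hpi := Real.pi_pos
  have t00 : 0 ≤ t := (hF.sub ht).1
  have ane : ∀ i, a i ≠ 0 := fun i => abs_pos.1 (lt_of_lt_of_le one_pos (ha i))
  set q : Fin 3 → ℝ → ℂ := fun i t => ∑ j ∈ Finset.univ.erase i, a j • ker (p i t) (p j t) with hq
  -- regularity of the point trajectories
  have kb : ∀ i j, i ≠ j → ∀ s ∈ Icc 0 t1, ‖a j • ker (p i s) (p j s)‖ ≤ 2 := by
    intro i j hij s hsI
    have h3 := hc.sep i j hij
    have e : z i - z j = -(p i s - z i) + (p i s - p j s) + (p j s - z j) := by ring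
    rw [e] at h3
    have t1 := norm_add_le (-(p i s - z i) + (p i s - p j s)) (p j s - z j)
    have t2 := norm_add_le (-(p i s - z i)) (p i s - p j s)
    rw [norm_neg] at t2
    have := hp i s hsI
    have := hp j s hsI
    have dd : 1 / 2 ≤ ‖p i s - p j s‖ := by linarith
    rw [norm_smul, ker_norm, Real.norm_eq_abs]
    calc |a j| * (1 / (2 * Real.pi) / ‖p i s - p j s‖)
        ≤ (2 * Real.pi) * (1 / (2 * Real.pi) / (1 / 2)) := by
          refine mul_le_mul (ha2 j) ?_ (by positivity) (by positivity)
          exact div_le_div_of_nonneg_left (by positivity) (by norm_num) dd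
      _ = 2 := by field_simp
  have qb : ∀ i, ∀ s ∈ Icc 0 t1, ‖q i s‖ ≤ 6 := by
    intro i s hsI
    refine (norm_sum_le_of_le _ (f := fun j => a j • ker (p i s) (p j s)) (n := fun _ => 2)
      (fun j hj => kb i j (Finset.ne_of_mem_erase hj).symm s hsI)).trans ?_
    simp; norm_num
  have plip : ∀ i, LipschitzOnWith 6 (p i) (uIcc 0 t) := by
    intro i
    rw [uIcc_of_le t00]
    refine LipschitzOnWith.of_dist_le_mul fun x hx y hy => ?_
    rw [dist_eq_norm, dist_eq_norm]
    have := (convex_Icc 0 t1).norm_image_sub_le_of_norm_hasDerivWithin_le (f := p i) (f' := q i) (C := 6)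
      (hd i) (qb i) (Icc_subset_Icc_right htt hy) (Icc_subset_Icc_right htt hx)
    simpa using this
  have acre : ∀ i, AbsolutelyContinuousOnInterval (fun s => (p i s).re) 0 t := by
    intro i
    have : LipschitzOnWith 6 (fun s => (p i s).re) (uIcc 0 t) := by
      refine LipschitzOnWith.of_dist_le_mul fun x hx y hy => ?_
      refine le_trans ?_ ((plip i).dist_le_mul x hx y hy)
      rw [dist_eq_norm, dist_eq_norm, ← sub_re]
      exact abs_re_le_norm _
    exact this.absolutelyContinuousOnInterval
  have acim : ∀ i, AbsolutelyContinuousOnInterval (fun s => (p i s).im) 0 t := by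
    intro i
    have : LipschitzOnWith 6 (fun s => (p i s).im) (uIcc 0 t) := by
      refine LipschitzOnWith.of_dist_le_mul fun x hx y hy => ?_
      refine le_trans ?_ ((plip i).dist_le_mul x hx y hy)
      rw [dist_eq_norm, dist_eq_norm, ← sub_im]
      exact abs_im_le_norm _
    exact this.absolutelyContinuousOnInterval
  have acexp : AbsolutelyContinuousOnInterval (fun s => Real.exp (-32 * s)) 0 t := by
    have : LipschitzOnWith 32 (fun s => Real.exp (-32 * s)) (uIcc 0 t) := by
      rw [uIcc_of_le t00]
      refine LipschitzOnWith.of_dist_le_mul fun x hx y hy => ?_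
      rw [dist_eq_norm, dist_eq_norm]
      have := (convex_Icc 0 t).norm_image_sub_le_of_norm_hasDerivWithin_le
        (f := fun s => Real.exp (-32 * s)) (f' := fun s => Real.exp (-32 * s) * (-32 * 1)) (C := 32)
        (fun s _ => (((hasDerivAt_id s).const_mul (-32)).exp).hasDerivWithinAt)
        (fun s hs => by
          rw [norm_mul, Real.norm_of_nonneg (Real.exp_pos _).le]
          have : Real.exp (-32 * s) ≤ 1 := Real.exp_le_one_iff.2 (by nlinarith [hs.1])
          rw [show ‖(-32 * 1 : ℝ)‖ = 32 by norm_num]; linarith) hy hx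
      simpa using this
    exact this.absolutelyContinuousOnInterval
  -- smooth test functions
  have s1 : ContDiff ℝ (⊤ : ℕ∞) (fun x : ℂ => x.re ^ 2 + x.im ^ 2) :=
    (reCLM.contDiff.pow 2).add (imCLM.contDiff.pow 2)
  have s2 : ContDiff ℝ (⊤ : ℕ∞) (fun x : ℂ => x.re) := reCLM.contDiff
  have s3 : ContDiff ℝ (⊤ : ℕ∞) (fun x : ℂ => x.im) := imCLM.contDiff
  set A : Fin 3 → ℝ → ℝ := fun i => Mo w (fun x => χ i x * (x.re ^ 2 + x.im ^ 2)) with hA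
  set B : Fin 3 → ℝ → ℝ := fun i => Mo w (fun x => χ i x * x.re) with hB
  set C : Fin 3 → ℝ → ℝ := fun i => Mo w (fun x => χ i x * x.im) with hC
  have sA : ∀ i, ContDiff ℝ (⊤ : ℕ∞) (fun x => χ i x * (x.re ^ 2 + x.im ^ 2)) :=
    fun i => (hc.smooth i).mul s1
  have sB : ∀ i, ContDiff ℝ (⊤ : ℕ∞) (fun x => χ i x * x.re) := fun i => (hc.smooth i).mul s2
  have sC : ∀ i, ContDiff ℝ (⊤ : ℕ∞) (fun x => χ i x * x.im) := fun i => (hc.smooth i).mul s3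
  have acA : ∀ i, AbsolutelyContinuousOnInterval (A i) 0 t := fun i => Mo_ac hF (sA i) t00 (htt.trans ht1)
  have acB : ∀ i, AbsolutelyContinuousOnInterval (B i) 0 t := fun i => Mo_ac hF (sB i) t00 (htt.trans ht1)
  have acC : ∀ i, AbsolutelyContinuousOnInterval (C i) 0 t := fun i => Mo_ac hF (sC i) t00 (htt.trans ht1)
  set J : Fin 3 → ℝ → ℝ := fun i s => (a i)⁻¹ * (A i s - 2 * ((p i s).re * B i s)
    - 2 * ((p i s).im * C i s)) + ((p i s).re * (p i s).re + (p i s).im * (p i s).im) with hJ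
  have acJ : ∀ i, AbsolutelyContinuousOnInterval (J i) 0 t := by
    intro i
    refine ac_congr (((((acA i).sub (((acre i).mul (acB i)).const_mul 2)).sub
      (((acim i).mul (acC i)).const_mul 2)).const_mul (a i)⁻¹).add
      (((acre i).mul (acre i)).add ((acim i).mul (acim i)))) fun s => ?_
    simp only [hJ, Pi.add_apply, Pi.sub_apply, Pi.mul_apply]
  set g : ℝ → ℝ := fun s => Real.exp (-32 * s) * (J 0 s + J 1 s + J 2 s) with hg
  have acg : AbsolutelyContinuousOnInterval g 0 t :=
    acexp.mul (((acJ 0).add (acJ 1)).add (acJ 2))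
  have Jeq : ∀ s ∈ G, ∀ i, J i s = ∫ x, mm χ a (w s) i x * ‖x - p i s‖ ^ 2 := by
    intro s hsG i
    obtain ⟨pr, -, -⟩ := pieces hF hc ha hs h0 h1 hsG
    rw [J_expand (pr i)]
    simp only [hJ, hA, hB, hC]
    rw [(mom hF hc ha hs h0 h1 hsG i s1).1, (mom hF hc ha hs h0 h1 hsG i s2).1,
      (mom hF hc ha hs h0 h1 hsG i s3).1]
    field_simp [ane i]
  -- almost everywhere derivative
  have ader : ∀ᵐ s, s ∈ Ioo 0 t → deriv g s ≤ 0 := by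
    filter_upwards [hF.ae, ae_all_iff.2 fun i => Mo_deriv hF (sA i),
      ae_all_iff.2 fun i => Mo_deriv hF (sB i), ae_all_iff.2 fun i => Mo_deriv hF (sC i)] with
      s e1 e2 e3 e4 hsI
    have hs0 : s ∈ Ioo 0 t0 := ⟨hsI.1, by linarith [hsI.2]⟩
    have hsc : s ∈ Icc 0 t0 := Ioo_subset_Icc_self hs0
    have hs1 : s ∈ Icc 0 t1 := ⟨hsI.1.le, by linarith [hsI.2]⟩
    have hsG := e1 hs0
    obtain ⟨pr, -, vl⟩ := pieces hF hc ha hs h0 h1 hsG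
    have pd : ∀ i, HasDerivAt (p i) (q i s) s := fun i =>
      (hd i s hs1).hasDerivAt (Icc_mem_nhds hsI.1 (by linarith [hsI.2]))
    have pre : ∀ i, HasDerivAt (fun s => (p i s).re) (q i s).re s := fun i =>
      reCLM.hasFDerivAt.comp_hasDerivAt s (pd i)
    have pim : ∀ i, HasDerivAt (fun s => (p i s).im) (q i s).im s := fun i =>
      imCLM.hasFDerivAt.comp_hasDerivAt s (pd i)
    have Jd : ∀ i, HasDerivAt (J i) (2 * ∫ x, mm χ a (w s) i x * dot (x - p i s) (vel (w s) x - q i s)) s := by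
      intro i
      have D := ((((e2 i hsc).fun_sub (((pre i).fun_mul (e3 i hsc)).const_mul 2)).fun_sub
        (((pim i).fun_mul (e4 i hsc)).const_mul 2)).const_mul (a i)⁻¹).fun_add
        (((pre i).fun_mul (pre i)).fun_add ((pim i).fun_mul (pim i)))
      refine D.congr_deriv ?_
      rw [D_expand (pr i) _ _ (hF.bd s).vel_meas (hF.bd s).vel_bd]
      rw [(mom hF hc ha hs h0 h1 hsG i s1).2, (mom hF hc ha hs h0 h1 hsG i s2).2,
        (mom hF hc ha hs h0 h1 hsG i s3).2, (mom hF hc ha hs h0 h1 hsG i s2).1,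
        (mom hF hc ha hs h0 h1 hsG i s3).1]
      simp_rw [fd_n2, fd_re, fd_im]
      field_simp [ane i]
      ring
    have gd : HasDerivAt g _ s := ((((hasDerivAt_id s).const_mul (-32 : ℝ)).exp)).fun_mul
      (((Jd 0).fun_add (Jd 1)).fun_add (Jd 2))
    rw [gd.deriv]
    have st := J_static pr (P := fun i => p i s) (fun i => hp i s hs1) hc.sep ha2 vl
    simp only [Fin.sum_univ_three] at st
    rw [← Jeq s hsG 0, ← Jeq s hsG 1, ← Jeq s hsG 2] at st
    have ex := Real.exp_pos (-32 * s)
    simp only [id, mul_one]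
    have st' : 2 * (∫ x, mm χ a (w s) 0 x * dot (x - p 0 s) (vel (w s) x - q 0 s))
       + 2 * (∫ x, mm χ a (w s) 1 x * dot (x - p 1 s) (vel (w s) x - q 1 s))
       + 2 * (∫ x, mm χ a (w s) 2 x * dot (x - p 2 s) (vel (w s) x - q 2 s))
       ≤ 32 * (J 0 s + J 1 s + J 2 s) := by linarith
    have := mul_le_mul_of_nonneg_left st' ex.le
    linarith
  have fin : g t ≤ g 0 := by
    have := acg.integral_deriv_eq_sub
    have neg : ∫ s in (0:ℝ)..t, deriv g s ≤ 0 := by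
      rw [intervalIntegral.integral_of_le t00, integral_Ioc_eq_integral_Ioo]
      refine integral_nonpos_of_ae ?_
      rw [Filter.EventuallyLE, ae_restrict_iff' measurableSet_Ioo]
      exact ader
    linarith
  have JJt : ∑ i, (∫ x, mm χ a (w t) i x * ‖x - p i t‖ ^ 2) = J 0 t + J 1 t + J 2 t := by
    rw [Fin.sum_univ_three, Jeq t ht, Jeq t ht, Jeq t ht]
  have JJ0 : ∑ i, (∫ x, mm χ a (w 0) i x * ‖x - p i 0‖ ^ 2) = J 0 0 + J 1 0 + J 2 0 := by
    rw [Fin.sum_univ_three, Jeq 0 hF.zero_mem, Jeq 0 hF.zero_mem, Jeq 0 hF.zero_mem]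
  rw [JJt, JJ0]
  simp only [hg, mul_zero, Real.exp_zero, one_mul] at fin
  have := mul_le_mul_of_nonneg_left fin (Real.exp_pos (32 * t)).le
  rw [← mul_assoc, ← Real.exp_add] at this
  have e : 32 * t + -32 * t = 0 := by ring
  rw [e, Real.exp_zero, one_mul] at this
  exact this

end EulerOpt

namespace EulerOpt
open Complex ComplexConjugate Set

noncomputable def aa : Fin 3 → ℝ := ![2 * Real.pi, -Real.pi, 2 * Real.pi]

noncomputable def pp (S R : ℂ) : Fin 3 → ℂ := ![(-S / 3 - R) / 2, -2 * S / 3, (-S / 3 + R) / 2]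

noncomputable def zz : Fin 3 → ℂ := pp 0 (1 + I)

lemma aa_ge (i : Fin 3) : 1 ≤ |aa i| := by
  have := Real.pi_gt_three
  have h := abs_of_pos Real.pi_pos
  fin_cases i <;> simp [aa, abs_mul, h] <;> linarith

lemma aa_le (i : Fin 3) : |aa i| ≤ 2 * Real.pi := by
  have := Real.pi_gt_three
  have h := abs_of_pos Real.pi_pos
  fin_cases i <;> simp [aa, abs_mul, h] <;> linarith

lemma aa_ne (i : Fin 3) : aa i ≠ 0 := abs_pos.1 (lt_of_lt_of_le one_pos (aa_ge i))

lemma smul_ker (c : ℝ) (x y : ℂ) : c • ker x y = ((c / (2 * Real.pi) : ℝ) : ℂ) * (I / conj (x - y)) := by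
  rw [ker_conj, real_smul, ← mul_assoc, ← ofReal_mul]
  congr 3; ring

lemma pp_vel {S R : ℂ} (hR : R ≠ 0) (h1 : S - R ≠ 0) (h2 : S + R ≠ 0) (i : Fin 3) :
    ∑ j ∈ Finset.univ.erase i, aa j • ker (pp S R i) (pp S R j) = pp (fS S R) (fR S R) i := by
  have e0 : (Finset.univ.erase (0 : Fin 3)) = {1, 2} := by decide
  have e1 : (Finset.univ.erase (1 : Fin 3)) = {0, 2} := by decide
  have e2 : (Finset.univ.erase (2 : Fin 3)) = {0, 1} := by decide
  have pi0 := Real.pi_ne_zero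
  have c0 : aa 0 / (2 * Real.pi) = 1 := by simp [aa]
  have c1 : aa 1 / (2 * Real.pi) = -(1 / 2) := by simp [aa]; field_simp
  have c2 : aa 2 / (2 * Real.pi) = 1 := by simp [aa]
  have r0 : conj R ≠ 0 := (map_ne_zero _).2 hR
  have r1 : conj S - conj R ≠ 0 := by rw [← map_sub]; exact (map_ne_zero _).2 h1
  have r2 : conj S + conj R ≠ 0 := by rw [← map_add]; exact (map_ne_zero _).2 h2
  have d01 : pp S R 0 - pp S R 1 = (S - R) / 2 := by simp [pp]; ring
  have d10 : pp S R 1 - pp S R 0 = -(S - R) / 2 := by simp [pp]; ring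
  have d02 : pp S R 0 - pp S R 2 = -R := by simp [pp]; ring
  have d20 : pp S R 2 - pp S R 0 = R := by simp [pp]; ring
  have d12 : pp S R 1 - pp S R 2 = -(S + R) / 2 := by simp [pp]; ring
  have d21 : pp S R 2 - pp S R 1 = (S + R) / 2 := by simp [pp]; ring
  have f1 : fS S R = 6 * I * conj S / ((conj S - conj R) * (conj S + conj R)) := by
    unfold fS
    rw [show conj (S ^ 2 - R ^ 2) = (conj S - conj R) * (conj S + conj R) by
      simp only [map_sub, map_pow]; ring]
  have f2 : fR S R = 2 * I * conj S ^ 2 / (conj R * ((conj S - conj R) * (conj S + conj R))) := by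
    unfold fR
    rw [show conj (R * (S ^ 2 - R ^ 2)) = conj R * ((conj S - conj R) * (conj S + conj R)) by
      simp only [map_mul, map_sub, map_pow]; ring]
  have k : conj (2 : ℂ) = 2 := map_ofNat (starRingEnd ℂ) 2
  fin_cases i
  · show ∑ j ∈ Finset.univ.erase 0, aa j • ker (pp S R 0) (pp S R j) = (-(fS S R) / 3 - fR S R) / 2
    rw [e0, Finset.sum_pair (by decide), smul_ker, smul_ker, c1, c2, d01, d02, f1, f2]
    simp only [map_div₀, map_sub, map_neg, map_add, k]
    push_cast
    generalize conj S = s at *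
    generalize conj R = r at *
    field_simp
    ring
  · show ∑ j ∈ Finset.univ.erase 1, aa j • ker (pp S R 1) (pp S R j) = (-2 * (fS S R) / 3)
    rw [e1, Finset.sum_pair (by decide), smul_ker, smul_ker, c0, c2, d10, d12, f1]
    simp only [map_div₀, map_sub, map_neg, map_add, k]
    push_cast
    generalize conj S = s at *
    generalize conj R = r at *
    have r1' : -(s - r) ≠ 0 := neg_ne_zero.2 r1
    have r2' : -(s + r) ≠ 0 := neg_ne_zero.2 r2
    field_simp
    ring
  · show ∑ j ∈ Finset.univ.erase 2, aa j • ker (pp S R 2) (pp S R j) = (-(fS S R) / 3 + fR S R) / 2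
    rw [e2, Finset.sum_pair (by decide), smul_ker, smul_ker, c0, c1, d20, d21, f1, f2]
    simp only [map_div₀, map_sub, map_neg, map_add, k]
    push_cast
    generalize conj S = s at *
    generalize conj R = r at *
    field_simp
    ring

lemma nI : ‖(1 + I : ℂ)‖ ^ 2 = 2 := by
  rw [← normSq_eq_norm_sq, normSq_apply]; simp; norm_num

lemma nI_lo : 7 / 5 ≤ ‖(1 + I : ℂ)‖ := by
  have := nI
  nlinarith [norm_nonneg (1 + I : ℂ)]

lemma nI_hi : ‖(1 + I : ℂ)‖ ≤ 3 / 2 := by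
  have := nI
  nlinarith [norm_nonneg (1 + I : ℂ)]

lemma oneI_ne : (1 + I : ℂ) ≠ 0 := norm_pos_iff.1 (lt_of_lt_of_le (by norm_num) nI_lo)

lemma zz_sep (i j : Fin 3) (h : i ≠ j) : 7 / 10 ≤ ‖zz i - zz j‖ := by
  have h1 := nI_lo
  have n2 : ‖(1 + I : ℂ) / 2‖ = ‖(1 + I : ℂ)‖ / 2 := by rw [norm_div]; simp
  fin_cases i <;> fin_cases j <;> first | exact absurd rfl h | skip
  · have : zz 0 - zz 1 = -((1 + I) / 2) := by simp [zz, pp]; ring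
    show _ ≤ ‖zz 0 - zz 1‖
    rw [this, norm_neg, n2]; linarith
  · have : zz 0 - zz 2 = -(1 + I) := by simp [zz, pp]; ring
    show _ ≤ ‖zz 0 - zz 2‖
    rw [this, norm_neg]; linarith
  · have : zz 1 - zz 0 = ((1 + I) / 2) := by simp [zz, pp]; ring
    show _ ≤ ‖zz 1 - zz 0‖
    rw [this, n2]; linarith
  · have : zz 1 - zz 2 = -((1 + I) / 2) := by simp [zz, pp]
    show _ ≤ ‖zz 1 - zz 2‖
    rw [this, norm_neg, n2]; linarith
  · have : zz 2 - zz 0 = (1 + I) := by simp [zz, pp]; ring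
    show _ ≤ ‖zz 2 - zz 0‖
    rw [this]; linarith
  · have : zz 2 - zz 1 = ((1 + I) / 2) := by simp [zz, pp]
    show _ ≤ ‖zz 2 - zz 1‖
    rw [this, n2]; linarith

lemma pp_norm {S R : ℂ} {b : ℝ} (hS : ‖S‖ ≤ b) (hR : ‖R‖ ≤ b) (i : Fin 3) : ‖pp S R i‖ ≤ 2 / 3 * b := by
  have b0 := (norm_nonneg _).trans hS
  have n3 : ‖S / 3‖ = ‖S‖ / 3 := by rw [norm_div]; simp
  fin_cases i
  · show ‖(-S / 3 - R) / 2‖ ≤ _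
    have : (-S / 3 - R) / 2 = -((S / 3 + R) / 2) := by ring
    rw [this, norm_neg, norm_div]
    have := norm_add_le (S / 3) R
    rw [n3] at this
    simp only [Complex.norm_ofNat]; linarith
  · show ‖-2 * S / 3‖ ≤ _
    simp; linarith
  · show ‖(-S / 3 + R) / 2‖ ≤ _
    have : (-S / 3 + R) / 2 = (R - S / 3) / 2 := by ring
    rw [this, norm_div]
    have := norm_sub_le R (S / 3)
    rw [n3] at this
    simp only [Complex.norm_ofNat]; linarith

lemma pp_sub (S R S' R' : ℂ) (i : Fin 3) : pp S R i - pp S' R' i = pp (S - S') (R - R') i := by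
  fin_cases i <;> simp [pp] <;> ring

lemma zz_norm (i : Fin 3) : ‖zz i‖ ≤ 3 / 4 := by
  have h1 := nI_hi
  have n2 : ‖(1 + I : ℂ) / 2‖ = ‖(1 + I : ℂ)‖ / 2 := by rw [norm_div]; simp
  fin_cases i
  · have : zz 0 = -((1 + I) / 2) := by simp [zz, pp]; ring
    show ‖zz 0‖ ≤ _
    rw [this, norm_neg, n2]; linarith
  · have : zz 1 = 0 := by simp [zz, pp]
    show ‖zz 1‖ ≤ _
    rw [this]; norm_num
  · have : zz 2 = ((1 + I) / 2) := by simp [zz, pp]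
    show ‖zz 2‖ ≤ _
    rw [this, n2]; linarith

lemma zz_stat (i : Fin 3) : ∑ j ∈ Finset.univ.erase i, aa j • ker (zz i) (zz j) = 0 := by
  have h := oneI_ne
  unfold zz
  rw [pp_vel h (by rw [zero_sub]; exact neg_ne_zero.2 h) (by rwa [zero_add])]
  have : fS 0 (1 + I) = 0 := by simp [fS]
  have : fR 0 (1 + I) = 0 := by simp [fR]
  rw [‹fS 0 (1 + I) = 0›, this]
  fin_cases i <;> simp [pp]

lemma pp_deriv {S R : ℝ → ℂ} {s r : ℂ} {K : Set ℝ} {t : ℝ} (hS : HasDerivWithinAt S s K t)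
    (hR : HasDerivWithinAt R r K t) (i : Fin 3) :
    HasDerivWithinAt (fun t => pp (S t) (R t) i) (pp s r i) K t := by
  fin_cases i
  · exact (((hS.fun_neg.div_const 3).fun_sub hR).div_const 2)
  · exact ((hS.const_mul (-2)).div_const 3)
  · exact (((hS.fun_neg.div_const 3).fun_add hR).div_const 2)

lemma traj {e m : ℝ} (he : 0 < e) (hem : e < m) (hm : m ≤ 1/20) :
    ∃ (t₁ : ℝ) (p : Fin 3 → ℝ → ℂ), 0 < t₁ ∧ t₁ ≤ Real.log (m / e) / 2 ∧
      (∀ i, p i 0 = pp e (1 + I) i) ∧ ‖p 1 t₁‖ = 2 / 3 * m ∧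
      (∀ i, ∀ t ∈ Icc 0 t₁, ‖p i t - zz i‖ ≤ 1 / 10) ∧
      (∀ i, ∀ t ∈ Icc 0 t₁, HasDerivWithinAt (p i)
        (∑ j ∈ Finset.univ.erase i, aa j • ker (p i t) (p j t)) (Icc 0 t₁) t) := by
  obtain ⟨t₁, S, R, h0, h1, hS0, hR0, hSm, hS, hR, dS, dR⟩ := ode_part he hem hm
  refine ⟨t₁, fun i t => pp (S t) (R t) i, h0, h1, fun i => by simp only [hS0, hR0], ?_, ?_, ?_⟩
  · show ‖-2 * S t₁ / 3‖ = _
    simp [hSm]; ring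
  · intro i t ht
    unfold zz
    rw [pp_sub, sub_zero]
    exact (pp_norm (hS t ht) (hR t ht) i).trans (by norm_num)
  · intro i t ht
    have a1 := hS t ht
    have a2 := hR t ht
    have a3 := nI_lo
    have lR : 13 / 10 ≤ ‖R t‖ := by
      have := norm_sub_norm_le (1 + I) (R t)
      rw [norm_sub_rev] at this
      linarith
    have k1 : R t ≠ 0 := norm_pos_iff.1 (by linarith)
    have k2 : S t - R t ≠ 0 := by
      intro h
      rw [sub_eq_zero] at h
      rw [h] at a1; linarith
    have k3 : S t + R t ≠ 0 := by
      intro h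
      rw [add_eq_zero_iff_eq_neg] at h
      rw [h, norm_neg] at a1; linarith
    rw [pp_vel k1 k2 k3]
    exact pp_deriv (dS t ht) (dR t ht) i

end EulerOpt

namespace EulerOpt
open Complex ComplexConjugate Set

noncomputable def patch (c : ℂ) (r a : ℝ) : ℂ → ℝ :=
  (Metric.closedBall c r).indicator fun _ => a / (Real.pi * r ^ 2)

lemma patch_int (c : ℂ) (r a : ℝ) : Integrable (patch c r a) := by
  unfold patch
  rw [integrable_indicator_iff Metric.isClosed_closedBall.measurableSet]
  exact integrableOn_const (measure_closedBall_lt_top.ne) (by simp)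

lemma patch_mass (c : ℂ) {r : ℝ} (hr : 0 < r) (a : ℝ) : ∫ x, patch c r a x = a := by
  unfold patch
  rw [integral_indicator Metric.isClosed_closedBall.measurableSet, setIntegral_const, Measure.real,
    Complex.volume_closedBall]
  have := Real.pi_pos
  simp only [ENNReal.toReal_mul, ENNReal.toReal_pow, ENNReal.toReal_ofReal hr.le, ENNReal.coe_toReal,
    NNReal.coe_real_pi, smul_eq_mul]
  field_simp

lemma patch_supp {c : ℂ} {r a : ℝ} {x : ℂ} (h : patch c r a x ≠ 0) : ‖x - c‖ ≤ r := by
  have := Set.mem_of_indicator_ne_zero h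
  rwa [Metric.mem_closedBall, dist_eq_norm] at this

lemma patch_sign (c : ℂ) (r a : ℝ) (x : ℂ) : 0 ≤ a * patch c r a x := by
  have := Real.pi_pos
  unfold patch
  by_cases h : x ∈ Metric.closedBall c r
  · rw [Set.indicator_of_mem h, mul_div_assoc']
    exact div_nonneg (mul_self_nonneg a) (by positivity)
  · rw [Set.indicator_of_notMem h, mul_zero]

lemma patch_le (c : ℂ) (r a : ℝ) (x : ℂ) : |patch c r a x| ≤ |a| / (Real.pi * r ^ 2) := by
  have := Real.pi_pos
  unfold patch
  by_cases h : x ∈ Metric.closedBall c r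
  · rw [Set.indicator_of_mem h, abs_div, abs_of_nonneg (by positivity : 0 ≤ Real.pi * r ^ 2)]
  · rw [Set.indicator_of_notMem h, abs_zero]; positivity

/-- facts about initial data -/
lemma data_facts {g : Fin 3 → ℂ → ℝ} {z : Fin 3 → ℂ} {a : Fin 3 → ℝ} {χ : Fin 3 → ℂ → ℝ}
    (hc : Cut z χ) (ha : ∀ i, 1 ≤ |a i|) (gi : ∀ i, Integrable (g i)) (gm : ∀ i, ∫ x, g i x = a i)
    (gs : ∀ i x, 0 ≤ a i * g i x) (gz : ∀ i x, g i x ≠ 0 → ‖x - z i‖ ≤ 1 / 10) :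
    (∀ i, ∫ x, (∑ j, g j x) * χ i x = a i) ∧ ∫ x, |∑ j, g j x| ≤ ∑ i, |a i| := by
  have ap : ∀ i, 0 < |a i| := fun i => lt_of_lt_of_le one_pos (ha i)
  constructor
  · intro i
    rw [← gm i]
    congr 1; ext x
    rw [Finset.sum_mul, Finset.sum_eq_single i]
    · by_cases h : g i x = 0
      · simp [h]
      · rw [(hc.near i x (gz i x h)).1, mul_one]
    · intro j _ hj
      by_cases h : g j x = 0
      · simp [h]
      · rw [(hc.off (Ne.symm hj) (gz j x h)).1, mul_zero]
    · simp
  · have e : ∀ i, ∫ x, |g i x| = |a i| := by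
      intro i
      have : ∀ x, |g i x| = a i / |a i| * g i x := by
        intro x
        have h := abs_of_nonneg (gs i x)
        rw [abs_mul] at h
        have := (ap i).ne'
        field_simp
        linarith
      simp_rw [this]
      rw [integral_const_mul, gm, div_mul_eq_mul_div, ← abs_mul_abs_self (a i),
        mul_div_assoc, div_self (ap i).ne', mul_one]
    calc ∫ x, |∑ j, g j x| ≤ ∫ x, ∑ j, |g j x| :=
          integral_mono (integrable_finset_sum _ fun i _ => gi i).abs
            (integrable_finset_sum _ fun i _ => (gi i).abs) fun x => Finset.abs_sum_le_sum_abs _ _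
      _ = _ := by
          rw [integral_finset_sum _ fun i _ => (gi i).abs]
          exact Finset.sum_congr rfl fun i _ => e i

noncomputable def gg (ε : ℝ) (i : Fin 3) : ℂ → ℝ := patch (pp ε (1 + I) i) (ε ^ 18) (aa i)

lemma gg_center {ε : ℝ} (h : 0 < ε) (i : Fin 3) : ‖pp ε (1 + I) i - zz i‖ ≤ 2 / 3 * ε := by
  unfold zz
  rw [pp_sub, sub_zero, sub_self]
  refine pp_norm ?_ (by simpa using h.le) i
  rw [norm_real, Real.norm_of_nonneg h.le]

lemma gg_supp {ε : ℝ} (h : 0 < ε) (h1 : ε < 1 / 20) {i : Fin 3} {x : ℂ} (hx : gg ε i x ≠ 0) :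
    ‖x - zz i‖ ≤ ε := by
  have a1 := patch_supp hx
  have a2 := gg_center h i
  have a3 : ε ^ 18 ≤ ε / 3 := by
    have : ε ^ 17 ≤ ε ^ 1 := pow_le_pow_of_le_one h.le (by linarith) (by norm_num)
    have : ε ^ 18 = ε ^ 17 * ε := by ring
    nlinarith
  have e : x - zz i = (x - pp ε (1 + I) i) + (pp ε (1 + I) i - zz i) := by ring
  rw [e]
  exact (norm_add_le _ _).trans (by linarith)

lemma gg_data {ε : ℝ} (h : 0 < ε) (h1 : ε < 1 / 20) :
    ConcentratedData 3 zz aa 6 36 ε (fun x => ∑ i, gg ε i x) := by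
  refine ⟨gg ε, fun x => rfl, fun i x hx => ?_, fun i => patch_int _ _ _, fun i x => patch_sign _ _ _ _,
    fun i => patch_mass _ (by positivity) _, fun x => ?_⟩
  · rw [Metric.mem_closedBall, dist_eq_norm]; exact gg_supp h h1 hx
  · have hp := Real.pi_pos
    have b : ∀ i, |gg ε i x| ≤ 2 * ε ^ (-36 : ℝ) := by
      intro i
      refine (patch_le _ _ _ _).trans ?_
      rw [Real.rpow_neg h.le, show (36 : ℝ) = ((36 : ℕ) : ℝ) by norm_num, Real.rpow_natCast, ← pow_mul,
        div_le_iff₀ (by positivity)]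
      refine (aa_le i).trans (le_of_eq ?_)
      norm_num
      field_simp
    refine (Finset.abs_sum_le_sum_abs _ _).trans ((Finset.sum_le_sum fun i _ => b i).trans (le_of_eq ?_))
    simp; ring

end EulerOpt

namespace EulerOpt
open Complex ComplexConjugate Set

lemma small_eps {β ξ : ℝ} (hβ : 1 / 4 < β) (hβ1 : β < 1) (hξ : 4 * Real.pi / 3 * (1 - β) < ξ) :
    ∃ ε₀ > 0, ∀ ε : ℝ, 0 < ε → ε < ε₀ → ε < 1 / 20 ∧ ε ^ β ≤ 1 / 60 ∧ ε ≤ ε ^ β ∧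
      Real.log (3 * ε ^ β / ε) / 2 ≤ ξ * |Real.log ε| ∧
      Real.log (3 * ε ^ β / ε) / 2 ≤ -Real.log ε := by
  have b0 : 0 < 1 - β := by linarith
  have hpi := Real.pi_gt_three
  have l3 : 0 < Real.log 3 := Real.log_pos (by norm_num)
  have T1 : ∀ᶠ ε in nhdsWithin (0:ℝ) (Ioi 0), ε ^ β < 1 / 60 := by
    have : Filter.Tendsto (fun ε : ℝ => ε ^ β) (nhdsWithin 0 (Ioi 0)) (nhds (0 ^ β)) :=
      (Real.continuousAt_rpow_const 0 β (Or.inr (by linarith))).tendsto.mono_left nhdsWithin_le_nhds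
    rw [Real.zero_rpow (by linarith)] at this
    exact this.eventually_lt_const (by norm_num)
  have T2 : ∀ᶠ ε in nhdsWithin (0:ℝ) (Ioi 0), Real.log ε < -(Real.log 3 / (7 * (1 - β))) :=
    Real.tendsto_log_nhdsGT_zero.eventually_lt_atBot _
  have T3 : ∀ᶠ ε in nhdsWithin (0:ℝ) (Ioi 0), ε < 1 / 20 :=
    (Filter.tendsto_id.mono_left nhdsWithin_le_nhds : Filter.Tendsto (fun ε : ℝ => ε)
      (nhdsWithin 0 (Ioi 0)) (nhds 0)).eventually_lt_const (by norm_num)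
  obtain ⟨ε₀, h0, hε⟩ := mem_nhdsGT_iff_exists_Ioo_subset.1 ((T1.and T2).and T3)
  refine ⟨ε₀, h0, fun ε e1 e2 => ?_⟩
  obtain ⟨⟨k1, k2⟩, k3⟩ := hε ⟨e1, e2⟩
  have hl : Real.log ε < 0 := Real.log_neg e1 (by linarith)
  have lb : Real.log (3 * ε ^ β / ε) = Real.log 3 + (1 - β) * (-Real.log ε) := by
    have : 0 < ε ^ β := Real.rpow_pos_of_pos e1 β
    rw [Real.log_div (by positivity) e1.ne', Real.log_mul (by norm_num) this.ne', Real.log_rpow e1]; ring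
  have k4 : Real.log 3 < 7 * (1 - β) * (-Real.log ε) := by
    have : Real.log 3 / (7 * (1 - β)) < -Real.log ε := by linarith
    rw [div_lt_iff₀ (by positivity)] at this
    linarith
  refine ⟨k3, k1.le, ?_, ?_, ?_⟩
  · calc ε = ε ^ (1:ℝ) := (Real.rpow_one ε).symm
      _ ≤ ε ^ β := Real.rpow_le_rpow_of_exponent_ge e1 (by linarith) hβ1.le
  · rw [lb, abs_of_neg hl]
    have : 4 * (1 - β) ≤ ξ := by
      have : 3 * (1 - β) ≤ Real.pi * (1 - β) := mul_le_mul_of_nonneg_right hpi.le b0.le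
      linarith
    have := mul_le_mul_of_nonneg_right this (by linarith : 0 ≤ -Real.log ε)
    linarith
  · rw [lb]
    have : Real.log 3 ≤ - Real.log ε := by
      rw [← Real.log_inv]
      apply Real.log_le_log (by norm_num)
      rw [le_inv_comm₀ (by norm_num) e1]
      linarith
    have : (1 - β) * (-Real.log ε) ≤ 1 * (-Real.log ε) :=
      mul_le_mul_of_nonneg_right (by linarith) (by linarith)
    linarith

lemma main {β ξ ε : ℝ} (e1 : 0 < ε) (e2 : ε < 1 / 20) (e3 : ε ^ β ≤ 1 / 60) (e4 : ε ≤ ε ^ β)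
    (e5 : Real.log (3 * ε ^ β / ε) / 2 ≤ ξ * |Real.log ε|)
    (e6 : Real.log (3 * ε ^ β / ε) / 2 ≤ -Real.log ε) {ω : ℂ → ℝ → ℝ}
    (hw : IsWeakSolution 1 (1 / (2 * Real.pi)) (fun x => ∑ i, gg ε i x) ω) :
    ExitTimeLE 3 zz β ε ω (ξ * |Real.log ε|) := by
  intro t0 ht0 conf
  by_contra hlt
  push Not at hlt
  obtain ⟨t₁, p, t1pos, t1le, p0, pt1, pz, pd⟩ := traj e1 (m := 3 * ε ^ β) (by linarith) (by linarith)
  have t10 : t₁ < t0 := by linarith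
  have t00 : 0 < t0 := by linarith
  set ω₀ : ℂ → ℝ := fun x => ∑ i, gg ε i x with hω₀
  -- cutoffs
  choose χ c1 c2 c3 c4 using fun i => exists_cut (zz i)
  have hc : Cut zz χ := ⟨zz_sep, c1, c2, c3, c4⟩
  have gz : ∀ i x, gg ε i x ≠ 0 → ‖x - zz i‖ ≤ 1 / 10 := fun i x hx => (gg_supp e1 e2 hx).trans (by linarith)
  obtain ⟨hχ, hl1⟩ := data_facts hc aa_ge (fun i => patch_int (pp ε (1 + I) i) (ε ^ 18) (aa i))
    (fun i => patch_mass _ (by positivity) _) (fun i x => patch_sign _ _ _ x) gz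
  have ne0 : ∀ x, ω₀ x ≠ 0 → ∃ j, gg ε j x ≠ 0 := by
    intro x hx
    obtain ⟨j, _, hj⟩ := Finset.exists_ne_zero_of_sum_ne_zero hx
    exact ⟨j, hj⟩
  have nrm : ∀ x, (∃ j, ‖x - zz j‖ ≤ 1 / 10) → ‖x‖ ≤ 1 := by
    rintro x ⟨j, hj⟩
    have := norm_add_le (x - zz j) (zz j)
    rw [sub_add_cancel] at this
    linarith [zz_norm j]
  have sup0 : ∀ x, ω₀ x ≠ 0 → ∃ j, ‖x - zz j‖ ≤ 1 / 10 := fun x hx => by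
    obtain ⟨j, hj⟩ := ne0 x hx
    exact ⟨j, gz j x hj⟩
  have confb : ∀ t ∈ Icc 0 t0, ∀ x, ω x t ≠ 0 → ∃ j, ‖x - zz j‖ ≤ ε ^ β := by
    intro t ht x hx
    have := conf t ht.1 ht.2 hx
    simp only [mem_iUnion, Metric.mem_closedBall, dist_eq_norm] at this
    exact this
  have sup1 : ∀ t ∈ Icc 0 t0, ∀ x, ω x t ≠ 0 → ∃ j, ‖x - zz j‖ ≤ 1 / 10 := fun t ht x hx => by
    obtain ⟨j, hj⟩ := confb t ht x hx
    exact ⟨j, by linarith⟩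
  -- bounds
  obtain ⟨M₁, hM₁⟩ := hw.2.1
  obtain ⟨-, -, -, -, -, -, hsup⟩ := gg_data e1 e2
  have i0 : Integrable ω₀ := integrable_finset_sum _ fun i _ => patch_int _ _ _
  set M := max M₁ (max (∑ i, |aa i|) (6 * ε ^ (-36 : ℝ))) with hM
  have B1 : ∀ t, Bd (fun x => ω x t) M := fun t =>
    ⟨hw.1 t, (hM₁ t).1.trans (le_max_left _ _), by
      filter_upwards [(hM₁ t).2] with x hx
      exact hx.trans (le_max_left _ _)⟩
  have B0 : Bd ω₀ M := ⟨i0, hl1.trans ((le_max_left _ _).trans (le_max_right _ _)),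
    Filter.Eventually.of_forall fun x => (hsup x).trans ((le_max_right _ _).trans (le_max_right _ _))⟩
  have tot : ∫ x, ω₀ x ≠ 0 := by
    have gi : ∀ i ∈ Finset.univ, Integrable (gg ε i) := fun i _ => patch_int _ _ _
    simp only [hω₀]
    rw [integral_finset_sum _ gi]
    have : ∀ i, ∫ x, gg ε i x = aa i := fun i => patch_mass _ (by positivity) _
    simp_rw [this, Fin.sum_univ_three]
    simp only [aa, Matrix.cons_val]
    have := Real.pi_pos
    intro h; linarith
  obtain ⟨G, hF⟩ := fam_exists t00 B1 B0 (fun t ht x hx => nrm x (sup1 t ht x hx))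
    (fun x hx => nrm x (sup0 x hx)) tot hw
  set w : ℝ → ℂ → ℝ := fun t x => if t = 0 then ω₀ x else ω x t with hwd
  have w0 : w 0 = ω₀ := by ext x; simp [hwd]
  have wt : ∀ t, t ≠ 0 → w t = fun x => ω x t := by intro t ht; ext x; simp [hwd, ht]
  have hs : ∀ t ∈ Icc 0 t0, ∀ x, w t x ≠ 0 → ∃ j, ‖x - zz j‖ ≤ 1 / 10 := by
    intro t ht x hx
    by_cases h : t = 0
    · rw [h, w0] at hx; exact sup0 x hx
    · rw [wt t h] at hx; exact sup1 t ht x hx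
  have h0 : ∀ i, ∫ x, w 0 x * χ i x = aa i := by rw [w0]; exact hχ
  have h1 : ∫ x, |w 0 x| ≤ ∑ i, |aa i| := by rw [w0]; exact hl1
  -- initial dispersion
  have J0 : ∀ i, ∫ x, mm χ aa (w 0) i x * ‖x - p i 0‖ ^ 2 ≤ (ε ^ 18) ^ 2 := by
    intro i
    obtain ⟨pr, -, -⟩ := pieces hF hc aa_ge hs h0 h1 hF.zero_mem
    have k := (pr i).m1 (p i 0)
    calc _ ≤ ∫ x, mm χ aa (w 0) i x * (ε ^ 18) ^ 2 := by
          refine integral_mono k.2.1 ((pr i).bd.int.mul_const _) fun x => ?_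
          by_cases hx : mm χ aa (w 0) i x = 0
          · simp [hx]
          refine mul_le_mul_of_nonneg_left ?_ ((pr i).pos x)
          have hwx : w 0 x ≠ 0 := by intro h; apply hx; simp [mm, h]
          have hcx : χ i x ≠ 0 := by intro h; apply hx; simp [mm, h]
          rw [w0] at hwx
          obtain ⟨j, hj⟩ := ne0 x hwx
          have hij : i = j := by
            by_contra hne
            exact hcx (hc.off hne (gz j x hj)).1
          subst hij
          rw [p0]
          exact pow_le_pow_left₀ (norm_nonneg _) (patch_supp hj) 2
      _ = _ := by rw [integral_mul_const, (pr i).one, one_mul]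
  -- a good time close to t₁
  set b := ε ^ β with hb
  have bpos : 0 < b := by linarith
  have pt1' : ‖p 1 t₁‖ = 2 * b := by rw [pt1]; ring
  obtain ⟨δ, δ0, hδ⟩ := Metric.continuousWithinAt_iff.1
    (pd 1 t₁ (right_mem_Icc.2 t1pos.le)).continuousWithinAt (b / 2) (by linarith)
  obtain ⟨s, s1, s2, s3⟩ := exists_good hF.ae (max_lt (by linarith : t₁ - δ < t₁) t1pos)
  have s0 : 0 < s := (le_max_right _ _).trans_lt s1
  have sδ : t₁ - δ < s := (le_max_left _ _).trans_lt s1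
  have sG : s ∈ G := s3 ⟨s0, by linarith⟩
  have ps : 3 / 2 * b ≤ ‖p 1 s‖ := by
    have := hδ (x := s) ⟨s0.le, s2.le⟩ (by rw [Real.dist_eq, abs_lt]; constructor <;> linarith)
    rw [dist_eq_norm] at this
    have k := norm_sub_norm_le (p 1 t₁) (p 1 s)
    rw [norm_sub_rev] at k
    linarith
  obtain ⟨pr, -, -⟩ := pieces hF hc aa_ge hs h0 h1 sG
  have J1 : (b / 2) ^ 2 ≤ ∫ x, mm χ aa (w s) 1 x * ‖x - p 1 s‖ ^ 2 := by
    have k := (pr 1).m1 (p 1 s)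
    calc (b / 2) ^ 2 = ∫ x, mm χ aa (w s) 1 x * (b / 2) ^ 2 := by
          rw [integral_mul_const, (pr 1).one, one_mul]
      _ ≤ _ := by
          refine integral_mono ((pr 1).bd.int.mul_const _) k.2.1 fun x => ?_
          by_cases hx : mm χ aa (w s) 1 x = 0
          · simp [hx]
          refine mul_le_mul_of_nonneg_left ?_ ((pr 1).pos x)
          have hwx : w s x ≠ 0 := by intro h; apply hx; simp [mm, h]
          have hcx : χ 1 x ≠ 0 := by intro h; apply hx; simp [mm, h]
          rw [wt s s0.ne'] at hwx
          obtain ⟨j, hj⟩ := confb s ⟨s0.le, by linarith⟩ x hwx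
          have hij : 1 = j := by
            by_contra hne
            exact hcx (hc.off hne (hj.trans (by linarith))).1
          subst hij
          have z1 : zz 1 = 0 := by simp [zz, pp]
          rw [z1, sub_zero] at hj
          have k := norm_sub_norm_le (p 1 s) x
          rw [norm_sub_rev] at k
          exact pow_le_pow_left₀ (by linarith) (by linarith) 2
  have D := dyn hF hc aa_ge aa_le hs h0 h1 t10.le pz pd sG s2.le
  have Jn : ∀ i, 0 ≤ ∫ x, mm χ aa (w s) i x * ‖x - p i s‖ ^ 2 := fun i =>
    integral_nonneg fun x => mul_nonneg ((pr i).pos x) (by positivity)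
  rw [Fin.sum_univ_three, Fin.sum_univ_three] at D
  have ex : Real.exp (32 * s) ≤ (ε ^ 32)⁻¹ := by
    have : 32 * s ≤ 32 * (-Real.log ε) := by linarith
    refine (Real.exp_le_exp.2 this).trans (le_of_eq ?_)
    rw [show 32 * (-Real.log ε) = -(Real.log (ε ^ 32)) by rw [Real.log_pow]; push_cast; ring,
      Real.exp_neg, Real.exp_log (by positivity)]
  have S0 := add_le_add (add_le_add (J0 0) (J0 1)) (J0 2)
  have D2 := D.trans (mul_le_mul ex S0 (by
    obtain ⟨pr0, -, -⟩ := pieces hF hc aa_ge hs h0 h1 hF.zero_mem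
    have : ∀ i, 0 ≤ ∫ x, mm χ aa (w 0) i x * ‖x - p i 0‖ ^ 2 := fun i =>
      integral_nonneg fun x => mul_nonneg ((pr0 i).pos x) (by positivity)
    linarith [this 0, this 1, this 2]) (by positivity))
  have eq : (ε ^ 32)⁻¹ * ((ε ^ 18) ^ 2 + (ε ^ 18) ^ 2 + (ε ^ 18) ^ 2) = 3 * ε ^ 4 := by
    field_simp; ring
  rw [eq] at D2
  have b2 : ε ^ 2 ≤ b ^ 2 := pow_le_pow_left₀ e1.le e4 2
  have := Jn 0
  have := Jn 2
  have f1 : ε ^ 2 / 4 ≤ 3 * ε ^ 4 := by nlinarith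
  have f2 : ε ^ 2 < 1 / 20 ^ 2 := by nlinarith
  have f3 : 0 < ε ^ 2 := by positivity
  nlinarith

end EulerOpt

theorem euler_long_time_confinement_optimal :
    ∃ (β₀ ν : ℝ) (z : Fin 3 → ℂ) (a : Fin 3 → ℝ) (C : ℝ),
      β₀ < 1 / 2 ∧ 2 ≤ ν ∧ 0 < C ∧
      (∀ i j : Fin 3, i ≠ j → z i ≠ z j) ∧
      (∀ i, a i ≠ 0) ∧
      (∀ i, ∑ j ∈ Finset.univ.erase i,
          a j • biotSavartK 1 (1 / (2 * Real.pi)) (z i) (z j) = 0) ∧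
      ∀ β : ℝ, β₀ < β → β < 1 →
      ∀ ξ₁ : ℝ, 4 * Real.pi / 3 * (1 - β) < ξ₁ →
      ∃ ε₀ > 0, ∀ ε : ℝ, 0 < ε → ε < ε₀ →
      ∃ ω₀ : ℂ → ℝ, ConcentratedData 3 z a C ν ε ω₀ ∧
        ∀ ω : ℂ → ℝ → ℝ, IsWeakSolution 1 (1 / (2 * Real.pi)) ω₀ ω →
          ExitTimeLE 3 z β ε ω (ξ₁ * |Real.log ε|) := by
  refine ⟨1 / 4, 36, EulerOpt.zz, EulerOpt.aa, 6, by norm_num, by norm_num, by norm_num, ?_,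
    EulerOpt.aa_ne, EulerOpt.zz_stat, ?_⟩
  · intro i j hij h
    have := EulerOpt.zz_sep i j hij
    rw [h, sub_self, norm_zero] at this
    norm_num at this
  · intro β hβ hβ1 ξ hξ
    obtain ⟨ε₀, h0, hε⟩ := EulerOpt.small_eps hβ hβ1 hξ
    refine ⟨ε₀, h0, fun ε e1 e2 => ?_⟩
    obtain ⟨k1, k2, k3, k4, k5⟩ := hε ε e1 e2
    exact ⟨_, EulerOpt.gg_data e1 k1, fun ω hw => EulerOpt.main e1 k1 k2 k3 k4 k5 hw⟩
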